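/- arXiv:1705.01344 — 12 statements merged into one kernel-verified Lean document; each statement's English description precedes it below -/
import Mathlib

section
/- Let G be a group acting on a finite set Ω. If there exists a subset Λ ⊆ Ω such that the action induced on Λ by the setwise stabilizer G_Λ is strongly non-binary, then the action of G on Ω is not binary. -/
/-!
The tuples `I, J` witnessing strong non-binarity of the action of `G_Λ` on `Λ`, viewed as tuples
of `Ω`, contradict binarity of `G` on `Ω`. They remain 2-subtuple complete, since `G_Λ ≤ G`. Both
enumerate the finite set `Λ`, so any `g : G` taking `I` to `J` maps `Λ` onto `Λ`, i.e. lies in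
`G_Λ`, which is excluded. Binarity says nothing about tuples of length `< 2`, but for these 2-subtuple
completeness already yields a single group element.
-/

open MulAction Pointwise

/-- A pair of `n`-tuples `I, J` in `Ω` is 2-subtuple complete for the action of `G` if for all
indices `i, j` there is `g ∈ G` with `g • I i = J i` and `g • I j = J j`. -/
def SubtupleComplete2 (G : Type*) [Group G] {Ω : Type*} [MulAction G Ω]
    {n : ℕ} (I J : Fin n → Ω) : Prop :=
  ∀ i j : Fin n, ∃ g : G, g • I i = J i ∧ g • I j = J j

/-- The action of `G` on `Ω` is binary if for every `n ≥ 2`, every 2-subtuple complete pair of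
`n`-tuples is mapped one to the other by a single group element. -/
def IsBinaryAction (G : Type*) [Group G] (Ω : Type*) [MulAction G Ω] : Prop :=
  ∀ n : ℕ, 2 ≤ n → ∀ I J : Fin n → Ω,
    SubtupleComplete2 G I J → ∃ g : G, ∀ i, g • I i = J i

/-- The action of `G` on a finite set `Ω` of cardinality `t` is strongly non-binary if there is a
pair of `t`-tuples, each with pairwise distinct entries (hence each enumerating `Ω`), which is
2-subtuple complete but such that no single element of `G` maps the first to the second. -/
def StronglyNonBinary (G : Type*) [Group G] (Ω : Type*) [MulAction G Ω] : Prop :=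
  ∃ I J : Fin (Nat.card Ω) → Ω, Function.Injective I ∧ Function.Injective J ∧
    SubtupleComplete2 G I J ∧ ¬ ∃ g : G, ∀ i, g • I i = J i

/-- The setwise stabilizer `G_Λ = {g : G | g • Λ = Λ}` of a subset `Λ ⊆ Ω` acts on `Λ`
by restriction of the `G`-action. -/
instance setStabilizerAction {G Ω : Type*} [Group G] [MulAction G Ω] (Λ : Set Ω) :
    MulAction (MulAction.stabilizer G Λ) Λ where
  smul g x := ⟨(g : G) • (x : Ω), by
    have h : (g : G) • Λ = Λ := g.2
    have hx := Set.smul_mem_smul_set (a := (g : G)) x.2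
    rwa [h] at hx⟩
  one_smul x := Subtype.ext (one_smul G (x : Ω))
  mul_smul g h x := Subtype.ext (mul_smul (g : G) (h : G) (x : Ω))

/-- If some subset `Λ ⊆ Ω` is such that the action induced on `Λ` by its setwise stabilizer
`G_Λ` is strongly non-binary, then the action of `G` on `Ω` is not binary. -/
theorem not_binary_of_stronglyNonBinary_subset {G Ω : Type*} [Group G] [Finite Ω] [MulAction G Ω]
    (Λ : Set Ω) (h : StronglyNonBinary (MulAction.stabilizer G Λ) Λ) :
    ¬ IsBinaryAction G Ω := by
  obtain ⟨I, J, hI, hJ, hc, hn⟩ := h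
  intro hb
  have hsurj : ∀ K : Fin (Nat.card Λ) → Λ, Function.Injective K → Function.Surjective K :=
    fun K hK => (hK.bijective_of_nat_card_le (by simp)).surjective
  by_cases ht : 2 ≤ Nat.card Λ
  · obtain ⟨g, hg⟩ := hb (Nat.card Λ) ht (fun i => (I i : Ω)) (fun i => (J i : Ω)) (by
      intro i j
      obtain ⟨g, hi, hj⟩ := hc i j
      exact ⟨g, congrArg Subtype.val hi, congrArg Subtype.val hj⟩)
    have hstab : g • Λ = Λ := by
      ext x
      constructor
      · rintro ⟨y, hy, rfl⟩
        obtain ⟨i, hi⟩ := hsurj I hI ⟨y, hy⟩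
        have h1 : g • y = (J i : Ω) := by simpa [hi] using hg i
        change g • y ∈ Λ
        rw [h1]
        exact (J i).2
      · intro hx
        obtain ⟨i, hi⟩ := hsurj J hJ ⟨x, hx⟩
        exact ⟨I i, (I i).2, (hg i).trans (congrArg Subtype.val hi)⟩
    exact hn ⟨⟨g, hstab⟩, fun i => Subtype.ext (hg i)⟩
  · apply hn
    by_cases h0 : Nat.card Λ = 0
    · exact ⟨1, fun i => absurd i.2 (by omega)⟩
    · obtain ⟨g, hg, -⟩ := hc ⟨0, by omega⟩ ⟨0, by omega⟩
      refine ⟨g, fun i => ?_⟩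
      have hi : i = ⟨0, by omega⟩ := Fin.ext (by have := i.2; simp only; omega)
      rw [hi]
      exact hg
end

section
/- Let G be a group acting 2-transitively on a finite set Ω with |Ω| ≥ 2, and suppose that the image of G in Sym(Ω) (i.e., the permutation group G^Ω induced by G) is a proper subgroup of Sym(Ω). Then the action of G on Ω is strongly non-binary. -/
/-! Choose a permutation `σ` of `Ω` outside the image of `G`, let `I` enumerate `Ω` and let
`J = σ ∘ I`. Since `σ` is injective, 2-transitivity realises `σ` on any two points, so `(I, J)` is
2-subtuple complete; an element of `G` carrying `I` to `J` would induce `σ` on all of `Ω`. -/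

open MulAction Pointwise

/-- If `G` acts 2-transitively on a finite set `Ω` with `|Ω| ≥ 2` and the image of `G` in
`Sym(Ω)` is a proper subgroup of `Sym(Ω)`, then the action is strongly non-binary. -/
theorem stronglyNonBinary_of_two_trans_of_ne_top {G Ω : Type*} [Group G] [Finite Ω]
    [MulAction G Ω] (hcard : 2 ≤ Nat.card Ω)
    (h2trans : ∀ a b c d : Ω, a ≠ b → c ≠ d → ∃ g : G, g • a = c ∧ g • b = d)
    (hproper : (MulAction.toPermHom G Ω).range < ⊤) :
    StronglyNonBinary G Ω := by
  obtain ⟨σ, -, hσ⟩ := SetLike.exists_of_lt hproper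
  have hnt : Nontrivial Ω := Finite.one_lt_card_iff_nontrivial.mp hcard
  let e : Fin (Nat.card Ω) ≃ Ω := (Finite.equivFin Ω).symm
  refine ⟨e, fun i => σ (e i), e.injective, σ.injective.comp e.injective, fun i j => ?_, ?_⟩
  · by_cases hij : e i = e j
    · obtain rfl := e.injective hij
      -- A repeated index only asks for transitivity, so any second point serves as companion.
      obtain ⟨b, hb⟩ := exists_ne (e i)
      obtain ⟨g, hg, -⟩ := h2trans (e i) b (σ (e i)) (σ b) hb.symm (σ.injective.ne hb.symm)
      exact ⟨g, hg, hg⟩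
    · exact h2trans _ _ _ _ hij (σ.injective.ne hij)
  · rintro ⟨g, hg⟩
    refine hσ ⟨g, Equiv.ext fun x => ?_⟩
    simpa using hg (e.symm x)
end

section
/- Let Ω be a finite set, let G be a subgroup of Sym(Ω), and let τ, η₁, …, η_r ∈ Sym(Ω) be such that: (i) τ·η_i ∈ G for every i ∈ {1, …, r}; (ii) for every i, the support of τ is disjoint from the support of η_i; (iii) for each ω ∈ Ω there exists i ∈ {1, …, r} with ω^{η_i} = ω; and (iv) τ ∉ G. Then, writing Ω = {ω₁, …, ω_t}, the pair of tuples ((ω₁, …, ω_t), (ω₁^τ, …, ω_t^τ)) is 2-subtuple complete for G but no element of G maps the first tuple to the second entrywise; in particular, the action of G on Ω is strongly non-binary. -/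
/-!
On a given pair of points, `τ` agrees with an element of `G`. If `τ` fixes both points, this
element is the identity. If `τ` moves one of them, then that point is fixed by every `η k`
since the supports are disjoint; choosing `k` with `η k` fixing the other point, the element
`τ * η k` of `G` acts as `τ` on both. On the other hand, an element of `G` agreeing with `τ` on
an enumeration of `Ω` equals `τ`, which is not in `G`.
-/

open MulAction Pointwise

/-- Let `G ≤ Sym(Ω)` and let `τ, η₁, …, η_r` be permutations of `Ω` such that each `τ * η i`
lies in `G`, the support of `τ` is disjoint from the support of each `η i`, every point of `Ω`
is fixed by some `η i`, and `τ ∉ G`. Then for any enumeration `e` of `Ω`, the pair of tuples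
`(e, τ ∘ e)` is 2-subtuple complete for `G` but no element of `G` maps the first tuple to the
second; in particular the action of `G` on `Ω` is strongly non-binary. -/
theorem stronglyNonBinary_of_disjoint_supports {Ω : Type*} [Fintype Ω] [DecidableEq Ω]
    (G : Subgroup (Equiv.Perm Ω)) (r : ℕ) (τ : Equiv.Perm Ω) (η : Fin r → Equiv.Perm Ω)
    (hmem : ∀ i, τ * η i ∈ G)
    (hdisj : ∀ i, Disjoint τ.support (η i).support)
    (hfix : ∀ ω : Ω, ∃ i, η i ω = ω)
    (hτ : τ ∉ G)
    (e : Fin (Nat.card Ω) ≃ Ω) :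
    (SubtupleComplete2 G (fun i => e i) (fun i => τ (e i)) ∧
      ¬ ∃ g : G, ∀ i, g • e i = τ (e i)) ∧
    StronglyNonBinary G Ω := by
  have key : SubtupleComplete2 G (fun i => e i) (fun i => τ (e i)) := by
    -- a point moved by `τ` is fixed by every `η k`
    have hη : ∀ ω, τ ω ≠ ω → ∀ k, η k ω = ω := fun ω hω k => by
      by_contra h
      exact Finset.disjoint_left.mp (hdisj k) (Equiv.Perm.mem_support.mpr hω)
        (Equiv.Perm.mem_support.mpr h)
    have act : ∀ k ω, η k ω = ω → (⟨τ * η k, hmem k⟩ : G) • ω = τ ω := fun k ω h =>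
      congrArg τ h
    intro i j
    by_cases hi : τ (e i) = e i
    · by_cases hj : τ (e j) = e j
      · exact ⟨1, by simp [hi], by simp [hj]⟩
      · obtain ⟨k, hk⟩ := hfix (e i)
        exact ⟨⟨τ * η k, hmem k⟩, act k _ hk, act k _ (hη _ hj k)⟩
    · obtain ⟨k, hk⟩ := hfix (e j)
      exact ⟨⟨τ * η k, hmem k⟩, act k _ (hη _ hi k), act k _ hk⟩
  have no_g : ¬ ∃ g : G, ∀ i, g • e i = τ (e i) := by
    rintro ⟨g, hg⟩
    have hgτ : (g : Equiv.Perm Ω) = τ := Equiv.ext fun ω => by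
      have h := hg (e.symm ω)
      rw [e.apply_symm_apply] at h
      exact h
    exact hτ (hgτ ▸ g.2)
  exact ⟨⟨key, no_g⟩, _, _, e.injective, τ.injective.comp e.injective, key, no_g⟩
end

section
/- Let G be a finite group acting faithfully on a finite set Ω, and suppose G is almost simple with socle S. If there exists a subset Λ ⊆ Ω such that the permutation group induced on Λ by the setwise stabilizer S_Λ is 2-transitive and is isomorphic (as a permutation group on Λ) neither to Alt(Λ) nor to Sym(Λ), then the action of G on Ω is not binary. -/
/-!
Suppose the action is binary. Since the group `P` that `S_Λ` induces on `Λ` is 2-transitive, for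
every permutation `τ` of `Λ` an enumeration of `Λ` and its image under `τ` form a 2-subtuple
complete pair, so `τ` is induced by an element of `G` stabilizing `Λ`. As `S` is normal in `G`,
conjugation by such elements preserves `P`, so `P` is normal in `Sym(Λ)`. A 2-transitive normal
subgroup of `Sym(Λ)` is `Alt(Λ)` or `Sym(Λ)` (`eq_alternating_or_top_of_normal`): if `σ ∈ P` sends
`a, b` to `b, c`, then the commutator of `(a b)` and `σ` is the 3-cycle `(a b)(b c)`, which lies in
`P`, and the 3-cycles form one conjugacy class of `Sym(Λ)` and generate `Alt(Λ)`. This needs three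
points; on at most two points 2-transitivity alone gives `P = Sym(Λ)`.
-/

open MulAction Pointwise

theorem eq_alternating_or_top_of_normal {α : Type*} [Fintype α] [DecidableEq α]
    (P : Subgroup (Equiv.Perm α)) (hN : P.Normal)
    (h2 : ∀ a b c d : α, a ≠ b → c ≠ d → ∃ σ ∈ P, σ a = c ∧ σ b = d)
    {a b c : α} (hab : a ≠ b) (hbc : b ≠ c) (hac : a ≠ c) :
    P = alternatingGroup α ∨ P = ⊤ := by
  obtain ⟨σ, hσ, h1, h3⟩ := h2 a b b c hab hbc
  have hmem : Equiv.swap a b * Equiv.swap b c ∈ P := by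
    have h := P.mul_mem (hN.conj_mem σ hσ (Equiv.swap a b)) (P.inv_mem hσ)
    have e : Equiv.swap b c = σ * Equiv.swap a b * σ⁻¹ := by
      rw [← Equiv.swap_apply_apply, h1, h3]
    rw [e]
    simpa [mul_assoc] using h
  have h3c : (Equiv.swap a b * Equiv.swap b c).IsThreeCycle := by
    rw [Equiv.swap_comm a b]
    exact Equiv.Perm.isThreeCycle_swap_mul_swap_same hab.symm hbc hac
  have hle : alternatingGroup α ≤ P := by
    rw [← Equiv.Perm.closure_three_cycles_eq_alternating, Subgroup.closure_le]
    intro τ hτ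
    obtain ⟨k, hk⟩ := isConj_iff.1 (Equiv.Perm.isConj_iff_cycleType_eq.2
      (h3c.cycleType.trans (Equiv.Perm.IsThreeCycle.cycleType hτ).symm))
    rw [← hk]
    exact hN.conj_mem _ hmem k
  by_cases hodd : P ≤ alternatingGroup α
  · exact Or.inl (le_antisymm hodd hle)
  · right
    obtain ⟨π, hπ, hπ'⟩ := SetLike.not_le_iff_exists.1 hodd
    rw [eq_top_iff]
    intro τ _
    by_cases ht : τ ∈ alternatingGroup α
    · exact hle ht
    · have : τ * π⁻¹ ∈ P := by
        apply hle
        rw [Equiv.Perm.mem_alternatingGroup] at *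
        have e1 := (Int.units_eq_one_or (Equiv.Perm.sign τ)).resolve_left ht
        have e2 := (Int.units_eq_one_or (Equiv.Perm.sign π)).resolve_left hπ'
        simp [e1, e2]
      simpa using P.mul_mem this hπ

/-- If `G` is almost simple with socle `S` and acts faithfully on a finite set `Ω` containing an
`S`-beautiful subset `Λ` (i.e. the permutation group induced on `Λ` by the setwise stabilizer
`S_Λ` is 2-transitive and is neither `Alt(Λ)` nor `Sym(Λ)`), then `G` is not binary. -/
theorem not_binary_of_beautiful_subset {G Ω : Type*} [Group G] [Finite G]
    [Fintype Ω] [DecidableEq Ω] [MulAction G Ω] [FaithfulSMul G Ω]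
    (S : Subgroup G) (hSnormal : S.Normal) (hSsimple : IsSimpleGroup S)
    (hSnonab : ∃ a b : S, a * b ≠ b * a)
    (hScent : Subgroup.centralizer (S : Set G) = ⊥)
    (Λ : Set Ω) [Fintype Λ]
    (P : Subgroup (Equiv.Perm Λ))
    (hP : P = (MulAction.toPermHom (MulAction.stabilizer S Λ) Λ).range)
    (h2trans : ∀ a b c d : Λ, a ≠ b → c ≠ d → ∃ σ ∈ P, σ a = c ∧ σ b = d)
    (hAlt : P ≠ alternatingGroup Λ) (hSym : P ≠ ⊤) :
    ¬ IsBinaryAction G Ω := by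
  intro hbin
  by_cases h3 : ∃ a b c : Λ, a ≠ b ∧ b ≠ c ∧ a ≠ c
  · obtain ⟨a, b, c, hab, hbc, hac⟩ := h3
    have hlift : ∀ σ ∈ P, ∃ s : S, ∀ x : Λ, (s : G) • (x : Ω) = (σ x : Ω) := by
      intro σ hσ
      rw [hP] at hσ
      obtain ⟨s, rfl⟩ := hσ
      exact ⟨s.1, fun _ => rfl⟩
    have hmemP : ∀ (s : S) (σ : Equiv.Perm Λ),
        (∀ x : Λ, (s : G) • (x : Ω) = (σ x : Ω)) → σ ∈ P := by
      intro s σ h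
      have hst : s ∈ MulAction.stabilizer S Λ := by
        rw [MulAction.mem_stabilizer_iff]
        ext y
        constructor
        · rintro ⟨x, hx, rfl⟩
          have e := h ⟨x, hx⟩
          change (s : G) • x ∈ Λ
          rw [e]
          exact (σ ⟨x, hx⟩).2
        · intro hy
          refine ⟨σ.symm ⟨y, hy⟩, (σ.symm ⟨y, hy⟩).2, ?_⟩
          change (s : G) • _ = y
          rw [h]
          simp
      rw [hP]
      refine ⟨⟨s, hst⟩, ?_⟩
      ext x
      exact h x
    have hsym : ∀ τ : Equiv.Perm Λ, ∃ g : G, ∀ x : Λ, g • (x : Ω) = (τ x : Ω) := by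
      intro τ
      let e := Fintype.equivFin Λ
      have hcard : 2 ≤ Fintype.card Λ := Fintype.one_lt_card_iff.2 ⟨a, b, hab⟩
      obtain ⟨g, hg⟩ := hbin (Fintype.card Λ) hcard (fun i => (e.symm i : Ω))
        (fun i => (τ (e.symm i) : Ω)) (by
          -- a diagonal pair `i = j` is completed by an arbitrary second point `y`
          have key : ∀ x y : Λ, x ≠ y →
              ∃ g : G, g • (x : Ω) = (τ x : Ω) ∧ g • (y : Ω) = (τ y : Ω) := by
            intro x y hxy
            obtain ⟨σ, hσ, h1, h2⟩ := h2trans x y (τ x) (τ y) hxy (τ.injective.ne hxy)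
            obtain ⟨s, hs⟩ := hlift σ hσ
            exact ⟨s, by rw [hs, h1], by rw [hs, h2]⟩
          intro i j
          by_cases hij : e.symm i = e.symm j
          · have : Nontrivial Λ := ⟨a, b, hab⟩
            obtain ⟨y, hy⟩ := exists_ne (e.symm i)
            obtain ⟨g, hg, _⟩ := key _ y hy.symm
            exact ⟨g, hg, by simpa only [← hij] using hg⟩
          · exact key _ _ hij)
      exact ⟨g, fun x => by simpa using hg (e x)⟩
    have hN : P.Normal := by
      refine ⟨fun σ hσ τ => ?_⟩
      obtain ⟨s, hs⟩ := hlift σ hσ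
      obtain ⟨g, hg⟩ := hsym τ
      refine hmemP ⟨g * s * g⁻¹, hSnormal.conj_mem _ s.2 g⟩ _ fun x => ?_
      have hinv : g⁻¹ • (x : Ω) = (τ⁻¹ x : Λ) := by
        rw [inv_smul_eq_iff, hg]
        simp
      simp only [mul_smul, hinv, hs, hg, Equiv.Perm.mul_apply]
    exact (eq_alternating_or_top_of_normal P hN h2trans hab hbc hac).elim hAlt hSym
  · -- with at most two points, a permutation is determined by its values on two of them
    apply hSym
    rw [eq_top_iff]
    intro τ _
    by_cases h2 : ∃ a b : Λ, a ≠ b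
    · obtain ⟨a, b, hab⟩ := h2
      obtain ⟨σ, hσ, h1, h2⟩ := h2trans a b (τ a) (τ b) hab (τ.injective.ne hab)
      have : σ = τ := by
        refine Equiv.ext fun x => ?_
        by_cases hxa : x = a
        · rw [hxa, h1]
        by_cases hxb : x = b
        · rw [hxb, h2]
        exact (h3 ⟨a, b, x, hab, Ne.symm hxb, Ne.symm hxa⟩).elim
      rwa [← this]
    · have : τ = 1 := Equiv.ext fun x => by
        by_contra hx
        exact h2 ⟨_, _, hx⟩
      rw [this]
      exact P.one_mem
end

section
/- Let q = 2^a with a > 3, and let G be a finite group acting faithfully and primitively on a finite set Ω, almost simple with socle isomorphic to PSL₂(q) (= SL₂(q) since q is even). Then Ω contains a strongly non-binary subset, that is, a subset Λ ⊆ Ω such that the action induced on Λ by the setwise stabilizer G_Λ is strongly non-binary. -/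
/-! Let `U` be the group of upper unitriangular matrices in the socle `S = SL₂(F)`, a Sylow
2-subgroup of `S` isomorphic to `(F, +)`. The proof distinguishes how `U` meets the point
stabilizers.

If some stabilizer `G_ω` meets `U` in a subgroup `A` with `1 < A < U` (`exists_of_partial`), pick
`v ∈ U ∖ A`. Let `Λ` consist of the orbit `U ω` and the orbits `U t ω`, for those torus elements
`t` with `v ∈ A · t A t⁻¹`, and let `τ` act as `v` on `U ω` and trivially on the rest of `Λ`. On two
points, `τ` agrees with an element of `U`: with `v` or `1`, or, for one point in `U ω` and one in
`U t ω`, with the factor of `v` in `t A t⁻¹`. If `g` in `G_Λ` induced `τ`, then `g` could be replaced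
by a 2-element normalizing `U`, by Sylow's theorem in the preimage of the centralizer of `τ` and of
`U` in `Sym(Λ)`. As `U` is faithful on `Λ`, this 2-element centralizes `U`, hence it lies in `U`
(`exists_uu_of_comm`, which uses that automorphisms of `S` trivial on `U` are conjugations by
elements of `U`). But only the identity of `U` lies in all the `t A t⁻¹` (`eq_zero_of_mem_scaled`),
so `τ = 1`, a contradiction.

If some `G_ω` contains `U` (`exists_of_full`), then by maximality `G_ω` is the normalizer of `U`, so
`Ω` is the projective line over `F`. There `S` is 2-transitive, while no element of `G` acts as a
transposition, and `Λ = Ω` is strongly non-binary.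

The remaining case, that `U` acts semiregularly on `Ω`, contradicts the maximality of the point
stabilizers (`not_semiregular`). Then `H = G_ω ∩ S` has odd order, so it is abelian (`comm_of_odd`)
and, if nontrivial, it is inverted by an involution of `S`, which normalizes `H` without lying in
`G_ω`. If `H = 1`, then `G_ω` embeds in the abelian group `Out(S)` (`out_comm`), and the centralizer
of an element of prime order of `G_ω` is larger than `G_ω`, since that element has a nontrivial fixed
point in `S` (`exists_fixed`). -/

open MulAction Pointwise

/-- A group action is primitive if it is transitive and every block is trivial
(a subsingleton or the whole set). -/
def IsPrimitiveAction (G Ω : Type*) [Group G] [MulAction G Ω] : Prop :=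
  MulAction.IsPretransitive G Ω ∧
    ∀ B : Set Ω, MulAction.IsBlock G B → B.Subsingleton ∨ B = Set.univ

open Matrix

namespace PSL2Even

/-! ### Matrices in `SL₂(F)` -/

section SL2

variable {F : Type*} [Field F]

local notation "𝕊" => Matrix.SpecialLinearGroup (Fin 2) F

theorem sl_ext {A B : 𝕊} (h00 : A 0 0 = B 0 0) (h01 : A 0 1 = B 0 1)
    (h10 : A 1 0 = B 1 0) (h11 : A 1 1 = B 1 1) : A = B := by
  ext i j
  fin_cases i <;> fin_cases j <;> assumption

theorem sl_det (A : 𝕊) : A 0 0 * A 1 1 - A 0 1 * A 1 0 = 1 := by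
  have := A.det_coe
  rwa [Matrix.det_fin_two] at this

theorem mul00 (A B : 𝕊) : (A * B) 0 0 = A 0 0 * B 0 0 + A 0 1 * B 1 0 := by
  simp [Matrix.mul_apply, Fin.sum_univ_two]
theorem mul01 (A B : 𝕊) : (A * B) 0 1 = A 0 0 * B 0 1 + A 0 1 * B 1 1 := by
  simp [Matrix.mul_apply, Fin.sum_univ_two]
theorem mul10 (A B : 𝕊) : (A * B) 1 0 = A 1 0 * B 0 0 + A 1 1 * B 1 0 := by
  simp [Matrix.mul_apply, Fin.sum_univ_two]
theorem mul11 (A B : 𝕊) : (A * B) 1 1 = A 1 0 * B 0 1 + A 1 1 * B 1 1 := by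
  simp [Matrix.mul_apply, Fin.sum_univ_two]
theorem inv00 (A : 𝕊) : A⁻¹ 0 0 = A 1 1 := by
  simp [Matrix.SpecialLinearGroup.coe_inv, Matrix.adjugate_fin_two]
theorem inv01 (A : 𝕊) : A⁻¹ 0 1 = - A 0 1 := by
  simp [Matrix.SpecialLinearGroup.coe_inv, Matrix.adjugate_fin_two]
theorem inv10 (A : 𝕊) : A⁻¹ 1 0 = - A 1 0 := by
  simp [Matrix.SpecialLinearGroup.coe_inv, Matrix.adjugate_fin_two]
theorem inv11 (A : 𝕊) : A⁻¹ 1 1 = A 0 0 := by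
  simp [Matrix.SpecialLinearGroup.coe_inv, Matrix.adjugate_fin_two]

/-- The upper unitriangular matrix with off-diagonal entry `x`. -/
def uu (x : F) : 𝕊 := ⟨!![1, x; 0, 1], by simp⟩
/-- The lower unitriangular matrix with off-diagonal entry `x`. -/
def ll (x : F) : 𝕊 := ⟨!![1, 0; x, 1], by simp⟩
/-- The diagonal matrix with entries `s` and `s⁻¹`. -/
def tt (s : Fˣ) : 𝕊 := ⟨!![(s : F), 0; 0, ((s⁻¹ : Fˣ) : F)], by simp⟩

@[simp] theorem uu00 (x : F) : uu x 0 0 = 1 := rfl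
@[simp] theorem uu01 (x : F) : uu x 0 1 = x := rfl
@[simp] theorem uu10 (x : F) : uu x 1 0 = 0 := rfl
@[simp] theorem uu11 (x : F) : uu x 1 1 = 1 := rfl
@[simp] theorem ll00 (x : F) : ll x 0 0 = 1 := rfl
@[simp] theorem ll01 (x : F) : ll x 0 1 = 0 := rfl
@[simp] theorem ll10 (x : F) : ll x 1 0 = x := rfl
@[simp] theorem ll11 (x : F) : ll x 1 1 = 1 := rfl
@[simp] theorem tt00 (s : Fˣ) : tt s 0 0 = (s : F) := rfl
@[simp] theorem tt01 (s : Fˣ) : tt s 0 1 = 0 := rfl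
@[simp] theorem tt10 (s : Fˣ) : tt s 1 0 = 0 := rfl
@[simp] theorem tt11 (s : Fˣ) : tt s 1 1 = ((s⁻¹ : Fˣ) : F) := rfl
@[simp] theorem one00 : (1 : 𝕊) 0 0 = 1 := rfl
@[simp] theorem one01 : (1 : 𝕊) 0 1 = 0 := rfl
@[simp] theorem one10 : (1 : 𝕊) 1 0 = 0 := rfl
@[simp] theorem one11 : (1 : 𝕊) 1 1 = 1 := rfl

theorem uu_add (x y : F) : uu (x + y) = uu x * uu y := by
  apply sl_ext <;> simp [mul00, mul01, mul10, mul11, add_comm]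

theorem uu_zero : uu (0 : F) = 1 := by
  apply sl_ext <;> simp

theorem uu_inj {x y : F} (h : uu x = uu y) : x = y := by
  have := congrArg (fun A : 𝕊 => A 0 1) h
  simpa using this

theorem uu_inv (x : F) : (uu x)⁻¹ = uu (-x) := by
  apply sl_ext <;> simp [inv00, inv01, inv10, inv11]

theorem uu_comm (x y : F) : uu x * uu y = uu y * uu x := by
  rw [← uu_add, ← uu_add, add_comm]

theorem tt_mul (s t : Fˣ) : tt (s * t) = tt s * tt t := by
  apply sl_ext <;> simp [mul00, mul01, mul10, mul11, mul_comm]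

theorem tt_one : tt (1 : Fˣ) = 1 := by
  apply sl_ext <;> simp

theorem tt_uu (s : Fˣ) (x : F) : tt s * uu x = uu ((s : F) ^ 2 * x) * tt s := by
  have hs := s.mul_inv
  apply sl_ext <;> simp [mul00, mul01, mul10, mul11]
  field_simp

/-- A matrix with nonzero lower left entry is a product of three unitriangular ones. -/
theorem eq_uu_ll_uu (A : 𝕊) (hc : A 1 0 ≠ 0) :
    A = uu ((A 0 0 - 1) / A 1 0) * ll (A 1 0) * uu ((A 1 1 - 1) / A 1 0) := by
  have hd := sl_det A
  apply sl_ext <;> simp [mul00, mul01, mul10, mul11] <;> field_simp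
  · ring
  · linear_combination -hd
  · ring

/-- The upper and lower unitriangular matrices generate `SL₂`. -/
theorem eq_top_of_uu_ll (H : Subgroup 𝕊) (hu : ∀ x, uu x ∈ H) (hl : ∀ x, ll x ∈ H) : H = ⊤ := by
  rw [eq_top_iff]
  have key : ∀ A : 𝕊, A 1 0 ≠ 0 → A ∈ H := fun A hA => by
    rw [eq_uu_ll_uu A hA]
    exact H.mul_mem (H.mul_mem (hu _) (hl _)) (hu _)
  intro A _
  by_cases hA : A 1 0 = 0
  · have hd := sl_det A
    have : ll 1 * A ∈ H := by
      apply key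
      simp only [mul10, ll10, ll11, hA]
      intro h
      simp_all
    simpa using H.mul_mem (H.inv_mem (hl 1)) this
  · exact key A hA

/-- If `A` has lower left entry `c ≠ 0` then `uu (-a / c) * A` has first column `(0, c)`, so it
conjugates upper unitriangular matrices to lower unitriangular ones. -/
theorem ll_mem_of_uu (H : Subgroup 𝕊) (hu : ∀ x, uu x ∈ H) {A : 𝕊} (hA : A ∈ H)
    (hc : A 1 0 ≠ 0) (x : F) : ll x ∈ H := by
  have hd := sl_det A
  have h : ll x = uu (-(A 0 0 / A 1 0)) * A * uu (-(x / (A 1 0) ^ 2)) *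
      (uu (-(A 0 0 / A 1 0)) * A)⁻¹ := by
    rw [eq_mul_inv_iff_mul_eq]
    apply sl_ext <;> simp only [mul00, mul01, mul10, mul11, uu00, uu01, uu10, uu11, ll00, ll01,
      ll10, ll11] <;> field_simp
    · ring
    · ring
    · ring
    · linear_combination (-(A 1 0) * x) * hd
  rw [h]
  have := H.mul_mem (hu (-(A 0 0 / A 1 0))) hA
  exact H.mul_mem (H.mul_mem this (hu _)) (H.inv_mem this)

/-- The centralizer of a noncentral element of `M₂(F)` consists of the linear combinations
of that element and the identity. -/
theorem comm_lin {A B : 𝕊} (h : A * B = B * A)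
    (hA : A 0 1 ≠ 0 ∨ A 1 0 ≠ 0 ∨ A 0 0 ≠ A 1 1) :
    ∃ r s : F, B 0 0 = r + s * A 0 0 ∧ B 0 1 = s * A 0 1 ∧ B 1 0 = s * A 1 0 ∧
      B 1 1 = r + s * A 1 1 := by
  have h00 := congrArg (fun A : 𝕊 => A 0 0) h
  have h01 := congrArg (fun A : 𝕊 => A 0 1) h
  have h10 := congrArg (fun A : 𝕊 => A 1 0) h
  simp only [mul00, mul01, mul10] at h00 h01 h10
  rcases hA with hA | hA | hA
  · refine ⟨B 0 0 - B 0 1 / A 0 1 * A 0 0, B 0 1 / A 0 1, ?_, ?_, ?_, ?_⟩ <;> field_simp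
    · ring
    · linear_combination h00
    · linear_combination h01
  · refine ⟨B 0 0 - B 1 0 / A 1 0 * A 0 0, B 1 0 / A 1 0, ?_, ?_, ?_, ?_⟩ <;> field_simp
    · ring
    · linear_combination -h00
    · linear_combination -h10
  · have hA' : A 0 0 - A 1 1 ≠ 0 := sub_ne_zero.mpr hA
    refine ⟨B 0 0 - (B 0 0 - B 1 1) / (A 0 0 - A 1 1) * A 0 0,
      (B 0 0 - B 1 1) / (A 0 0 - A 1 1), ?_, ?_, ?_, ?_⟩ <;> field_simp
    · ring
    · linear_combination h01
    · linear_combination -h10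
    · ring

section CharTwo

variable [CharP F 2]

theorem two0 : (2 : F) = 0 := CharTwo.two_eq_zero

theorem eq_of_sq {x y : F} (h : x ^ 2 = y ^ 2) : x = y := by
  have : (x - y) ^ 2 = 0 := by linear_combination h - (x * y - y ^ 2) * two0 (F := F)
  exact sub_eq_zero.mp (pow_eq_zero_iff two_ne_zero |>.mp this)

theorem noncentral {A : 𝕊} (h : A ≠ 1) : A 0 1 ≠ 0 ∨ A 1 0 ≠ 0 ∨ A 0 0 ≠ A 1 1 := by
  by_contra! hc
  obtain ⟨h1, h2, h3⟩ := hc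
  apply h
  have hd := sl_det A
  have : A 0 0 = 1 := eq_of_sq (by rw [h1, ← h3] at hd; linear_combination hd)
  apply sl_ext
  · exact this
  · exact h1
  · exact h2
  · rw [← h3, this]; rfl

/-- Commuting is transitive on the non-identity elements of `SL₂` in characteristic two. -/
theorem comm_trans {A B C : 𝕊} (h : A ≠ 1) (hB : A * B = B * A) (hC : A * C = C * A) :
    B * C = C * B := by
  obtain ⟨r, s, h1, h2, h3, h4⟩ := comm_lin hB (noncentral h)
  obtain ⟨r', s', h1', h2', h3', h4'⟩ := comm_lin hC (noncentral h)
  apply sl_ext <;> simp only [mul00, mul01, mul10, mul11, *] <;> ring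

theorem uu_sq (x : F) : uu x * uu x = 1 := by
  rw [← uu_add, CharTwo.add_self_eq_zero, uu_zero]

/-- An element commuting with a nontrivial upper unitriangular matrix is upper unitriangular. -/
theorem eq_uu_of_comm {y : F} (hy : y ≠ 0) {A : 𝕊} (h : uu y * A = A * uu y) :
    A = uu (A 0 1) := by
  obtain ⟨r, s, h1, h2, h3, h4⟩ := comm_lin h (Or.inl hy)
  have hd := sl_det A
  simp only [uu00, uu01, uu10, uu11] at *
  have : r + s = 1 := eq_of_sq (by rw [h1, h3, h4] at hd; linear_combination hd)
  apply sl_ext <;> simp [*]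

/-- An upper triangular matrix with square one is upper unitriangular. -/
theorem eq_uu_of_sq {A : 𝕊} (hc : A 1 0 = 0) (h : A * A = 1) : A = uu (A 0 1) := by
  have hd := sl_det A
  have h00 := congrArg (fun A : 𝕊 => A 0 0) h
  simp only [mul00, one00, hc] at h00
  have h0 : A 0 0 = 1 := eq_of_sq (by linear_combination h00)
  rw [h0, hc] at hd
  apply sl_ext <;> simp [*]
  linear_combination hd

/-- The group of upper unitriangular matrices. -/
def UU (F : Type*) [Field F] : Subgroup (Matrix.SpecialLinearGroup (Fin 2) F) where
  carrier := Set.range uu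
  one_mem' := ⟨0, uu_zero⟩
  mul_mem' := by
    rintro _ _ ⟨x, rfl⟩ ⟨y, rfl⟩
    exact ⟨x + y, uu_add x y⟩
  inv_mem' := by
    rintro _ ⟨x, rfl⟩
    exact ⟨-x, (uu_inv x).symm⟩

omit [CharP F 2] in
theorem mem_UU {A : 𝕊} : A ∈ UU F ↔ ∃ x, uu x = A := Iff.rfl

theorem isPGroup_UU : IsPGroup 2 (UU F) := by
  rintro ⟨_, x, rfl⟩
  exact ⟨1, Subtype.ext (by simpa [pow_two] using uu_sq x)⟩

/-- The centre of a 2-group containing `UU F` centralizes `uu 1`, hence is unitriangular, hence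
has centralizer `UU F`. -/
theorem le_UU_of_isPGroup [Finite F] {P : Subgroup 𝕊} (hP : IsPGroup 2 P) (hU : UU F ≤ P) :
    P ≤ UU F := by
  have hfin : Finite P := inferInstance
  have hu1 : uu (1 : F) ∈ P := hU ⟨1, rfl⟩
  have : Nontrivial P := ⟨⟨⟨uu 1, hu1⟩, 1, fun h => by
    have := congrArg Subtype.val h
    simp only [Subgroup.coe_one] at this
    rw [← uu_zero] at this
    exact one_ne_zero (uu_inj this)⟩⟩
  have : Fact (Nat.Prime 2) := ⟨Nat.prime_two⟩
  have hc := hP.center_nontrivial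
  obtain ⟨⟨⟨z, hzP⟩, hz⟩, hz1⟩ := exists_ne (1 : Subgroup.center P)
  rw [Subgroup.mem_center_iff] at hz
  have hz' : ∀ A ∈ P, A * z = z * A := fun A hA => congrArg Subtype.val (hz ⟨A, hA⟩)
  have e := eq_uu_of_comm one_ne_zero (hz' _ hu1)
  have hne : z 0 1 ≠ 0 := fun h => hz1 (by
    apply Subtype.ext
    apply Subtype.ext
    rw [h, uu_zero] at e
    exact e)
  intro A hA
  have := hz' A hA
  rw [e] at this
  exact ⟨_, (eq_uu_of_comm hne this.symm).symm⟩

/-- The upper unitriangular matrices as a Sylow 2-subgroup. -/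
def sylowUU [Finite F] : Sylow 2 𝕊 where
  toSubgroup := UU F
  isPGroup' := isPGroup_UU
  is_maximal' := fun hQ hle => le_antisymm (le_UU_of_isPGroup hQ hle) hle

/-! ### Automorphisms of `SL₂(F)` -/

omit [CharP F 2] in
theorem norm_uu {A : 𝕊} {x y : F} (h : A * uu x = uu y * A) (hy : y ≠ 0) :
    A 1 0 = 0 ∧ y = A 0 0 ^ 2 * x := by
  have h00 := congrArg (fun A : 𝕊 => A 0 0) h
  have h01 := congrArg (fun A : 𝕊 => A 0 1) h
  simp only [mul00, mul01, uu00, uu01, uu10, uu11] at h00 h01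
  have hc : A 1 0 = 0 := by
    have : y * A 1 0 = 0 := by linear_combination -h00
    exact (mul_eq_zero.mp this).resolve_left hy
  have hd := sl_det A
  rw [hc] at hd
  refine ⟨hc, ?_⟩
  linear_combination -(A 0 0) * h01 - y * hd

omit [CharP F 2] in
theorem eq_uu_tt {A : 𝕊} (hc : A 1 0 = 0) {s : Fˣ} (hs : A 0 0 = s) :
    A = uu (A 0 1 * s) * tt s := by
  have hd := sl_det A
  rw [hc, hs] at hd
  have hs' := s.mul_inv
  apply sl_ext <;> simp [mul00, mul01, mul10, mul11, *]
  field_simp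
  linear_combination hd

/-- An automorphism fixing all upper unitriangular matrices and one nontrivial diagonal matrix is
trivial. The relation `w u w = u w u`, where `w` is the Weyl element and `u = uu 1`, forces
the image of `w` to be `w`. -/
theorem aut_eq_one {α : MulAut 𝕊} (hα : ∀ x, α (uu x) = uu x) {s : Fˣ} (hs : s ≠ 1)
    (hαs : α (tt s) = tt s) : α = 1 := by
  let E : Subgroup 𝕊 := MonoidHom.eqLocus α.toMonoidHom (MonoidHom.id _)
  have hE : ∀ {A}, A ∈ E ↔ α A = A := Iff.rfl
  have h2 : (2 : F) = 0 := two0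
  set w : 𝕊 := uu 1 * ll 1 * uu 1 with hw
  have r1 : w * tt s = tt s⁻¹ * w := by
    apply sl_ext <;> simp [hw, mul00, mul01, mul10, mul11, CharTwo.add_self_eq_zero]
  have r2 : w * uu 1 * w = uu 1 * w * uu 1 := by
    apply sl_ext <;> simp [hw, mul00, mul01, mul10, mul11, CharTwo.add_self_eq_zero]
  have hαs' : α (tt s⁻¹) = tt s⁻¹ := by
    have h : tt s⁻¹ = (tt s)⁻¹ := by rw [eq_inv_iff_mul_eq_one, ← tt_mul]; simp [tt_one]
    rw [h, map_inv, hαs]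
  have e1 := congrArg α r1
  have e2 := congrArg α r2
  simp only [map_mul, hαs, hαs', hα] at e1 e2
  set W := α w
  have hs2 : (s : F) - (s : F)⁻¹ ≠ 0 := fun h => hs (by
    have h1 : (s : F) ^ 2 = 1 ^ 2 := by
      have := s.ne_zero
      field_simp at h
      linear_combination h
    exact Units.ext (eq_of_sq h1))
  have hd := sl_det W
  have a0 : W 0 0 = 0 := by
    have h := congrArg (fun A : 𝕊 => A 0 0) e1
    simp [mul00] at h
    have : (s - (s : F)⁻¹) * W 0 0 = 0 := by linear_combination h
    exact (mul_eq_zero.mp this).resolve_left hs2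
  have d0 : W 1 1 = 0 := by
    have h := congrArg (fun A : 𝕊 => A 1 1) e1
    simp [mul11] at h
    have : (s - (s : F)⁻¹) * W 1 1 = 0 := by linear_combination -h
    exact (mul_eq_zero.mp this).resolve_left hs2
  have c1 : W 1 0 = 1 := by
    have h := congrArg (fun A : 𝕊 => A 1 1) e2
    have h' := congrArg (fun A : 𝕊 => A 0 0) e2
    simp [mul11, mul00, mul10, mul01, a0, d0] at h h'
    rw [a0, d0] at hd
    linear_combination -h' - hd - h2
  have b1 : W 0 1 = 1 := by
    rw [a0, d0, c1] at hd
    linear_combination -hd - h2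
  have hW : W = w := by
    apply sl_ext <;> simp [mul00, mul01, mul10, mul11, CharTwo.add_self_eq_zero, *]
  have huE : ∀ x, uu x ∈ E := fun x => hα x
  have hwE : w ∈ E := hW
  have : E = ⊤ := eq_top_of_uu_ll E huE (ll_mem_of_uu E huE hwE (by
    simp [hw, mul10, mul11]))
  ext1 A
  have : A ∈ E := this ▸ Subgroup.mem_top A
  exact this

/-- The centralizer of `UU F` in the automorphism group consists of conjugations by elements of
`UU F`. -/
theorem aut_eq_conj_uu {α : MulAut 𝕊} (hα : ∀ x, α (uu x) = uu x) {s : Fˣ} (hs : s ≠ 1) :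
    ∃ y, α = MulAut.conj (uu y) := by
  have hs2 : 1 - (s : F) ^ 2 ≠ 0 := fun h => hs (by
    have h1 : (s : F) ^ 2 = 1 ^ 2 := by linear_combination -h
    exact Units.ext (eq_of_sq h1))
  have h := congrArg α (tt_uu s 1)
  simp only [map_mul, hα] at h
  obtain ⟨hc, ha⟩ := norm_uu h (by simp)
  have ha : α (tt s) 0 0 = s := (eq_of_sq (by linear_combination ha)).symm
  have e := eq_uu_tt hc ha
  set b := α (tt s) 0 1
  refine ⟨b * s / (1 - (s : F) ^ 2), ?_⟩
  set y := b * s / (1 - (s : F) ^ 2)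
  have : (MulAut.conj (uu y))⁻¹ * α = 1 := by
    apply aut_eq_one _ hs
    · rw [MulAut.mul_apply, e, ← map_inv, MulAut.conj_apply, inv_inv, uu_inv, mul_assoc, mul_assoc,
        tt_uu, ← mul_assoc, ← mul_assoc, ← uu_add, ← uu_add]
      have : -y + b * s + s ^ 2 * y = 0 := by
        simp only [y]; field_simp; ring
      rw [this, uu_zero, one_mul]
    · intro x
      rw [MulAut.mul_apply, hα, ← map_inv, MulAut.conj_apply, inv_inv, mul_assoc, uu_comm x,
        inv_mul_cancel_left]
  exact (inv_mul_eq_one.mp this).symm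

/-- The automorphism `α` normalizes `UU F` and acts on the torus, modulo `UU F`, by raising to
the power `n`. -/
def NormExp (α : MulAut 𝕊) (n : ℤ) : Prop :=
  (∀ x, α (uu x) ∈ UU F) ∧ ∀ s, ∃ b, α (tt s) = uu b * tt (s ^ n)

omit [CharP F 2] in
theorem exists_normExp [Finite F] {α : MulAut 𝕊} (hα : ∀ x, α (uu x) ∈ UU F) :
    ∃ n, NormExp α n := by
  obtain ⟨x, hx⟩ := hα 1
  have hc : ∀ s, α (tt s) 1 0 = 0 := fun s => by
    obtain ⟨y, hy⟩ := hα ((s : F) ^ 2 * 1)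
    have h := congrArg α (tt_uu s 1)
    simp only [map_mul, ← hx, ← hy] at h
    refine (norm_uu h ?_).1
    rintro rfl
    rw [uu_zero] at hy
    have := α.injective (hy.symm.trans (map_one α).symm)
    rw [← uu_zero] at this
    simpa using uu_inj this
  let θ : Fˣ →* Fˣ :=
    { toFun := fun s => ⟨α (tt s) 0 0, α (tt s) 1 1, by
          have := sl_det (α (tt s)); rw [hc] at this; linear_combination this, by
          have := sl_det (α (tt s)); rw [hc] at this; linear_combination this⟩
      map_one' := Units.ext (by simp [tt_one])
      map_mul' := fun s t => Units.ext (by simp [tt_mul, mul00, hc]) }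
  obtain ⟨n, hn⟩ := θ.map_cyclic
  exact ⟨n, hα, fun s => ⟨_, eq_uu_tt (hc s) (congrArg Units.val (hn s))⟩⟩

omit [CharP F 2] in
theorem NormExp.mul {α β : MulAut 𝕊} {n m : ℤ} (hα : NormExp α n) (hβ : NormExp β m) :
    NormExp (α * β) (m * n) := by
  refine ⟨fun x => ?_, fun s => ?_⟩
  · obtain ⟨y, hy⟩ := hβ.1 x
    rw [MulAut.mul_apply, ← hy]
    exact hα.1 y
  · obtain ⟨b, hb⟩ := hβ.2 s
    obtain ⟨c, hc⟩ := hα.2 (s ^ m)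
    obtain ⟨d, hd⟩ := hα.1 b
    refine ⟨d + c, ?_⟩
    rw [MulAut.mul_apply, hb, map_mul, hc, ← hd, uu_add, mul_assoc, _root_.zpow_mul]

omit [CharP F 2] in
theorem NormExp.inv_uu [Finite F] {α : MulAut 𝕊} {n : ℤ} (hα : NormExp α n) (x : F) :
    α⁻¹ (uu x) ∈ UU F := by
  choose f hf using fun x => mem_UU.mp (hα.1 x)
  have hinj : Function.Injective f := fun x y h =>
    uu_inj (α.injective (by rw [← hf, ← hf, h]))
  obtain ⟨y, rfl⟩ := Finite.surjective_of_injective hinj x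
  exact ⟨y, by rw [hf]; simp⟩

/-- An automorphism normalizing `UU F` and acting trivially on the torus modulo `UU F` is inner:
commuting with the scalars `s²`, it acts on `UU F ≅ F` by multiplication with a constant. -/
theorem NormExp.inner [Finite F] {α : MulAut 𝕊} {n : ℤ} (hα : NormExp α n)
    (hn : ∀ s : Fˣ, s ^ n = s) {s : Fˣ} (hs : s ≠ 1) : α ∈ (MulAut.conj (G := 𝕊)).range := by
  choose f hf using fun x => mem_UU.mp (hα.1 x)
  have hf1 : f 1 ≠ 0 := fun h => by
    have := hf 1
    rw [h, uu_zero] at this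
    have := α.injective (this.symm.trans (map_one α).symm)
    rw [← uu_zero] at this
    simpa using uu_inj this
  have hsq : ∀ x : F, ∃ y, x = y ^ 2 := fun x => by
    have hinj : Function.Injective (fun y : F => y ^ 2) := fun _ _ h => eq_of_sq h
    obtain ⟨y, hy⟩ := Finite.surjective_of_injective hinj x
    exact ⟨y, hy.symm⟩
  have hf' : ∀ x, f x = f 1 * x := by
    intro x
    obtain ⟨y, rfl⟩ := hsq x
    by_cases hy : y = 0
    · have := hf 0
      rw [uu_zero, map_one, ← uu_zero] at this
      simp [hy, uu_inj this]
    · obtain ⟨b, hb⟩ := hα.2 (Units.mk0 y hy)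
      have h := congrArg α (tt_uu (Units.mk0 y hy) 1)
      simp only [map_mul, ← hf, hb, hn] at h
      rw [mul_assoc, tt_uu, ← mul_assoc, ← mul_assoc, ← uu_add, ← uu_add] at h
      have := uu_inj (mul_right_cancel h)
      simp only [Units.val_mk0, mul_one] at this
      linear_combination -this
  obtain ⟨d, hd⟩ := hsq (f 1)
  have hd0 : d ≠ 0 := fun h => hf1 (by rw [hd, h]; simp)
  have : ∃ y, (MulAut.conj (tt (Units.mk0 d hd0)))⁻¹ * α = MulAut.conj (uu y) := by
    apply aut_eq_conj_uu _ hs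
    intro x
    rw [MulAut.mul_apply, ← hf, ← map_inv, MulAut.conj_apply, inv_inv, hf', hd]
    have := tt_uu (Units.mk0 d hd0) x
    rw [mul_assoc, inv_mul_eq_iff_eq_mul]
    exact this.symm
  obtain ⟨y, hy⟩ := this
  exact ⟨tt (Units.mk0 d hd0) * uu y, by rw [map_mul, ← hy, mul_inv_cancel_left]⟩

omit [CharP F 2] in
theorem conj_aut (α : MulAut 𝕊) (A : 𝕊) : α * MulAut.conj A * α⁻¹ = MulAut.conj (α A) := by
  ext1 B
  simp

/-- The outer automorphism group of `SL₂(F)` is commutative. By the Frattini argument each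
automorphism may be taken to normalize `UU F`; two such act on the cyclic torus by powers. -/
theorem out_comm [Finite F] {s : Fˣ} (hs : s ≠ 1) (α β : MulAut 𝕊) :
    α * β * (β * α)⁻¹ ∈ (MulAut.conj (G := 𝕊)).range := by
  have hnormal : (MulAut.conj (G := 𝕊)).range.Normal := ⟨by
    rintro _ ⟨A, rfl⟩ α
    exact ⟨_, (conj_aut α A).symm⟩⟩
  have hfr : ∀ α : MulAut 𝕊, ∃ A n, NormExp (MulAut.conj A * α) n := by
    intro α
    have : Fact (Nat.Prime 2) := ⟨Nat.prime_two⟩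
    obtain ⟨A, hA⟩ := MulAction.exists_smul_eq 𝕊 (α • (sylowUU (F := F))) sylowUU
    refine ⟨A, exists_normExp fun x => ?_⟩
    have hx : uu x ∈ (sylowUU (F := F)) := ⟨x, rfl⟩
    have : MulAut.conj A • α • uu x ∈ A • α • (sylowUU (F := F)) :=
      Subgroup.smul_mem_pointwise_smul _ _ _ (Subgroup.smul_mem_pointwise_smul _ _ _ hx)
    rw [hA] at this
    exact this
  obtain ⟨A, n, hA⟩ := hfr α
  obtain ⟨B, m, hB⟩ := hfr β
  set α' := MulAut.conj A * α
  set β' := MulAut.conj B * β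
  have key : α' * β' * (β' * α')⁻¹ ∈ (MulAut.conj (G := 𝕊)).range := by
    obtain ⟨k, hk⟩ := exists_normExp (hB.mul hA).inv_uu
    refine ((hA.mul hB).mul hk).inner (fun s => ?_) hs
    obtain ⟨b, hb⟩ := ((hB.mul hA).mul hk).2 s
    rw [mul_inv_cancel, MulAut.one_apply] at hb
    have := congrArg (fun A : 𝕊 => A 0 0) hb
    simp only [mul00, tt00, tt10, uu00, uu01] at this
    rw [mul_comm m n]
    exact Units.ext (by linear_combination -this)
  rw [← QuotientGroup.eq_one_iff] at key ⊢
  have h1 : ((MulAut.conj A : MulAut 𝕊) : MulAut 𝕊 ⧸ (MulAut.conj (G := 𝕊)).range) = 1 :=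
    (QuotientGroup.eq_one_iff _).mpr ⟨A, rfl⟩
  have h2 : ((MulAut.conj B : MulAut 𝕊) : MulAut 𝕊 ⧸ (MulAut.conj (G := 𝕊)).range) = 1 :=
    (QuotientGroup.eq_one_iff _).mpr ⟨B, rfl⟩
  simpa [α', β', h1, h2] using key

/-! ### Subgroups of odd order -/

theorem eq_one_of_sq_of_odd {G : Type*} [Group G] {H : Subgroup G} (hodd : ¬ 2 ∣ Nat.card H)
    {A : G} (hA : A ∈ H) (h : A * A = 1) : A = 1 := by
  by_contra hne
  apply hodd
  have : orderOf A = 2 := orderOf_eq_prime (by rw [pow_two, h]) hne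
  rw [← this]
  exact Subgroup.orderOf_dvd_natCard H hA

theorem trace_ne_zero {A : 𝕊} (h : A * A ≠ 1) : A 0 0 + A 1 1 ≠ 0 := by
  intro ht
  apply h
  have h2 : (2 : F) = 0 := two0
  have hd := sl_det A
  apply sl_ext <;> simp only [mul00, mul01, mul10, mul11, one00, one01, one10, one11]
  · linear_combination (A 0 0) * ht - hd - h2
  · linear_combination (A 0 1) * ht
  · linear_combination (A 1 0) * ht
  · linear_combination (A 1 1) * ht - hd - h2

/-- If an element `Z ≠ 1` of a subgroup of odd order commutes with a conjugate `X Z X⁻¹`, then that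
conjugate is `Z` or `Z⁻¹` (compare traces and determinants in the algebra `F[Z]`), and the second
case is impossible since `X` has odd order. -/
theorem comm_of_comm_conj [Finite F] {H : Subgroup 𝕊} (hodd : ¬ 2 ∣ Nat.card H) {X Z : 𝕊}
    (hX : X ∈ H) (hZ : Z ∈ H) (h : Z * (X * Z * X⁻¹) = X * Z * X⁻¹ * Z) : X * Z = Z * X := by
  by_cases hZ1 : Z = 1
  · simp [hZ1]
  have h2 : (2 : F) = 0 := two0
  have hZZ : Z * Z ≠ 1 := fun h => hZ1 (eq_one_of_sq_of_odd hodd hZ h)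
  have ht := trace_ne_zero hZZ
  have hdX := sl_det X
  have hdZ := sl_det Z
  have htr : (X * Z * X⁻¹) 0 0 + (X * Z * X⁻¹) 1 1 = Z 0 0 + Z 1 1 := by
    simp only [mul00, mul01, mul10, mul11, inv00, inv01, inv10, inv11]
    linear_combination (Z 0 0 + Z 1 1) * hdX
  obtain ⟨r, s, e1, e2, e3, e4⟩ := comm_lin h (noncentral hZ1)
  have hdW := sl_det (X * Z * X⁻¹)
  set W := X * Z * X⁻¹ with hW
  have hs : s = 1 := by
    have : (s - 1) * (Z 0 0 + Z 1 1) = 0 := by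
      rw [e1, e4] at htr
      linear_combination htr - r * h2
    exact sub_eq_zero.mp ((mul_eq_zero.mp this).resolve_right ht)
  subst hs
  have hr : r * (r + (Z 0 0 + Z 1 1)) = 0 := by
    rw [e1, e2, e3, e4] at hdW
    linear_combination hdW - hdZ
  have hXZ : X * Z = W * X := by rw [hW]; group
  rcases mul_eq_zero.mp hr with hr | hr
  · have : W = Z := by
      apply sl_ext <;> simp [e1, e2, e3, e4, hr]
    rw [hXZ, this]
  · exfalso
    have hWi : W = Z⁻¹ := by
      apply sl_ext <;> simp only [e1, e2, e3, e4, inv00, inv01, inv10, inv11]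
      · linear_combination hr - (Z 1 1) * h2
      · linear_combination (Z 0 1) * h2
      · linear_combination (Z 1 0) * h2
      · linear_combination hr - (Z 0 0) * h2
    rw [hWi] at hXZ
    have hcomm : Commute (X ^ 2) Z := by
      have h1 : SemiconjBy X Z Z⁻¹ := hXZ
      have h3 : SemiconjBy X Z⁻¹ Z := by simpa using h1.inv_right
      have := h3.mul_left h1
      rwa [← pow_two] at this
    have hXo : ¬ 2 ∣ orderOf X := fun hd => hodd (hd.trans (Subgroup.orderOf_dvd_natCard H hX))
    obtain ⟨k, hk⟩ : ∃ k, orderOf X = 2 * k + 1 := ⟨orderOf X / 2, by omega⟩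
    have hXk : (X ^ 2) ^ (k + 1) = X := by
      rw [← pow_mul, show 2 * (k + 1) = (2 * k + 1) + 1 by ring, pow_succ, ← hk, pow_orderOf_eq_one,
        one_mul]
    have hXZ' : X * Z = Z * X := by
      have := hcomm.pow_left (k + 1)
      rwa [hXk] at this
    have : Z = Z⁻¹ := mul_right_cancel (hXZ'.symm.trans hXZ)
    exact hZZ (by rw [mul_eq_one_iff_eq_inv, ← this])

open scoped commutatorElement in
/-- A subgroup of odd order of `SL₂(F)` is abelian: by Burnside's transfer theorem it has a normal
`p`-complement with abelian quotient for every prime `p`, so `p` does not divide the order of any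
commutator. -/
theorem comm_of_odd [Finite F] {H : Subgroup 𝕊} (hodd : ¬ 2 ∣ Nat.card H) (A B : H) :
    A * B = B * A := by
  rw [← commutatorElement_eq_one_iff_mul_comm]
  by_contra hg
  set g := ⁅A, B⁆ with hgdef
  have hfin : Finite H := inferInstance
  have ho : orderOf g ≠ 1 := fun h => hg (orderOf_eq_one_iff.mp h)
  set p := (orderOf g).minFac
  have hp : Fact p.Prime := ⟨Nat.minFac_prime ho⟩
  have hpg : p ∣ orderOf g := Nat.minFac_dvd _
  obtain ⟨P⟩ : Nonempty (Sylow p H) := inferInstance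
  have hnt : Nontrivial P := by
    rw [← Finite.one_lt_card_iff_nontrivial]
    have h1 := P.dvd_card_of_dvd_card (hpg.trans (orderOf_dvd_natCard g))
    have h3 := hp.out.two_le
    have := Nat.le_of_dvd Nat.card_pos h1
    exact lt_of_lt_of_le h3 this
  have := P.isPGroup'.center_nontrivial
  obtain ⟨⟨⟨z, hzP⟩, hz⟩, hz1⟩ := exists_ne (1 : Subgroup.center P)
  rw [Subgroup.mem_center_iff] at hz
  have hz' : ∀ y ∈ P, y * z = z * y := fun y hy => congrArg Subtype.val (hz ⟨y, hy⟩)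
  have hz1' : (z : 𝕊) ≠ 1 := fun h => hz1 (Subtype.ext (Subtype.ext (Subtype.ext h)))
  have hPab : ∀ x ∈ P, ∀ y ∈ P, (x : 𝕊) * y = y * x := fun x hx y hy =>
    comm_trans hz1' (congrArg Subtype.val (hz' x hx)).symm (congrArg Subtype.val (hz' y hy)).symm
  have hP : Subgroup.normalizer (P : Set H) ≤ Subgroup.centralizer (P : Set H) := by
    intro x hx y hy
    have hy' := (Subgroup.mem_normalizer_iff.mp hx y).mp hy
    exact (Subtype.ext (comm_of_comm_conj hodd x.2 y.2 (hPab y hy _ hy'))).symm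
  have hker : g ∈ (MonoidHom.transferSylow P hP).ker := by
    rw [MonoidHom.mem_ker, hgdef, map_commutatorElement, commutatorElement_eq_one_iff_mul_comm]
    exact Subtype.ext (Subtype.ext (hPab _ (Subtype.prop _) _ (Subtype.prop _)))
  exact MonoidHom.not_dvd_card_ker_transferSylow P hP
    (hpg.trans (Subgroup.orderOf_dvd_natCard _ hker))

/-- An element of nonzero trace is inverted by an involution, and then so is its centralizer. -/
theorem exists_involution {h : 𝕊} (ht : h 0 0 + h 1 1 ≠ 0) :
    ∃ s : 𝕊, s ≠ 1 ∧ s * s = 1 ∧ ∀ A, h * A = A * h → s * A * s⁻¹ = A⁻¹ := by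
  have h2 : (2 : F) = 0 := two0
  have hne : h ≠ 1 := by
    rintro rfl
    apply ht
    simp only [one00, one11]
    linear_combination h2
  have huu : ∀ x : F, x ≠ 0 → (uu x ≠ 1) := fun x hx h => hx (uu_inj (h.trans uu_zero.symm))
  by_cases hc : h 1 0 = 0
  · by_cases hb : h 0 1 = 0
    · refine ⟨uu 1 * ll 1 * uu 1, ?_, ?_, fun A hA => ?_⟩
      · intro h
        have := congrArg (fun A : 𝕊 => A 1 0) h
        simp [mul10, mul11] at this
      · apply sl_ext <;> simp [mul00, mul01, mul10, mul11, CharTwo.add_self_eq_zero]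
      · obtain ⟨r, t, e1, e2, e3, e4⟩ := comm_lin hA (noncentral hne)
        rw [mul_inv_eq_iff_eq_mul]
        rw [hb] at e2
        rw [hc] at e3
        apply sl_ext <;> simp [mul00, mul01, mul10, mul11, inv00, inv01, inv10, inv11,
          CharTwo.add_self_eq_zero, *]
    · refine ⟨ll ((h 0 0 + h 1 1) / h 0 1), ?_, ?_, fun A hA => ?_⟩
      · intro h'
        have := congrArg (fun A : 𝕊 => A 1 0) h'
        simp [ht, hb] at this
      · apply sl_ext <;> simp [mul00, mul01, mul10, mul11, CharTwo.add_self_eq_zero]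
      · obtain ⟨r, t, e1, e2, e3, e4⟩ := comm_lin hA (noncentral hne)
        rw [mul_inv_eq_iff_eq_mul]
        apply sl_ext <;> simp only [mul00, mul01, mul10, mul11, inv00, inv01, inv10, inv11,
          ll00, ll01, ll10, ll11, e1, e2, e3, e4] <;> field_simp
        · linear_combination (t * h 0 0) * h2
        · linear_combination (t * h 0 1) * h2
        · linear_combination (t * h 0 1 * h 1 0) * h2
        · linear_combination (t * h 1 1) * h2
  · refine ⟨uu ((h 0 0 + h 1 1) / h 1 0), huu _ (div_ne_zero ht hc), uu_sq _, fun A hA => ?_⟩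
    obtain ⟨r, t, e1, e2, e3, e4⟩ := comm_lin hA (noncentral hne)
    rw [mul_inv_eq_iff_eq_mul]
    apply sl_ext <;> simp only [mul00, mul01, mul10, mul11, inv00, inv01, inv10, inv11,
      uu00, uu01, uu10, uu11, e1, e2, e3, e4] <;> field_simp
    · linear_combination (t * h 0 0) * h2
    · linear_combination (t * h 0 1 * h 1 0) * h2
    · linear_combination (t * h 1 0) * h2
    · linear_combination (t * h 1 1) * h2

omit [CharP F 2] in
theorem card_UU : Nat.card (UU F) = Nat.card F :=
  (Nat.card_congr (Equiv.ofBijective (fun x : F => (⟨uu x, x, rfl⟩ : UU F))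
    ⟨fun _ _ h => uu_inj (congrArg Subtype.val h), fun ⟨_, x, hx⟩ => ⟨x, Subtype.ext hx⟩⟩)).symm

/-- An automorphism of prime order `p` has a nontrivial fixed point. If `p` divides the group
order, count fixed points modulo `p`. Otherwise a Sylow 2-subgroup is invariant, and it has
`q - 1` nontrivial elements, a number prime to `p`. -/
theorem exists_fixed [Finite F] {p : ℕ} [hp : Fact p.Prime] {α : MulAut 𝕊} (hα : α ^ p = 1) :
    ∃ A, A ≠ 1 ∧ α A = A := by
  have : Fact (Nat.Prime 2) := ⟨Nat.prime_two⟩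
  let Γ := Subgroup.zpowers α
  have hΓ : IsPGroup p Γ := by
    rintro ⟨_, n, rfl⟩
    refine ⟨1, Subtype.ext ?_⟩
    simp only [pow_one, Subgroup.coe_pow, Subgroup.coe_one]
    rw [← zpow_natCast, ← _root_.zpow_mul, mul_comm, _root_.zpow_mul, zpow_natCast, hα, _root_.one_zpow]
  let a : Γ := ⟨α, Subgroup.mem_zpowers α⟩
  by_cases hd : p ∣ Nat.card 𝕊
  · have h1 : (1 : 𝕊) ∈ MulAction.fixedPoints Γ 𝕊 := fun g => map_one (g : MulAut 𝕊)
    obtain ⟨A, hA, hA1⟩ := hΓ.exists_fixed_point_of_prime_dvd_card_of_fixed_point 𝕊 hd h1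
    exact ⟨A, hA1.symm, hA a⟩
  · have hS : ¬ p ∣ Nat.card (Sylow 2 𝕊) := fun h =>
      hd (h.trans (((default : Sylow 2 𝕊).card_dvd_index).trans (Subgroup.index_dvd_card _)))
    obtain ⟨P, hP⟩ := hΓ.nonempty_fixed_point_of_prime_not_dvd_card (Sylow 2 𝕊) hS
    let X : SubMulAction Γ 𝕊 :=
      { carrier := (P : Set 𝕊) \ {1}
        smul_mem' := by
          rintro g A ⟨hA, hA1⟩
          refine ⟨?_, fun h => hA1 ?_⟩
          · have : g • A ∈ g • P := Subgroup.smul_mem_pointwise_smul _ _ _ hA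
            rwa [hP g] at this
          · exact (g : MulAut 𝕊).injective (h.trans (map_one (g : MulAut 𝕊)).symm) }
    have hX : Nat.card X = Nat.card Fˣ := by
      have h1 : Nat.card X = ((P : Set 𝕊) \ {1}).ncard := rfl
      have h2 : (P : Set 𝕊).ncard = Nat.card P := rfl
      have h3 : Nat.card P = Nat.card (UU F) := Nat.card_congr (P.equiv sylowUU).toEquiv
      rw [h1, Set.ncard_sdiff_singleton_of_mem (show (1 : 𝕊) ∈ (P : Set 𝕊) from P.one_mem), h2, h3, card_UU, Nat.card_units]
    have hXp : ¬ p ∣ Nat.card X := fun h => hd (by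
      let τ : Fˣ →* 𝕊 := ⟨⟨tt, tt_one⟩, tt_mul⟩
      have hτ : Function.Injective τ := fun s t h =>
        Units.ext (congrArg (fun A : 𝕊 => A 0 0) h)
      rw [hX] at h
      exact h.trans (Subgroup.card_dvd_of_injective τ hτ))
    obtain ⟨⟨A, hA, hA1⟩, hfix⟩ := hΓ.nonempty_fixed_point_of_prime_not_dvd_card X hXp
    exact ⟨A, hA1, congrArg Subtype.val (hfix a)⟩

end CharTwo

end SL2

/-! ### Strongly non-binary subsets -/

/-- The group `SL₂(F)`. -/
abbrev SL₂ (F : Type*) [Field F] := Matrix.SpecialLinearGroup (Fin 2) F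

section Action

variable {F : Type*} [Field F] {G Ω : Type*} [Group G] [MulAction G Ω]

/-- A permutation `τ` of `Λ` that agrees on any two points with an element of the setwise
stabilizer, without being induced by an element of it, witnesses strong non-binarity. -/
theorem stronglyNonBinary_of_perm [Finite Ω] {Λ : Set Ω} (τ : Ω → Ω) (hm : ∀ x ∈ Λ, τ x ∈ Λ)
    (hinj : Set.InjOn τ Λ)
    (h2 : ∀ x ∈ Λ, ∀ y ∈ Λ, ∃ g ∈ MulAction.stabilizer G Λ, g • x = τ x ∧ g • y = τ y)
    (hn : ∀ g ∈ MulAction.stabilizer G Λ, ∃ x ∈ Λ, g • x ≠ τ x) :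
    StronglyNonBinary (MulAction.stabilizer G Λ) Λ := by
  let e := (Finite.equivFin Λ).symm
  refine ⟨e, fun i => ⟨τ (e i), hm _ (e i).2⟩, e.injective, fun i j h => ?_, fun i j => ?_, ?_⟩
  · exact e.injective (Subtype.ext (hinj (e i).2 (e j).2 (congrArg Subtype.val h)))
  · obtain ⟨g, hg, h⟩ := h2 _ (e i).2 _ (e j).2
    exact ⟨⟨g, hg⟩, Subtype.ext h.1, Subtype.ext h.2⟩
  · rintro ⟨g, hg⟩
    obtain ⟨x, hx, hne⟩ := hn g g.2
    apply hne
    have := congrArg Subtype.val (hg (e.symm ⟨x, hx⟩))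
    simp only [Equiv.apply_symm_apply] at this
    exact this

/-- `ι` embeds `SL₂(F)` as a normal subgroup with trivial centralizer in `G`, and `c` is the
resulting conjugation action of `G` on `SL₂(F)`. -/
structure IsSocleEmbedding (ι : SL₂ F →* G) (c : G →* MulAut (SL₂ F)) : Prop where
  inj : Function.Injective ι
  conj : ∀ g A, ι (c g A) = g * ι A * g⁻¹
  cent : ∀ g, (∀ A, g * ι A = ι A * g) → g = 1

namespace IsSocleEmbedding

variable {ι : SL₂ F →* G} {c : G →* MulAut (SL₂ F)} (hι : IsSocleEmbedding ι c)

include hι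

theorem mul_apply (g : G) (A : SL₂ F) : g * ι A = ι (c g A) * g := by
  rw [hι.conj]; group

theorem c_inj {g h : G} (e : c g = c h) : g = h := by
  rw [← mul_inv_eq_one]
  apply hι.cent
  intro A
  have : c (g * h⁻¹) = 1 := by rw [map_mul, map_inv, e, mul_inv_cancel]
  rw [hι.mul_apply, this, MulAut.one_apply]

theorem c_apply (A : SL₂ F) : c (ι A) = MulAut.conj A := by
  ext1 B
  apply hι.inj
  rw [hι.conj]
  simp

end IsSocleEmbedding

/-! ### Point stabilizers meeting the unitriangular group in a proper nontrivial subgroup -/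

/-- If `A` is a nontrivial proper additive subgroup of a finite field of characteristic two and
`v ∉ A`, then the subgroups `d² A` with `v ∈ A + d² A` intersect trivially. Indeed, if `w ≠ 0` lies
in all of them, then `w / (v + a)` lies in the multiplier ring `{k | k A ⊆ A}`, a subfield, for
all `a ∈ A`; two values of `a` give `w ∈ A`, and then `v ∈ A`. -/
theorem eq_zero_of_mem_scaled [Finite F] [CharP F 2] (A : AddSubgroup F) {v b₀ w : F}
    (hv : v ∉ A) (hb₀ : b₀ ∈ A) (hb₀' : b₀ ≠ 0)
    (hw : ∀ d : Fˣ, ∀ a ∈ A, ∀ b ∈ A, v = a + (d : F) ^ 2 * b → ∃ e ∈ A, w = (d : F) ^ 2 * e) :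
    w = 0 := by
  by_contra hw0
  have hva : ∀ a ∈ A, v + a ≠ 0 := fun a ha h => hv (by
    rw [eq_neg_of_add_eq_zero_left h]; exact A.neg_mem ha)
  have hK : ∀ a ∈ A, ∀ b ∈ A, w / (v + a) * b ∈ A := by
    intro a ha b hb
    by_cases hb0 : b = 0
    · rw [hb0, mul_zero]; exact A.zero_mem
    have hsq : Function.Surjective (fun x : F => x ^ 2) :=
      Finite.surjective_of_injective fun x y h => eq_of_sq h
    obtain ⟨d, hd⟩ := hsq ((v + a) / b)
    simp only at hd
    have hd0 : d ≠ 0 := by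
      rintro rfl
      rw [zero_pow two_ne_zero] at hd
      exact div_ne_zero (hva a ha) hb0 hd.symm
    obtain ⟨e, he, hwe⟩ := hw (Units.mk0 d hd0) (-a) (A.neg_mem ha) b hb (by
      rw [Units.val_mk0, hd]; field_simp; ring)
    rw [Units.val_mk0, hd] at hwe
    have := hva a ha
    have : w / (v + a) * b = e := by rw [hwe]; field_simp
    rwa [this]
  have hinv : ∀ k : F, k ≠ 0 → (∀ b ∈ A, k * b ∈ A) → ∀ b ∈ A, k⁻¹ * b ∈ A := by
    intro k hk h b hb
    have hs : Function.Surjective (fun b : A => (⟨k * b, h b b.2⟩ : A)) :=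
      Finite.surjective_of_injective fun x y e =>
        Subtype.ext (mul_left_cancel₀ hk (congrArg Subtype.val e))
    obtain ⟨⟨c, hc⟩, e⟩ := hs ⟨b, hb⟩
    have e' : k * c = b := congrArg Subtype.val e
    rwa [← e', inv_mul_cancel_left₀ hk]
  have h0 := hva 0 A.zero_mem
  have h1 := hva b₀ hb₀
  have hk0 := hinv _ (div_ne_zero hw0 h0) (hK 0 A.zero_mem)
  have hk1 := hinv _ (div_ne_zero hw0 h1) (hK b₀ hb₀)
  have hκ : (b₀ / w)⁻¹ * b₀ ∈ A := by
    apply hinv _ (div_ne_zero hb₀' hw0) _ _ hb₀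
    intro b hb
    have := A.sub_mem (hk1 b hb) (hk0 b hb)
    have e : (w / (v + b₀))⁻¹ * b - (w / (v + 0))⁻¹ * b = b₀ / w * b := by
      field_simp; ring
    rwa [e] at this
  have hwA : w ∈ A := by
    have e : (b₀ / w)⁻¹ * b₀ = w := by field_simp
    rwa [e] at hκ
  apply hv
  have := hk0 w hwA
  have e : (w / (v + 0))⁻¹ * w = v := by rw [add_zero] at *; field_simp
  rwa [e] at this

/-- Let `φ` be a homomorphism, injective on the unitriangular group, from a subgroup of `G`
containing it. If `φ x` is an involution centralizing the image of the unitriangular group, then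
it lies in that image. Up to conjugation in the preimage of the centralizer, an odd power of `x`
lies in a 2-group containing the unitriangular group `U`; it then normalizes, hence centralizes,
`U`, and an automorphism of `SL₂(F)` that is trivial on `U` is conjugation by an element of `U`. -/
theorem IsSocleEmbedding.exists_uu_of_comm [Finite F] [CharP F 2] [Finite G]
    {ι : SL₂ F →* G} {c : G →* MulAut (SL₂ F)} (hι : IsSocleEmbedding ι c) {s : Fˣ} (hs : s ≠ 1)
    {T : Subgroup G} {Q : Type*} [Group Q] (φ : T →* Q) (u : F → T)
    (hu : ∀ y, (u y : G) = ι (uu y)) (hinj : ∀ y, φ (u y) = 1 → y = 0) {x : T}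
    (hx2 : φ x * φ x = 1) (hxu : ∀ y, φ x * φ (u y) = φ (u y) * φ x) :
    ∃ y, φ (u y) = φ x := by
  have : Fact (Nat.Prime 2) := ⟨Nat.prime_two⟩
  let Y : Subgroup T := (Subgroup.centralizer ({φ x} ∪ Set.range fun y => φ (u y))).comap φ
  have hY : ∀ {g : T}, g ∈ Y ↔ φ x * φ g = φ g * φ x ∧ ∀ y, φ (u y) * φ g = φ g * φ (u y) := by
    intro g
    rw [Subgroup.mem_comap, Subgroup.mem_centralizer_iff]
    constructor
    · exact fun h => ⟨h _ (Or.inl rfl), fun y => h _ (Or.inr ⟨y, rfl⟩)⟩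
    · rintro ⟨h1, h2⟩ _ (rfl | ⟨y, rfl⟩)
      · exact h1
      · exact h2 y
  have hxY : x ∈ Y := hY.mpr ⟨rfl, fun y => (hxu y).symm⟩
  have huu : ∀ y z, u y * u z = u z * u y := fun y z => Subtype.ext (by
    simp only [Subgroup.coe_mul, hu, ← map_mul, uu_comm])
  have huY : ∀ y, u y ∈ Y := fun y => hY.mpr ⟨hxu y, fun z => by
    rw [← map_mul, ← map_mul, huu]⟩
  -- an odd power of `x` of 2-power order
  obtain ⟨x', hx'Y, hφx', k, hk⟩ : ∃ x' : T, x' ∈ Y ∧ φ x' = φ x ∧ ∃ k : ℕ, x' ^ 2 ^ k = 1 := by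
    obtain ⟨k, m, hm, hkm⟩ := Nat.exists_eq_two_pow_mul_odd (orderOf_pos x).ne'
    refine ⟨x ^ m, Y.pow_mem hxY m, ?_, k, ?_⟩
    · obtain ⟨j, rfl⟩ := hm
      rw [map_pow, pow_succ, pow_mul, pow_two, hx2, one_pow, one_mul]
    · rw [← pow_mul, mul_comm, ← hkm, pow_orderOf_eq_one]
  let U : Subgroup Y := ((UU F).map ι).comap (T.subtype.comp Y.subtype)
  have hUp : IsPGroup 2 U := (isPGroup_UU.map ι).comap_of_injective _
    (T.subtype_injective.comp Y.subtype_injective)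
  obtain ⟨P, hUP⟩ := hUp.exists_le_sylow
  have hZp : IsPGroup 2 (Subgroup.zpowers (⟨x', hx'Y⟩ : Y)) := by
    rintro ⟨_, n, rfl⟩
    refine ⟨k, Subtype.ext (Subtype.ext ?_)⟩
    simp only [Subgroup.coe_pow, Subgroup.coe_one, Subgroup.coe_zpow]
    rw [← zpow_natCast, ← _root_.zpow_mul, mul_comm, _root_.zpow_mul, zpow_natCast, hk,
      _root_.one_zpow]
  obtain ⟨R, hR⟩ := hZp.exists_le_sylow
  obtain ⟨y, hy⟩ := MulAction.exists_smul_eq Y R P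
  let p : Y := y * ⟨x', hx'Y⟩ * y⁻¹
  have hpP : p ∈ P := by
    rw [← hy]
    exact Subgroup.smul_mem_pointwise_smul _ (MulAut.conj y) _ (hR (Subgroup.mem_zpowers _))
  have hφp : φ (p : T) = φ x := by
    have := (hY.mp y.2).1
    simp only [p, Subgroup.coe_mul, map_mul, hφx', Subgroup.coe_inv, map_inv, ← this,
      mul_inv_cancel_right]
  -- the part of `P` inside `SL₂(F)` is the unitriangular group
  let P' : Subgroup (SL₂ F) := (P.toSubgroup.map (T.subtype.comp Y.subtype)).comap ι
  have hP' : IsPGroup 2 P' := (P.2.map _).comap_of_injective _ hι.inj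
  have huP : ∀ z, (⟨u z, huY z⟩ : Y) ∈ P := fun z => hUP ⟨uu z, ⟨z, rfl⟩, (hu z).symm⟩
  have hUP' : UU F ≤ P' := by
    rintro _ ⟨z, rfl⟩
    exact ⟨⟨u z, huY z⟩, huP z, hu z⟩
  have hcp : ∀ z, c ((p : T) : G) (uu z) = uu z := by
    intro z
    have hm : c ((p : T) : G) (uu z) ∈ P' := by
      refine ⟨p * ⟨u z, huY z⟩ * p⁻¹, P.mul_mem (P.mul_mem hpP (huP z)) (P.inv_mem hpP), ?_⟩
      rw [hι.conj, ← hu]; rfl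
    obtain ⟨z', hz'⟩ := le_UU_of_isPGroup hP' hUP' hm
    rw [← hz']
    have e1 : u z' = (p : T) * u z * (p : T)⁻¹ := Subtype.ext (by
      rw [hu, hz', hι.conj, ← hu]; rfl)
    have e2 : φ (u z') = φ (u z) := by
      have := (hY.mp p.2).2 z
      rw [e1, map_mul, map_mul, map_inv, ← this, mul_inv_cancel_right]
    have e3 : u (z' - z) = u z' * (u z)⁻¹ := Subtype.ext (by
      simp only [Subgroup.coe_mul, Subgroup.coe_inv, hu, ← map_inv, ← map_mul, uu_inv, ← uu_add,
        sub_eq_add_neg])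
    rw [sub_eq_zero.mp (hinj (z' - z) (by rw [e3, map_mul, map_inv, e2, mul_inv_cancel]))]
  obtain ⟨z, hz⟩ := aut_eq_conj_uu hcp hs
  refine ⟨z, ?_⟩
  rw [← hφp]
  congr 1
  apply Subtype.ext
  rw [hu]
  exact (hι.c_inj (by rw [hz, hι.c_apply])).symm

/-- If the unitriangular group `U` meets a point stabilizer `G_ω` in a proper nontrivial subgroup
`A`, choose `v ∉ A` and let `Λ` be the union of the orbit `U ω` and the orbits `U t ω`, for `t` in
the torus, such that `v` is a product of elements of `A` and of `t A t⁻¹`. The permutation acting as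
`v` on `U ω` and trivially on the other orbits shows that `Λ` is strongly non-binary. -/
theorem IsSocleEmbedding.exists_of_partial [Finite F] [CharP F 2] [Finite G] [Finite Ω]
    {ι : SL₂ F →* G} {c : G →* MulAut (SL₂ F)} (hι : IsSocleEmbedding ι c) {s : Fˣ} (hs : s ≠ 1)
    {ω : Ω} {b₀ v : F} (hb₀ : b₀ ≠ 0) (hb₀ω : ι (uu b₀) • ω = ω) (hv : ι (uu v) • ω ≠ ω) :
    ∃ Λ : Set Ω, StronglyNonBinary (MulAction.stabilizer G Λ) Λ := by
  classical
  have huu : ∀ (y z : F) (x : Ω), ι (uu y) • ι (uu z) • x = ι (uu (y + z)) • x := fun y z x => by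
    rw [uu_add, map_mul, mul_smul]
  have huc : ∀ (y z : F) (x : Ω), ι (uu y) • ι (uu z) • x = ι (uu z) • ι (uu y) • x :=
    fun y z x => by rw [huu, huu, add_comm]
  have hut : ∀ (d : Fˣ) (y : F) (x : Ω),
      ι (uu ((d : F) ^ 2 * y)) • ι (tt d) • x = ι (tt d) • ι (uu y) • x := fun d y x => by
    rw [← mul_smul, ← mul_smul, ← map_mul, ← map_mul, tt_uu]
  let A : AddSubgroup F :=
    { carrier := {x | ι (uu x) • ω = ω}
      zero_mem' := by simp [uu_zero]
      add_mem' := by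
        intro x y hx hy
        change ι (uu x) • ω = ω at hx
        change ι (uu y) • ω = ω at hy
        change ι (uu (x + y)) • ω = ω
        rw [← huu, hy, hx]
      neg_mem' := by
        intro x hx
        change ι (uu x) • ω = ω at hx
        change ι (uu (-x)) • ω = ω
        rw [← uu_inv, map_inv, inv_smul_eq_iff, hx] }
  have hA : ∀ {x}, x ∈ A ↔ ι (uu x) • ω = ω := Iff.rfl
  -- stabilizers in `U` of the points of the orbits
  have hfix : ∀ (d : Fˣ) (y e : F),
      ι (uu ((d : F) ^ 2 * e)) • ι (uu y) • ι (tt d) • ω = ι (uu y) • ι (tt d) • ω ↔ e ∈ A := by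
    intro d y e
    rw [huc, smul_left_cancel_iff, hut, smul_left_cancel_iff, hA]
  let L : Ω → Prop := fun x => ∃ y, x = ι (uu y) • ω
  have hL : ∀ y x, L (ι (uu y) • x) ↔ L x := by
    intro y x
    constructor
    · rintro ⟨z, hz⟩
      refine ⟨-y + z, ?_⟩
      rw [← huu, ← hz, huu, neg_add_cancel, uu_zero, map_one, one_smul]
    · rintro ⟨z, rfl⟩
      exact ⟨y + z, huu _ _ _⟩
  let D : Fˣ → Prop := fun d => ∃ a ∈ A, ∃ b ∈ A, v = a + (d : F) ^ 2 * b
  have hDL : ∀ d, D d → ∀ y, ¬ L (ι (uu y) • ι (tt d) • ω) := by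
    rintro d ⟨a, ha, b, hb, hvab⟩ y ⟨z, hz⟩
    apply hv
    rw [← hA, hvab]
    refine A.add_mem ha ?_
    have := (hfix d y b).mpr hb
    rwa [hz, huc, smul_left_cancel_iff] at this
  let Λ : Set Ω := {x | L x ∨ ∃ d, D d ∧ ∃ y, x = ι (uu y) • ι (tt d) • ω}
  have hΛ : ∀ y, ∀ x ∈ Λ, ι (uu y) • x ∈ Λ := by
    rintro y x (hx | ⟨d, hd, z, rfl⟩)
    · exact Or.inl ((hL y x).mpr hx)
    · exact Or.inr ⟨d, hd, y + z, huu _ _ _⟩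
  have hstab : ∀ y, ι (uu y) ∈ MulAction.stabilizer G Λ := fun y =>
    (MulAction.mem_stabilizer_set' (Set.toFinite Λ)).mpr (hΛ y)
  let τ : Ω → Ω := fun x => if L x then ι (uu v) • x else x
  have hτL : ∀ {x}, L x → τ x = ι (uu v) • x := fun h => if_pos h
  have hτn : ∀ {x}, ¬ L x → τ x = x := fun h => if_neg h
  have hLτ : ∀ x, L (τ x) ↔ L x := by
    intro x
    by_cases h : L x
    · rw [hτL h, hL]
    · rw [hτn h]
  have hττ : ∀ x, τ (τ x) = x := by
    intro x
    by_cases h : L x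
    · rw [hτL ((hLτ x).mpr h), hτL h, ← mul_smul, ← map_mul, uu_sq, map_one, one_smul]
    · rw [hτn (mt (hLτ x).mp h), hτn h]
  have hτu : ∀ y x, τ (ι (uu y) • x) = ι (uu y) • τ x := by
    intro y x
    by_cases h : L x
    · rw [hτL ((hL y x).mpr h), hτL h, huc]
    · rw [hτn (mt (hL y x).mp h), hτn h]
  -- two points, one in `U ω` and the other not
  have hmix : ∀ x ∈ Λ, ∀ y ∈ Λ, L x → ¬ L y →
      ∃ g ∈ MulAction.stabilizer G Λ, g • x = τ x ∧ g • y = τ y := by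
    rintro x hx y (hy | ⟨d, hd, z, rfl⟩) hLx hLy
    · exact absurd hy hLy
    · obtain ⟨a, ha, b, hb, hvab⟩ := hd
      refine ⟨ι (uu ((d : F) ^ 2 * b)), hstab _, ?_, ?_⟩
      · obtain ⟨w, rfl⟩ := hLx
        rw [hτL ⟨w, rfl⟩, huc, huc v, hvab, add_comm, ← huu, hA.mp ha]
      · rw [hτn hLy, hfix]
        exact hb
  refine ⟨Λ, stronglyNonBinary_of_perm τ ?_ ?_ ?_ ?_⟩
  · intro x hx
    by_cases h : L x
    · rw [hτL h]; exact hΛ v x hx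
    · rwa [hτn h]
  · intro x _ y _ h
    rw [← hττ x, h, hττ]
  · intro x hx y hy
    by_cases h1 : L x <;> by_cases h2 : L y
    · exact ⟨ι (uu v), hstab v, (hτL h1).symm, (hτL h2).symm⟩
    · exact hmix x hx y hy h1 h2
    · obtain ⟨g, hg, e1, e2⟩ := hmix y hy x hx h2 h1
      exact ⟨g, hg, e2, e1⟩
    · exact ⟨1, one_mem _, by rw [one_smul, hτn h1], by rw [one_smul, hτn h2]⟩
  · intro g hg
    by_contra! hgτ
    let φ := MulAction.toPermHom (MulAction.stabilizer G Λ) Λ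
    have hφ : ∀ (k : MulAction.stabilizer G Λ) (x : Λ), (φ k x : Ω) = (k : G) • (x : Ω) :=
      fun k x => rfl
    let u : F → MulAction.stabilizer G Λ := fun y => ⟨ι (uu y), hstab y⟩
    have hmΛ : ∀ d, D d → ι (tt d) • ω ∈ Λ := fun d hd =>
      Or.inr ⟨d, hd, 0, by rw [uu_zero, map_one, one_smul]⟩
    have hzero : ∀ y, (∀ d, D d → ι (uu y) • ι (tt d) • ω = ι (tt d) • ω) → y = 0 := by
      intro y h
      apply eq_zero_of_mem_scaled A hv hb₀ω hb₀
      intro d a ha b hb hvab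
      have h1 := h d ⟨a, ha, b, hb, hvab⟩
      have hd2 : (d : F) ^ 2 ≠ 0 := pow_ne_zero 2 d.ne_zero
      have h2 : y = (d : F) ^ 2 * (y / (d : F) ^ 2) := by field_simp
      refine ⟨y / (d : F) ^ 2, ?_, h2⟩
      rw [h2, hut, smul_left_cancel_iff] at h1
      exact h1
    have hinj : ∀ y, φ (u y) = 1 → y = 0 := fun y hy => hzero y fun d hd => by
      have := hφ (u y) ⟨_, hmΛ d hd⟩
      rw [hy] at this
      exact this.symm
    obtain ⟨y, hy⟩ := hι.exists_uu_of_comm hs φ u (fun _ => rfl) hinj (x := ⟨g, hg⟩) (by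
      ext x
      rw [Equiv.Perm.mul_apply, hφ, hφ]
      simp only
      rw [hgτ x x.2]
      have := hgτ (τ x) (by rw [← hgτ x x.2]; exact (φ ⟨g, hg⟩ x).2)
      rw [this, hττ, Equiv.Perm.one_apply]) (fun y => by
      ext x
      rw [Equiv.Perm.mul_apply, Equiv.Perm.mul_apply, hφ, hφ, hφ, hφ]
      simp only [u]
      rw [hgτ x x.2, hgτ _ (hΛ y x x.2), hτu])
    have hωΛ : ω ∈ Λ := Or.inl ⟨0, by rw [uu_zero, map_one, one_smul]⟩
    have hy0 : y = 0 := hzero y fun d hd => by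
      have hn : ¬ L (ι (tt d) • ω) := by
        have := hDL d hd 0
        rwa [uu_zero, map_one, one_smul] at this
      have := hφ (u y) ⟨_, hmΛ d hd⟩
      rw [hy, hφ] at this
      simp only [u] at this
      rw [hgτ _ (hmΛ d hd), hτn hn] at this
      exact this.symm
    apply hv
    have := hφ (u y) ⟨ω, hωΛ⟩
    rw [hy, hφ] at this
    simp only [u] at this
    rw [hgτ ω hωΛ, hτL ⟨0, by rw [uu_zero, map_one, one_smul]⟩, hy0, uu_zero, map_one,
      one_smul] at this
    exact this

/-! ### Point stabilizers containing the unitriangular group -/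

theorem mem_stabilizer_of_forall_mem [Finite F] {α : MulAut (SL₂ F)} {H : Subgroup (SL₂ F)}
    (h : ∀ A ∈ H, α A ∈ H) : α ∈ MulAction.stabilizer (MulAut (SL₂ F)) H := by
  rw [MulAction.mem_stabilizer_iff]
  apply Subgroup.eq_of_le_of_card_ge
  · rintro _ ⟨A, hA, rfl⟩
    exact h A hA
  · exact (Nat.card_congr (Subgroup.equivSMul α H).toEquiv).le

/-- If a point stabilizer contains the unitriangular group `U`, it is the normalizer of `U`, and
`SL₂(F)` acts on `Ω` as on the projective line. This action is 2-transitive, and no element of `G`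
acts as a transposition: if `g` did, the commutator of `g` with `uu 1` would fix at least three
points of the projective line, so it would be trivial. -/
theorem IsSocleEmbedding.exists_of_full [Finite F] [CharP F 2] [Finite Ω]
    {ι : SL₂ F →* G} {c : G →* MulAut (SL₂ F)} (hι : IsSocleEmbedding ι c)
    (hF : 5 ≤ Nat.card F) {ω : Ω} (hM : IsCoatom (MulAction.stabilizer G ω))
    (htr : ∀ x y : Ω, ∃ A, ι A • x = y) (hU : ∀ x, ι (uu x) • ω = ω) :
    ∃ Λ : Set Ω, StronglyNonBinary (MulAction.stabilizer G Λ) Λ := by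
  classical
  let H : Subgroup (SL₂ F) := (MulAction.stabilizer G ω).comap ι
  have hHmem : ∀ {A}, A ∈ H ↔ ι A • ω = ω := Iff.rfl
  have hHtop : H ≠ ⊤ := by
    intro h
    apply hM.1
    rw [eq_top_iff]
    intro g _
    obtain ⟨A, hA⟩ := htr ω (g • ω)
    have : A ∈ H := h ▸ Subgroup.mem_top A
    rw [MulAction.mem_stabilizer_iff, ← hA, hHmem.mp this]
  have hUH : ∀ x, uu x ∈ H := hU
  have hup : ∀ A ∈ H, A 1 0 = 0 := fun A hA => by
    by_contra h
    exact hHtop (eq_top_of_uu_ll H hUH (ll_mem_of_uu H hUH hA h))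
  -- the point stabilizer is the normalizer of the unitriangular group
  let N : Subgroup G := (MulAction.stabilizer (MulAut (SL₂ F)) (UU F)).comap c
  have hN : ∀ g, (∀ x, c g (uu x) ∈ UU F) → g ∈ N := fun g h => by
    apply mem_stabilizer_of_forall_mem
    rintro _ ⟨x, rfl⟩
    exact h x
  have hMN : MulAction.stabilizer G ω ≤ N := by
    intro g hg
    apply hN
    intro x
    have hH : c g (uu x) ∈ H := by
      rw [hHmem, hι.conj, mul_smul, mul_smul, inv_smul_eq_iff.mpr (show ω = g • ω from hg.symm),
        hU]
      exact hg
    rw [eq_uu_of_sq (hup _ hH) (by rw [← map_mul, uu_sq, map_one])]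
    exact ⟨_, rfl⟩
  have hNtop : N ≠ ⊤ := by
    intro h
    have h1 : ι (ll 1) ∈ N := h ▸ Subgroup.mem_top _
    have h2 : c (ι (ll 1)) • UU F = UU F := h1
    have h3 : c (ι (ll 1)) (uu 1) ∈ c (ι (ll 1)) • UU F := ⟨uu 1, ⟨1, rfl⟩, rfl⟩
    rw [h2, hι.c_apply] at h3
    obtain ⟨y, hy⟩ := h3
    rw [MulAut.conj_apply, eq_mul_inv_iff_mul_eq] at hy
    have hy0 : y ≠ 0 := by
      rintro rfl
      rw [uu_zero, one_mul, left_eq_mul, ← uu_zero] at hy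
      exact one_ne_zero (uu_inj hy)
    have := (norm_uu hy.symm hy0).1
    simp at this
  have hNM : N ≤ MulAction.stabilizer G ω := (hM.le_iff.mp hMN).elim (absurd · hNtop) le_of_eq
  have htt : ∀ s : Fˣ, ι (tt s) • ω = ω := by
    intro s
    apply hNM
    apply hN
    intro x
    refine ⟨(s : F) ^ 2 * x, ?_⟩
    rw [hι.c_apply, MulAut.conj_apply, tt_uu, mul_inv_cancel_right]
  have hB : ∀ A : SL₂ F, ι A • ω = ω ↔ A 1 0 = 0 := by
    refine fun A => ⟨hup A, fun hA => ?_⟩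
    have hd := sl_det A
    have h0 : A 0 0 ≠ 0 := fun h => by simp [h, hA] at hd
    rw [eq_uu_tt hA (Units.val_mk0 h0).symm, map_mul, mul_smul, htt, hU]
  have hB' : ∀ A B : SL₂ F, ι A • ω = ι B • ω ↔ (B⁻¹ * A) 1 0 = 0 := fun A B => by
    rw [← hB, map_mul, map_inv, mul_smul, inv_smul_eq_iff]
  -- the points other than `ω` are `P z`, for `z` in `F`
  have hdet : !![(0 : F), 1; 1, 0].det = 1 := by
    rw [Matrix.det_fin_two_of]; linear_combination -two0 (F := F)
  let w : SL₂ F := ⟨!![0, 1; 1, 0], hdet⟩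
  have w00 : w 0 0 = 0 := rfl
  have w01 : w 0 1 = 1 := rfl
  have w10 : w 1 0 = 1 := rfl
  have w11 : w 1 1 = 0 := rfl
  let P : F → Ω := fun z => ι (uu z * w) • ω
  have hPu : ∀ z y, ι (uu z) • P y = P (z + y) := fun z y => by
    simp only [P]
    rw [← mul_smul, ← map_mul, ← mul_assoc, uu_add]
  have hPω : ∀ z, P z ≠ ω := fun z h => by
    have := (hB _).mp h
    simp [mul10, w00, w10] at this
  have hPinj : ∀ {z y}, P z = P y → z = y := fun {z y} h => by
    have := (hB' _ _).mp h
    simp only [mul00, mul10, inv10, inv11, uu00, uu01, uu10, uu11, w00, w10] at this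
    linear_combination -this
  have hPsurj : ∀ x, x ≠ ω → ∃ z, P z = x := by
    intro x hx
    obtain ⟨A, rfl⟩ := htr ω x
    have hA : A 1 0 ≠ 0 := fun h => hx ((hB A).mpr h)
    refine ⟨A 0 0 / A 1 0, ?_⟩
    rw [hB']
    simp [mul00, mul10, inv10, inv11, w00, w10]
    field_simp
    ring
  have h2tr : ∀ x y, x ≠ y → ∃ A, ι A • ω = x ∧ ι A • P 0 = y := by
    intro x y hxy
    obtain ⟨B, rfl⟩ := htr ω x
    obtain ⟨z, hz⟩ := hPsurj ((ι B)⁻¹ • y) (fun h => hxy (inv_smul_eq_iff.mp h).symm)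
    refine ⟨B * uu z, ?_, ?_⟩
    · rw [map_mul, mul_smul, hU]
    · rw [map_mul, mul_smul, hPu, add_zero, hz, smul_inv_smul]
  let τ : Equiv.Perm Ω := Equiv.swap ω (P 0)
  have hst : ∀ g : G, g ∈ MulAction.stabilizer G (Set.univ : Set Ω) := fun g => by
    rw [MulAction.mem_stabilizer_iff, Set.smul_set_univ]
  refine ⟨Set.univ, stronglyNonBinary_of_perm τ (fun _ _ => trivial) τ.injective.injOn ?_ ?_⟩
  · intro x _ y _
    by_cases hxy : x = y
    · obtain ⟨A, hA⟩ := htr x (τ x)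
      exact ⟨ι A, hst _, hA, hxy ▸ hA⟩
    · obtain ⟨A, hA1, hA2⟩ := h2tr x y hxy
      obtain ⟨B, hB1, hB2⟩ := h2tr (τ x) (τ y) (τ.injective.ne hxy)
      refine ⟨ι B * (ι A)⁻¹, hst _, ?_, ?_⟩
      · rw [← hA1, mul_smul, inv_smul_smul, hB1, hA1]
      · rw [← hA2, mul_smul, inv_smul_smul, hB2, hA2]
  · intro g _
    by_contra! hg
    have hgω : g • ω = P 0 := by rw [hg ω trivial]; exact Equiv.swap_apply_left _ _
    have hgP : ∀ z, z ≠ 0 → g • P z = P z := fun z hz => by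
      rw [hg _ trivial]
      exact Equiv.swap_apply_of_ne_of_ne (hPω z) fun h => hz (hPinj h)
    set A := c g (uu 1) * (uu 1)⁻¹ with hAdef
    have hAP : ∀ z, z ≠ 0 → z ≠ 1 →
        -A 1 0 * z ^ 2 + (A 0 0 - A 1 1) * z + A 0 1 = 0 := by
      intro z h0 h1
      have h : ι A • P z = P z := by
        have e : P z = ι (uu 1) • P (z - 1) := by rw [hPu]; congr 1; ring
        rw [hAdef, map_mul, map_inv, mul_smul, hι.conj, inv_smul_eq_iff.mpr e, mul_smul, mul_smul,
          inv_smul_eq_iff.mpr (hgP _ (sub_ne_zero.mpr h1)).symm, ← e, hgP z h0]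
      have h' : ι (A * (uu z * w)) • ω = ι (uu z * w) • ω := by
        rw [map_mul, mul_smul]; exact h
      rw [hB'] at h'
      simp only [mul00, mul10, inv10, inv11, uu00, uu01, uu10, uu11, w00, w10] at h'
      linear_combination -h'
    obtain ⟨x, y, z, hx, hy, hz, hxy, hxz, hyz, hx1, hy1, hz1⟩ : ∃ x y z : F, x ≠ 0 ∧ y ≠ 0 ∧
        z ≠ 0 ∧ x ≠ y ∧ x ≠ z ∧ y ≠ z ∧ x ≠ 1 ∧ y ≠ 1 ∧ z ≠ 1 := by
      have := Fintype.ofFinite F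
      rw [Nat.card_eq_fintype_card] at hF
      have hex : ∀ s : Finset F, s.card ≤ 4 → ∃ x, x ∉ s := fun s hs => by
        by_contra! h
        rw [← Finset.card_univ, ← Finset.eq_univ_iff_forall.mpr h] at hF
        omega
      obtain ⟨x, hx⟩ := hex {0, 1} (Finset.card_le_two.trans (by norm_num))
      obtain ⟨y, hy⟩ := hex {0, 1, x} (Finset.card_le_three.trans (by norm_num))
      obtain ⟨z, hz⟩ := hex {0, 1, x, y} Finset.card_le_four
      simp only [Finset.mem_insert, Finset.mem_singleton, not_or] at hx hy hz
      exact ⟨x, y, z, hx.1, hy.1, hz.1, Ne.symm hy.2.2, Ne.symm hz.2.2.1, Ne.symm hz.2.2.2,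
        hx.2, hy.2.1, hz.2.1⟩
    have ex := hAP x hx hx1
    have ey := hAP y hy hy1
    have ez := hAP z hz hz1
    have exy : -A 1 0 * (x + y) + (A 0 0 - A 1 1) = 0 := by
      apply mul_left_cancel₀ (sub_ne_zero.mpr hxy)
      linear_combination ex - ey
    have exz : -A 1 0 * (x + z) + (A 0 0 - A 1 1) = 0 := by
      apply mul_left_cancel₀ (sub_ne_zero.mpr hxz)
      linear_combination ex - ez
    have e10 : A 1 0 = 0 := by
      apply mul_left_cancel₀ (sub_ne_zero.mpr hyz)
      linear_combination exz - exy
    have e0 : A 0 0 = A 1 1 := by rw [e10] at exy; linear_combination exy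
    have e01 : A 0 1 = 0 := by rw [e10, e0] at ex; linear_combination ex
    have hA1 : A = 1 := by
      by_contra h
      rcases noncentral h with h | h | h
      · exact h e01
      · exact h e10
      · exact h e0
    have hgu : g * ι (uu 1) = ι (uu 1) * g := by
      rw [hι.mul_apply, mul_inv_eq_one.mp hA1]
    have := congrArg (· • ω) hgu
    simp only [mul_smul, hU, hgω, hPu] at this
    have := hPinj this
    simp at this

/-! ### Point stabilizers of odd order -/

/-- If the unitriangular group acts semiregularly, the intersection `H` of a point stabilizer `M`
with `SL₂(F)` has odd order: an involution of `H` is conjugate to a unitriangular matrix. -/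
theorem odd_of_semiregular [Finite F] [CharP F 2] {ι : SL₂ F →* G}
    (hU : ∀ (x : F) (ω : Ω), ι (uu x) • ω = ω → x = 0) (ω : Ω) :
    ¬ 2 ∣ Nat.card ((MulAction.stabilizer G ω).comap ι) := by
  intro hd
  have : Fact (Nat.Prime 2) := ⟨Nat.prime_two⟩
  obtain ⟨⟨B, hB⟩, hB2⟩ := exists_prime_orderOf_dvd_card' 2 hd
  rw [Subgroup.orderOf_mk] at hB2
  have hp : IsPGroup 2 (Subgroup.zpowers B) :=
    IsPGroup.of_card (n := 1) (by rw [Nat.card_zpowers, hB2, pow_one])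
  obtain ⟨R, hR⟩ := hp.exists_le_sylow
  obtain ⟨C, hC⟩ := MulAction.exists_smul_eq (SL₂ F) R sylowUU
  have hm : C * B * C⁻¹ ∈ (sylowUU : Sylow 2 (SL₂ F)) := by
    rw [← hC]
    exact Subgroup.smul_mem_pointwise_smul _ (MulAut.conj C) _ (hR (Subgroup.mem_zpowers _))
  obtain ⟨x, hx⟩ := hm
  have hx0 : x = 0 := by
    apply hU x (ι C • ω)
    rw [hx, ← mul_smul, ← map_mul, inv_mul_cancel_right, map_mul, mul_smul]
    exact congrArg (ι C • ·) hB
  rw [hx0, uu_zero, eq_comm, mul_inv_eq_one, mul_eq_left] at hx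
  rw [hx, orderOf_one] at hB2
  norm_num at hB2

/-- The unitriangular group cannot act semiregularly if a point stabilizer `M` is maximal. Let `H`
be the intersection of `M` with `SL₂(F)`, a group of odd order and hence abelian. If `H ≠ 1`, an
involution inverting `H` lies in the normalizer of `H`, which contains `M` properly, so `H` is
normal in `SL₂(F)`. If `H = 1`, then `M` embeds in the outer automorphism group and so is abelian;
an element of prime order of `M` has a nontrivial fixed point in `SL₂(F)`, so its centralizer
contains `M` properly. -/
theorem IsSocleEmbedding.not_semiregular [Finite F] [CharP F 2] [Finite G]
    {ι : SL₂ F →* G} {c : G →* MulAut (SL₂ F)} (hι : IsSocleEmbedding ι c) {s : Fˣ} (hs : s ≠ 1)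
    (hsimp : IsSimpleGroup (SL₂ F)) {ω : Ω} (hM : IsCoatom (MulAction.stabilizer G ω))
    (hU : ∀ (x : F) (ω : Ω), ι (uu x) • ω = ω → x = 0) : False := by
  set M := MulAction.stabilizer G ω with hMdef
  let H : Subgroup (SL₂ F) := M.comap ι
  have hodd : ¬ 2 ∣ Nat.card H := odd_of_semiregular hU ω
  by_cases hH : H = ⊥
  · have hH1 : ∀ A, ι A ∈ M → A = 1 := fun A hA => by
      have : A ∈ H := hA
      rwa [hH, Subgroup.mem_bot] at this
    have hab : ∀ x ∈ M, ∀ y ∈ M, x * y = y * x := by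
      intro x hx y hy
      obtain ⟨B, hB⟩ := out_comm hs (c x) (c y)
      rw [← hι.c_apply, ← map_mul, ← map_mul, ← map_inv, ← map_mul] at hB
      have h := hι.c_inj hB
      have : ι B ∈ M := by
        rw [h]
        exact M.mul_mem (M.mul_mem hx hy) (M.inv_mem (M.mul_mem hy hx))
      rw [hH1 B this, map_one] at h
      exact mul_inv_eq_one.mp h.symm
    by_cases hMbot : M = ⊥
    · have h1 : Subgroup.zpowers (ι (uu (1 : F))) = ⊤ := by
        apply hM.2
        rw [hMbot, bot_lt_iff_ne_bot, Ne, Subgroup.zpowers_eq_bot]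
        intro h
        rw [← map_one ι, ← uu_zero] at h
        exact one_ne_zero (uu_inj (hι.inj h))
      obtain ⟨n, hn⟩ : ι (ll 1) ∈ Subgroup.zpowers (ι (uu (1 : F))) := h1 ▸ Subgroup.mem_top _
      have h2 : ι (uu 1) * ι (ll (1 : F)) = ι (ll 1) * ι (uu 1) := by
        rw [← hn]; exact ((Commute.refl _).zpow_right n).eq
      rw [← map_mul, ← map_mul] at h2
      have h3 := eq_uu_of_comm one_ne_zero (hι.inj h2)
      have h4 := congrArg (fun A : SL₂ F => A 1 0) h3
      simp at h4
    · have hcard : Nat.card M ≠ 1 := fun h => hMbot (Subgroup.card_eq_one.mp h)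
      have : Fact (Nat.card M).minFac.Prime := ⟨Nat.minFac_prime hcard⟩
      obtain ⟨⟨m, hm⟩, hmp⟩ := exists_prime_orderOf_dvd_card' _ (Nat.minFac_dvd (Nat.card M))
      rw [Subgroup.orderOf_mk] at hmp
      obtain ⟨A, hA1, hA⟩ := exists_fixed (p := (Nat.card M).minFac) (α := c m)
        (by rw [← hmp, ← map_pow, pow_orderOf_eq_one, map_one])
      have hC : Subgroup.centralizer {m} = ⊤ := by
        apply hM.2
        refine lt_of_le_of_ne (fun g hg => ?_) fun h => hA1 (hH1 A ?_)
        · rw [Subgroup.mem_centralizer_singleton_iff]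
          exact hab _ hg _ hm
        · rw [h, Subgroup.mem_centralizer_singleton_iff, hι.mul_apply, hA]
      have hm1 : m = 1 := hι.cent m fun B => by
        have : ι B ∈ Subgroup.centralizer {m} := hC ▸ Subgroup.mem_top _
        rw [Subgroup.mem_centralizer_singleton_iff] at this
        exact this.symm
      rw [hm1, orderOf_one] at hmp
      exact this.out.ne_one hmp.symm
  · obtain ⟨h, hh, h1⟩ := H.bot_or_exists_ne_one.resolve_left hH
    obtain ⟨t, ht1, htt, ht⟩ := exists_involution (trace_ne_zero
      fun e => h1 (eq_one_of_sq_of_odd hodd hh e))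
    have htH : t ∉ H := fun h => ht1 (eq_one_of_sq_of_odd hodd h htt)
    let N : Subgroup G := (MulAction.stabilizer (MulAut (SL₂ F)) H).comap c
    have hN : N = ⊤ := by
      apply hM.2
      refine lt_of_le_of_ne (fun g hg => ?_) fun e => htH ?_
      · apply mem_stabilizer_of_forall_mem
        intro A hA
        change ι (c g A) ∈ M
        rw [hι.conj]
        exact M.mul_mem (M.mul_mem hg hA) (M.inv_mem hg)
      · change ι t ∈ M
        rw [e]
        apply mem_stabilizer_of_forall_mem
        intro A hA
        rw [hι.c_apply, MulAut.conj_apply,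
          ht A (congrArg Subtype.val (comm_of_odd hodd ⟨h, hh⟩ ⟨A, hA⟩))]
        exact H.inv_mem hA
    have hnormal : H.Normal := ⟨fun A hA B => by
      have hB : ι B ∈ N := hN ▸ Subgroup.mem_top _
      have hB' : c (ι B) • H = H := hB
      have : c (ι B) A ∈ c (ι B) • H := ⟨A, hA, rfl⟩
      rwa [hB', hι.c_apply, MulAut.conj_apply] at this⟩
    rcases hsimp.eq_bot_or_eq_top_of_normal H hnormal with e | e
    · exact hH e
    · exact htH (e ▸ Subgroup.mem_top t)

end Action

end PSL2Even

/-- Let `q = 2^a` with `a > 3` and let `G` be an almost simple primitive permutation group on a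
finite set `Ω` with socle isomorphic to `PSL₂(q) = SL₂(q)`. Then `Ω` contains a strongly
non-binary subset, i.e. a subset `Λ` such that the action induced on `Λ` by its setwise
stabilizer is strongly non-binary. -/
theorem exists_stronglyNonBinary_subset_psl2_even (a : ℕ) (ha : 3 < a)
    (F : Type*) [Field F] [Fintype F] (hF : Fintype.card F = 2 ^ a)
    (G Ω : Type*) [Group G] [Finite G] [Finite Ω] [MulAction G Ω] [FaithfulSMul G Ω]
    (hprim : IsPrimitiveAction G Ω)
    (S : Subgroup G) (hSnormal : S.Normal) (hSsimple : IsSimpleGroup S)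
    (hSnonab : ∃ x y : S, x * y ≠ y * x)
    (hScent : Subgroup.centralizer (S : Set G) = ⊥)
    (hiso : Nonempty (S ≃* Matrix.ProjectiveSpecialLinearGroup (Fin 2) F)) :
    ∃ Λ : Set Ω, StronglyNonBinary (MulAction.stabilizer G Λ) Λ := by
  classical
  obtain ⟨e⟩ := hiso
  have hcard : Nat.card F = 2 ^ a := by rw [Nat.card_eq_fintype_card, hF]
  have h16 : 2 ^ 4 ≤ Nat.card F := hcard ▸ Nat.pow_le_pow_right two_pos ha
  have hchar : CharP F 2 := by
    have : Fact (Nat.Prime 2) := ⟨Nat.prime_two⟩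
    exact charP_of_card_eq_prime_pow hF
  obtain ⟨s, hs⟩ : ∃ s : Fˣ, s ≠ 1 := by
    have : Nontrivial Fˣ := by
      rw [← Finite.one_lt_card_iff_nontrivial, Nat.card_units]
      omega
    exact exists_ne 1
  -- in characteristic two the centre of `SL₂(F)` is trivial
  have hcenter : Subgroup.center (PSL2Even.SL₂ F) = ⊥ := by
    rw [eq_bot_iff]
    intro A hA
    rw [Subgroup.mem_center_iff] at hA
    by_contra h
    have h1 := PSL2Even.comm_trans h (hA (PSL2Even.uu 1)).symm (hA (PSL2Even.ll 1)).symm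
    have h2 := congrArg (fun A : PSL2Even.SL₂ F => A 1 0)
      (PSL2Even.eq_uu_of_comm one_ne_zero h1)
    simp at h2
  let e' : PSL2Even.SL₂ F ≃* S :=
    (MulEquiv.ofBijective (QuotientGroup.mk' (Subgroup.center (PSL2Even.SL₂ F)))
      ⟨(MonoidHom.ker_eq_bot_iff _).mp (by rw [QuotientGroup.ker_mk', hcenter]),
        QuotientGroup.mk'_surjective _⟩).trans e.symm
  have hsimp : IsSimpleGroup (PSL2Even.SL₂ F) := e'.isSimpleGroup
  let ι : PSL2Even.SL₂ F →* G := S.subtype.comp e'.toMonoidHom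
  let c : G →* MulAut (PSL2Even.SL₂ F) :=
    (MulAut.congr e'.symm).toMonoidHom.comp MulAut.conjNormal
  have hιS : ∀ g ∈ S, ∃ A, ι A = g := fun g hg =>
    ⟨e'.symm ⟨g, hg⟩, congrArg Subtype.val (e'.apply_symm_apply ⟨g, hg⟩)⟩
  have hι : PSL2Even.IsSocleEmbedding ι c :=
    { inj := S.subtype_injective.comp e'.injective
      conj := fun g A => by
        change ((e' (e'.symm (MulAut.conjNormal g (e' A))) : S) : G) = _
        rw [MulEquiv.apply_symm_apply, MulAut.conjNormal_apply]
        rfl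
      cent := fun g h => by
        have : g ∈ Subgroup.centralizer (S : Set G) := by
          rw [Subgroup.mem_centralizer_iff]
          intro k hk
          obtain ⟨A, rfl⟩ := hιS k hk
          exact (h A).symm
        rwa [hScent, Subgroup.mem_bot] at this }
  -- primitivity makes point stabilizers maximal and `S` transitive
  have htrans := hprim.1
  have hpre : MulAction.IsPreprimitive G Ω :=
    { isTrivialBlock_of_isBlock := fun {B} hB => hprim.2 B hB }
  have hmove : ∀ g : G, g ≠ 1 → ∃ x : Ω, g • x ≠ x := fun g hg => by
    by_contra! h
    exact hg (eq_of_smul_eq_smul fun x : Ω => by rw [h, one_smul])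
  have hu1 : ι (PSL2Even.uu 1) ≠ 1 := fun h => by
    rw [← map_one ι, ← PSL2Even.uu_zero] at h
    exact one_ne_zero (PSL2Even.uu_inj (hι.inj h))
  obtain ⟨ω, hω⟩ := hmove _ hu1
  have hnt : Nontrivial Ω := ⟨⟨_, _, hω⟩⟩
  have hM : ∀ x : Ω, IsCoatom (MulAction.stabilizer G x) := fun x =>
    (MulAction.isCoatom_stabilizer_iff_preprimitive G x).mpr hpre
  have hStr : MulAction.IsPretransitive S Ω := by
    apply MulAction.IsQuasiPreprimitive.isPretransitive_of_normal (G := G)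
    intro h
    have : ω ∈ MulAction.fixedPoints S Ω := h ▸ Set.mem_univ ω
    exact hω (this (e' (PSL2Even.uu 1)))
  have htr : ∀ x y : Ω, ∃ A, ι A • x = y := fun x y => by
    obtain ⟨⟨g, hg⟩, h⟩ := MulAction.exists_smul_eq S x y
    obtain ⟨A, rfl⟩ := hιS g hg
    exact ⟨A, h⟩
  by_cases h1 : ∃ x : Ω, ∃ b v : F, b ≠ 0 ∧ ι (PSL2Even.uu b) • x = x ∧ ι (PSL2Even.uu v) • x ≠ x
  · obtain ⟨x, b, v, hb, hbx, hv⟩ := h1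
    exact hι.exists_of_partial hs hb hbx hv
  push Not at h1
  by_cases h2 : ∃ x : Ω, ∀ b : F, ι (PSL2Even.uu b) • x = x
  · obtain ⟨x, hx⟩ := h2
    exact hι.exists_of_full (by omega) (hM x) htr hx
  · refine (hι.not_semiregular hs hsimp (hM ω) fun x y hxy => ?_).elim
    by_contra hx
    exact h2 ⟨y, fun v => h1 y x v hx hxy⟩
end

section
/- Let G be a group acting transitively on a set Ω, let α ∈ Ω, and let Λ ⊆ Ω be an orbit of the point stabilizer G_α. If the action of G on Ω is binary, then the action of G_α on Λ is binary. -/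
/-!
Given a 2-subtuple complete pair `I, J` for the stabilizer of `α`, prepend `α` to both tuples. The
longer pair is 2-subtuple complete for `G`: the witnesses for `I, J` lie in the stabilizer, so they
also send `α` to `α`. Binarity of `G` gives one element carrying the first tuple to the second;
its first coordinate says that this element fixes `α`.
-/

open MulAction Pointwise

/-- Let `G` act transitively on `Ω`, let `α ∈ Ω` and let `Λ` be an orbit of the point
stabilizer `G_α`. If the action of `G` on `Ω` is binary, then the action of `G_α` on `Λ`
is binary. -/
theorem binary_of_binary_stabilizer_orbit {G Ω : Type*} [Group G] [MulAction G Ω]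
    [MulAction.IsPretransitive G Ω] (α β : Ω)
    (h : IsBinaryAction G Ω) :
    IsBinaryAction (MulAction.stabilizer G α)
      (MulAction.orbit (MulAction.stabilizer G α) β) := by
  intro n hn I J hIJ
  obtain ⟨g, hg⟩ := h (n + 1) (by omega) (Fin.cons α fun i => (I i : Ω))
    (Fin.cons α fun i => (J i : Ω)) (by
      intro i j
      refine Fin.cases ?_ (fun i => ?_) i <;> refine Fin.cases ?_ (fun j => ?_) j
      · exact ⟨1, by simp⟩
      · obtain ⟨g, hg, -⟩ := hIJ j j
        exact ⟨g, g.2, congrArg Subtype.val hg⟩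
      · obtain ⟨g, hg, -⟩ := hIJ i i
        exact ⟨g, congrArg Subtype.val hg, g.2⟩
      · obtain ⟨g, hi, hj⟩ := hIJ i j
        exact ⟨g, congrArg Subtype.val hi, congrArg Subtype.val hj⟩)
  exact ⟨⟨g, hg 0⟩, fun i => Subtype.ext (hg i.succ)⟩
end

section
/- Let G be a finite group acting faithfully and primitively on a finite set Ω, let α ∈ Ω, let M = G_α be the stabilizer of α, and let d be a positive integer. Suppose M ≠ 1 and that for every finite set Λ equipped with a transitive action of M satisfying: (1) |Λ| > 1; (2) every composition factor of M is isomorphic to some section of the image M^Λ of M in Sym(Λ); and (3) the action of M on Λ is binary; one has that d divides |Λ|. Then either d divides |Ω| − 1, or the action of G on Ω is not binary. -/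
/-!
Suppose the action of `G` is binary. Every orbit `Λ ≠ {α}` of the point stabilizer `M` satisfies the
three conditions on `Λ`, so `d` divides each `|Λ|` and hence their sum `|Ω| - 1`.

* Binarity passes from `Ω` to `Λ`: prepend `α` to both tuples (`isBinaryAction_orbit`).
* `|Λ| > 1`: the points with the same stabilizer as `α` form a block
  (`stabilizer_ne_of_isPrimitiveAction`).
* Every composition factor `Q` of `M` is a section of `M^Λ` (`isSection_range_orbit`). If not,
  consider the subgroups of `G` minimal among those having `Q` as a quotient. Such a subgroup has
  only the trivial homomorphism to a group without `Q` as a section. Hence the join `E(α)` of those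
  contained in `M` acts trivially on `Λ`, so for `β ∈ Λ` it is contained in `E(β)`, with equality
  because the two are conjugate. As `x ↦ E(x)` is equivariant, its fibre through `α` is a block
  containing `α ≠ β`, so `E(α)` fixes every point and is trivial. But a minimal subgroup
  of `M` having `Q` as a quotient is a nontrivial subgroup of `E(α)`.
-/

open MulAction Pointwise

/-- `Q` is a section of `P` if it is a quotient of a subgroup of `P`, equivalently if some
subgroup of `P` surjects onto `Q`. -/
def IsSection (Q : Type*) [Group Q] (P : Type*) [Group P] : Prop :=
  ∃ (A : Subgroup P) (φ : A →* Q), Function.Surjective φ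

/-- `Q` is a composition factor of `M` if there is a composition series
`⊥ = H 0 ⊴ H 1 ⊴ ⋯ ⊴ H n = ⊤` of `M` (all of whose successive quotients are simple) with
one of its quotients isomorphic to `Q`. -/
def IsCompositionFactor (Q : Type*) [Group Q] (M : Type*) [Group M] : Prop :=
  ∃ (n : ℕ) (H : Fin (n + 1) → Subgroup M) (i : Fin n),
    H 0 = ⊥ ∧ H (Fin.last n) = ⊤ ∧
    (∀ j : Fin n, H j.castSucc ≤ H j.succ ∧
      ∃ hN : ((H j.castSucc).subgroupOf (H j.succ)).Normal,
        letI := hN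
        IsSimpleGroup (H j.succ ⧸ (H j.castSucc).subgroupOf (H j.succ))) ∧
    ∃ hN : ((H i.castSucc).subgroupOf (H i.succ)).Normal,
      letI := hN
      Nonempty ((H i.succ ⧸ (H i.castSucc).subgroupOf (H i.succ)) ≃* Q)

/-! ### Primitive actions -/

/-- In a primitive action, a function whose fibre relation is `G`-invariant and which identifies two
distinct points is constant, since its fibres are blocks. -/
lemma IsPrimitiveAction.eq_of_invariant {G Ω X : Type*} [Group G] [MulAction G Ω]
    (hprim : IsPrimitiveAction G Ω) (f : Ω → X)
    (hf : ∀ (g : G) (x y : Ω), f x = f y → f (g • x) = f (g • y))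
    {a b : Ω} (hne : a ≠ b) (hab : f a = f b) (x : Ω) : f x = f a := by
  have hblock : IsBlock G {y | f y = f a} := by
    rw [isBlock_iff_smul_eq_of_mem]
    intro g y hy hgy
    simp only [Set.mem_ofPred_eq] at hy hgy
    have hga : f (g • a) = f a := by rw [← hgy]; exact hf g _ _ hy.symm
    ext z
    rw [Set.mem_smul_set_iff_inv_smul_mem]
    simp only [Set.mem_ofPred_eq]
    constructor
    · intro hz
      have := hf g _ _ hz
      rw [smul_inv_smul] at this
      exact this.trans hga
    · intro hz
      have := hf g⁻¹ _ _ (hz.trans hga.symm)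
      rwa [inv_smul_smul] at this
  rcases hprim.2 _ hblock with h | h
  · exact absurd (h (show f a = f a from rfl) (show f b = f a from hab.symm)) hne
  · have : x ∈ {y | f y = f a} := h ▸ Set.mem_univ x
    exact this

lemma eq_bot_of_le_stabilizer {G Ω : Type*} [Group G] [MulAction G Ω] [FaithfulSMul G Ω]
    (H : Subgroup G) (hH : ∀ x : Ω, H ≤ stabilizer G x) : H = ⊥ := by
  rw [eq_bot_iff]
  intro g hg
  rw [Subgroup.mem_bot]
  refine FaithfulSMul.eq_of_smul_eq_smul (α := Ω) fun x => ?_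
  rw [one_smul]
  exact hH x hg

lemma stabilizer_ne_of_isPrimitiveAction {G Ω : Type*} [Group G] [MulAction G Ω]
    [FaithfulSMul G Ω] (hprim : IsPrimitiveAction G Ω) {α β : Ω} (hne : α ≠ β)
    (hM : stabilizer G α ≠ ⊥) : stabilizer G α ≠ stabilizer G β := by
  intro h
  refine hM (eq_bot_of_le_stabilizer (Ω := Ω) _ fun x => ?_)
  refine (hprim.eq_of_invariant (stabilizer G) (fun g x y hxy => ?_) hne h x).ge
  rw [stabilizer_smul_eq_stabilizer_map_conj, stabilizer_smul_eq_stabilizer_map_conj, hxy]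

/-! ### Subgroups minimal over a simple group -/

/-- `P` is minimal among the subgroups of `G` having `Q` as a quotient. -/
def MinimalOver {G : Type*} [Group G] (Q : Type*) [Group Q] (P : Subgroup G) : Prop :=
  (∃ φ : P →* Q, Function.Surjective φ) ∧
    ∀ A : Subgroup G, A ≤ P → (∃ φ : A →* Q, Function.Surjective φ) → A = P

lemma exists_minimalOver {G : Type*} [Group G] [Finite G] {Q : Type*} [Group Q]
    (A : Subgroup G) (hA : ∃ φ : A →* Q, Function.Surjective φ) :
    ∃ P ≤ A, MinimalOver Q P := by
  obtain ⟨P, hPA, hP⟩ := exists_minimal_le_of_wellFoundedLT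
    (fun B : Subgroup G => ∃ φ : B →* Q, Function.Surjective φ) A hA
  exact ⟨P, hPA, hP.1, fun B hB h => le_antisymm hB (hP.2 h hB)⟩

lemma MinimalOver.map_equiv {G : Type*} [Group G] {Q : Type*} [Group Q] {P : Subgroup G}
    (hP : MinimalOver Q P) (e : G ≃* G) : MinimalOver Q (P.map e.toMonoidHom) := by
  have key : ∀ (e : G ≃* G) (A : Subgroup G), (∃ φ : A →* Q, Function.Surjective φ) →
      ∃ φ : A.map e.toMonoidHom →* Q, Function.Surjective φ := by
    rintro e A ⟨φ, hφ⟩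
    exact ⟨φ.comp (e.subgroupMap A).symm.toMonoidHom,
      hφ.comp (e.subgroupMap A).symm.surjective⟩
  refine ⟨key e P hP.1, fun A hA h => ?_⟩
  have h1 : A.map e.symm.toMonoidHom ≤ P := by
    rintro _ ⟨a, ha, rfl⟩
    obtain ⟨p, hp, hpa⟩ := hA ha
    rw [← hpa]
    simpa using hp
  rw [← hP.2 _ h1 (key e.symm A h), Subgroup.map_map]
  ext x
  simp

/-- Because `Q` is simple, either the kernel of a homomorphism `ρ` from `P` still maps onto `Q`, and
minimality makes `ρ` trivial, or `Q` is a quotient of the image of `ρ`. -/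
lemma MinimalOver.hom_eq_one {G : Type*} [Group G] {Q : Type*} [Group Q] [IsSimpleGroup Q]
    {P : Subgroup G} (hP : MinimalOver Q P) {X : Type*} [Group X] (hX : ¬ IsSection Q X)
    (ρ : P →* X) : ρ = 1 := by
  obtain ⟨φ, hφ⟩ := hP.1
  have hn : (ρ.ker.map φ).Normal := Subgroup.Normal.map inferInstance φ hφ
  rcases hn.eq_bot_or_eq_top with h | h
  · exfalso
    have hker : ρ.rangeRestrict.ker ≤ φ.ker := by
      rw [MonoidHom.ker_rangeRestrict]
      exact (Subgroup.map_eq_bot_iff _).1 h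
    refine hX ⟨ρ.range, ρ.rangeRestrict.liftOfSurjective ρ.rangeRestrict_surjective ⟨φ, hker⟩, ?_⟩
    intro q
    obtain ⟨p, rfl⟩ := hφ q
    exact ⟨ρ.rangeRestrict p, MonoidHom.liftOfRightInverse_comp_apply _ _ _ ⟨φ, hker⟩ p⟩
  · have hsurj : ∃ ψ : ρ.ker.map P.subtype →* Q, Function.Surjective ψ := by
      refine ⟨(φ.comp ρ.ker.subtype).comp
        (ρ.ker.equivMapOfInjective P.subtype P.subtype_injective).symm.toMonoidHom, ?_⟩
      refine Function.Surjective.comp (g := φ.comp ρ.ker.subtype) ?_ (MulEquiv.surjective _)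
      intro q
      obtain ⟨p, hp, rfl⟩ := (h ▸ Subgroup.mem_top q : q ∈ ρ.ker.map φ)
      exact ⟨⟨p, hp⟩, rfl⟩
    have hKP := hP.2 _ (Subgroup.map_subtype_le _) hsurj
    ext p
    have hp : (p : G) ∈ ρ.ker.map P.subtype := hKP.symm.le p.2
    obtain ⟨p', hp', hpp⟩ := hp
    rw [← Subtype.ext hpp]
    exact hp'

/-! ### Simple sections and suborbits -/

/-- The join of all subgroups of the stabilizer of `x` that are minimal over `Q`. -/
def minimalCore {G Ω : Type*} [Group G] [MulAction G Ω] (Q : Type*) [Group Q] (x : Ω) :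
    Subgroup G :=
  sSup {P | MinimalOver Q P ∧ P ≤ stabilizer G x}

lemma minimalCore_le {G Ω : Type*} [Group G] [MulAction G Ω] (Q : Type*) [Group Q] (x : Ω) :
    minimalCore Q x ≤ stabilizer G x :=
  sSup_le fun _ hP => hP.2

lemma minimalCore_smul {G Ω : Type*} [Group G] [MulAction G Ω] (Q : Type*) [Group Q] (g : G)
    (x : Ω) :
    minimalCore Q (g • x) = (minimalCore Q x).map (MulAut.conj g).toMonoidHom := by
  have key : ∀ (g : G) (x : Ω),
      (minimalCore Q x).map (MulAut.conj g).toMonoidHom ≤ minimalCore Q (g • x) := by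
    intro g x
    rw [Subgroup.map_le_iff_le_comap]
    refine sSup_le fun P hP => ?_
    rw [← Subgroup.map_le_iff_le_comap]
    refine le_sSup ⟨hP.1.map_equiv _, ?_⟩
    rw [stabilizer_smul_eq_stabilizer_map_conj]
    exact Subgroup.map_mono hP.2
  refine le_antisymm ?_ (key g x)
  intro y hy
  refine ⟨g⁻¹ * y * g, ?_, by simp [mul_assoc]⟩
  have h := key g⁻¹ (g • x) (Subgroup.mem_map_of_mem _ hy)
  rw [inv_smul_smul] at h
  simpa using h

/-- A nontrivial suborbit of a finite primitive group detects the simple sections of the point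
stabilizer. -/
lemma isSection_range_orbit {G Ω : Type*} [Group G] [Finite G] [MulAction G Ω] [FaithfulSMul G Ω]
    (hprim : IsPrimitiveAction G Ω) {α β : Ω} (hne : α ≠ β) (Q : Type*) [Group Q]
    [IsSimpleGroup Q] (hQ : IsSection Q (stabilizer G α)) :
    IsSection Q (toPermHom (stabilizer G α) (orbit (stabilizer G α) β)).range := by
  by_contra hX
  have hle : minimalCore Q α ≤ minimalCore (G := G) Q β := by
    refine sSup_le fun P hP => le_sSup ⟨hP.1, fun p hp => ?_⟩
    have h1 := hP.1.hom_eq_one hX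
      ((toPermHom (stabilizer G α) (orbit (stabilizer G α) β)).rangeRestrict.comp
        (Subgroup.inclusion hP.2))
    have h2 := congrArg Subtype.val (DFunLike.congr_fun h1 ⟨p, hp⟩)
    have h3 := congrArg Subtype.val (Equiv.congr_fun h2
      (⟨β, mem_orbit_self β⟩ : orbit (stabilizer G α) β))
    exact h3
  have heq : minimalCore Q α = minimalCore (G := G) Q β := by
    refine Subgroup.eq_of_le_of_card_ge hle ?_
    obtain ⟨g, rfl⟩ := hprim.1.exists_smul_eq α β
    rw [minimalCore_smul]
    exact (Nat.card_congr ((MulAut.conj g).subgroupMap (minimalCore Q α)).toEquiv).ge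
  have hbot : minimalCore (G := G) Q α = ⊥ := by
    refine eq_bot_of_le_stabilizer (Ω := Ω) _ fun x => ?_
    rw [← hprim.eq_of_invariant (minimalCore (G := G) Q)
      (fun g x y hxy => by rw [minimalCore_smul, minimalCore_smul, hxy]) hne heq x]
    exact minimalCore_le Q x
  obtain ⟨A, φ, hφ⟩ := hQ
  obtain ⟨P, hPA, hP⟩ := exists_minimalOver (Q := Q) (A.map (stabilizer G α).subtype)
    ⟨φ.comp (A.equivMapOfInjective _ (Subgroup.subtype_injective _)).symm.toMonoidHom,
      hφ.comp (MulEquiv.surjective _)⟩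
  have hPbot : P = ⊥ := by
    rw [eq_bot_iff, ← hbot]
    exact le_sSup ⟨hP, hPA.trans (Subgroup.map_subtype_le A)⟩
  obtain ⟨ψ, hψ⟩ := hP.1
  subst hPbot
  exact not_subsingleton Q hψ.subsingleton

lemma IsCompositionFactor.isSimpleGroup_and_isSection {Q M : Type*} [Group Q] [Group M]
    (h : IsCompositionFactor Q M) : IsSimpleGroup Q ∧ IsSection Q M := by
  obtain ⟨n, H, i, -, -, hs, hN, ⟨e⟩⟩ := h
  obtain ⟨-, hN', hsimple⟩ := hs i
  exact ⟨e.symm.isSimpleGroup, H i.succ, e.toMonoidHom.comp (QuotientGroup.mk' _),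
    e.surjective.comp (QuotientGroup.mk'_surjective _)⟩

/-! ### Binarity and counting of suborbits -/

lemma isBinaryAction_orbit {G Ω : Type*} [Group G] [MulAction G Ω] (h : IsBinaryAction G Ω)
    (α β : Ω) : IsBinaryAction (stabilizer G α) (orbit (stabilizer G α) β) := by
  intro n hn I J hIJ
  obtain ⟨g, hg⟩ := h (n + 1) (by omega) (Fin.cons α fun i => (I i : Ω))
    (Fin.cons α fun i => (J i : Ω)) (by
      intro i j
      refine Fin.cases ?_ (fun i => ?_) i <;> refine Fin.cases ?_ (fun j => ?_) j
      · exact ⟨1, by simp⟩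
      · obtain ⟨g, hg, -⟩ := hIJ j j
        exact ⟨g, g.2, congrArg Subtype.val hg⟩
      · obtain ⟨g, hg, -⟩ := hIJ i i
        exact ⟨g, congrArg Subtype.val hg, g.2⟩
      · obtain ⟨g, hg, hg'⟩ := hIJ i j
        exact ⟨g, congrArg Subtype.val hg, congrArg Subtype.val hg'⟩)
  exact ⟨⟨g, hg 0⟩, fun i => Subtype.ext (hg i.succ)⟩

/-- If every orbit not containing the fixed point `α` has size divisible by `d`, then so has the
complement of `α`. -/
lemma dvd_card_sub_one_of_orbits {M Ω : Type*} [Group M] [MulAction M Ω] [Finite Ω] (α : Ω)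
    (hα : ∀ m : M, m • α = α) (d : ℕ) (h : ∀ β : Ω, α ≠ β → d ∣ Nat.card (orbit M β)) :
    d ∣ Nat.card Ω - 1 := by
  classical
  have := Fintype.ofFinite Ω
  have := Fintype.ofFinite (orbitRel.Quotient M Ω)
  have hsum : Nat.card Ω = ∑ ω : orbitRel.Quotient M Ω, Nat.card ω.orbit := by
    rw [Nat.card_congr (selfEquivSigmaOrbits' M Ω), Nat.card_sigma]
  have horb : orbitRel.Quotient.orbit (Quotient.mk'' α : orbitRel.Quotient M Ω) = {α} := by
    rw [orbitRel.Quotient.orbit_mk]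
    ext x
    simp [mem_orbit_iff, hα, eq_comm]
  rw [← Finset.add_sum_erase _ _ (Finset.mem_univ (Quotient.mk'' α : orbitRel.Quotient M Ω)), horb] at hsum
  rw [hsum, Nat.card_unique, Nat.add_sub_cancel_left]
  refine Finset.dvd_sum fun ω hω => ?_
  induction ω using Quotient.inductionOn' with
  | h β =>
    rw [orbitRel.Quotient.orbit_mk]
    refine h β ?_
    rintro rfl
    exact (Finset.mem_erase.1 hω).1 rfl

/-- Let `G` be a primitive permutation group on a finite set `Ω`, let `M = G_α ≠ 1` be a point
stabilizer and let `d > 0`. Suppose that `d` divides `|Λ|` for every transitive `M`-set `Λ`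
with `|Λ| > 1` such that every composition factor of `M` is isomorphic to a section of the
image `M^Λ` of `M` in `Sym(Λ)`, and such that the action of `M` on `Λ` is binary. Then either
`d` divides `|Ω| - 1`, or the action of `G` on `Ω` is not binary. -/
theorem dvd_card_sub_one_or_not_binary {G Ω : Type u} [Group G] [Finite G] [Finite Ω]
    [MulAction G Ω] [FaithfulSMul G Ω] (hprim : IsPrimitiveAction G Ω)
    (α : Ω) (d : ℕ) (hd : 0 < d)
    (hM : MulAction.stabilizer G α ≠ ⊥)
    (hdiv : ∀ (Λ : Type u) [Fintype Λ] [MulAction (MulAction.stabilizer G α) Λ],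
      MulAction.IsPretransitive (MulAction.stabilizer G α) Λ →
      1 < Fintype.card Λ →
      (∀ (Q : Type u) [Group Q], IsCompositionFactor Q (MulAction.stabilizer G α) →
        IsSection Q (MulAction.toPermHom (MulAction.stabilizer G α) Λ).range) →
      IsBinaryAction (MulAction.stabilizer G α) Λ →
      d ∣ Fintype.card Λ) :
    d ∣ (Nat.card Ω - 1) ∨ ¬ IsBinaryAction G Ω := by
  by_cases hbin : IsBinaryAction G Ω
  swap
  · exact Or.inr hbin
  left
  refine dvd_card_sub_one_of_orbits (M := stabilizer G α) α (fun m => m.2) d fun β hne => ?_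
  have := Fintype.ofFinite (orbit (stabilizer G α) β)
  rw [Nat.card_eq_fintype_card]
  refine hdiv (orbit (stabilizer G α) β) inferInstance ?_ ?_ (isBinaryAction_orbit hbin α β)
  · by_contra hcard
    have hsub := Fintype.card_le_one_iff_subsingleton.1 (not_lt.1 hcard)
    refine stabilizer_ne_of_isPrimitiveAction hprim hne hM ?_
    have hle : stabilizer G α ≤ stabilizer G β := fun g hg =>
      congrArg Subtype.val (hsub.elim
        (⟨β, mem_orbit_self β⟩ : orbit (stabilizer G α) β)
        ⟨g • β, mem_orbit β (⟨g, hg⟩ : stabilizer G α)⟩).symm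
    refine Subgroup.eq_of_le_of_card_ge hle ?_
    obtain ⟨g, rfl⟩ := hprim.1.exists_smul_eq α β
    rw [stabilizer_smul_eq_stabilizer_map_conj]
    exact (Nat.card_congr ((MulAut.conj g).subgroupMap (stabilizer G α)).toEquiv).ge
  · intro Q _ hQ
    obtain ⟨hsimple, hsec⟩ := hQ.isSimpleGroup_and_isSection
    exact isSection_range_orbit hprim hne Q hsec
end

section
/- Let n be a positive integer and let κ be a unit of ℤ/nℤ with κ³ = 1 and κ ≠ 1. Let M be the group of permutations of ℤ/nℤ consisting of the affine maps x ↦ κ^j·x + a for j ∈ {0, 1, 2} and a ∈ ℤ/nℤ. Then the triples I = (0, 1, 1 + κ²) and J = (0, 1, 1 + κ) are 2-subtuple complete for the action of M on ℤ/nℤ, but no element of M maps I to J entrywise; in particular, the action of M on ℤ/nℤ is not binary. -/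
/-!
Each of the three pairs of positions is matched by its own affine map: the identity on `(0, 1)`,
`x ↦ κ x` on `(0, 1 + κ²)`, since `κ (1 + κ²) = κ + 1`, and `x ↦ κ² x + (1 - κ²)` on
`(1, 1 + κ²)`, since it fixes `1` and `κ² · κ² = κ`. On the other hand an affine map that fixes `0`
and `1` is the identity, so a single element matching all three positions would force
`1 + κ² = 1 + κ`, hence `κ = 1` because `κ` is a unit.
-/

open MulAction Pointwise

/-- The group of affine permutations `x ↦ κ^j * x + a` of `ℤ/nℤ`, where `κ` is a unit of
`ℤ/nℤ` with `κ³ = 1` (so that the powers of `κ` occurring are exactly `κ⁰, κ¹, κ²`). -/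
def affineGroup {n : ℕ} (κ : (ZMod n)ˣ) (hκ : κ ^ 3 = 1) : Subgroup (Equiv.Perm (ZMod n)) where
  carrier := {σ | ∃ (j : ℕ) (a : ZMod n), ∀ x, σ x = (κ : ZMod n) ^ j * x + a}
  one_mem' := ⟨0, 0, fun x => by simp⟩
  mul_mem' := by
    rintro σ τ ⟨j, a, hσ⟩ ⟨k, b, hτ⟩
    refine ⟨j + k, (κ : ZMod n) ^ j * b + a, fun x => ?_⟩
    rw [Equiv.Perm.mul_apply, hτ, hσ, pow_add]
    ring
  inv_mem' := by
    rintro σ ⟨j, a, hσ⟩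
    have hκ1 : (κ : ZMod n) ^ 3 = 1 := by
      rw [← Units.val_pow_eq_pow_val, hκ, Units.val_one]
    have key : (κ : ZMod n) ^ j * (κ : ZMod n) ^ (2 * j) = 1 := by
      rw [← pow_add]
      have h32 : j + 2 * j = 3 * j := by ring
      rw [h32, pow_mul, hκ1, one_pow]
    refine ⟨2 * j, -((κ : ZMod n) ^ (2 * j) * a), fun x => ?_⟩
    rw [Equiv.Perm.inv_def, Equiv.symm_apply_eq, hσ]
    linear_combination (a - x) * key

theorem exists_affineGroup_smul {n : ℕ} (κ : (ZMod n)ˣ) (hκ : κ ^ 3 = 1) (j : ℕ) (a : ZMod n) :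
    ∃ g : affineGroup κ hκ, ∀ x : ZMod n, g • x = (κ : ZMod n) ^ j * x + a := by
  let σ : Equiv.Perm (ZMod n) := (Units.mulLeft (κ ^ j)).trans (Equiv.addRight a)
  have hσ : ∀ x, σ x = (κ : ZMod n) ^ j * x + a := fun x => by simp [σ]
  exact ⟨⟨σ, j, a, hσ⟩, hσ⟩

/-- For `κ` a unit of `ℤ/nℤ` of order 3, the triples `(0, 1, 1 + κ²)` and `(0, 1, 1 + κ)` are
2-subtuple complete for the affine group `{x ↦ κ^j x + a}`, but no element of that group maps
the first triple to the second; in particular the action is not binary. -/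
theorem affine_group_not_binary {n : ℕ} (hn : 0 < n) (κ : (ZMod n)ˣ)
    (hκ3 : κ ^ 3 = 1) (hκ1 : κ ≠ 1) :
    (SubtupleComplete2 (affineGroup κ hκ3)
        ![0, 1, 1 + (κ : ZMod n) ^ 2] ![0, 1, 1 + (κ : ZMod n)] ∧
      ¬ ∃ g : affineGroup κ hκ3, ∀ i : Fin 3,
          g • (![0, 1, 1 + (κ : ZMod n) ^ 2]) i = (![0, 1, 1 + (κ : ZMod n)]) i) ∧
    ¬ IsBinaryAction (affineGroup κ hκ3) (ZMod n) := by
  have hκ : (κ : ZMod n) ^ 3 = 1 := by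
    rw [← Units.val_pow_eq_pow_val, hκ3, Units.val_one]
  have hcomplete : SubtupleComplete2 (affineGroup κ hκ3)
      ![0, 1, 1 + (κ : ZMod n) ^ 2] ![0, 1, 1 + (κ : ZMod n)] := by
    obtain ⟨g, hg⟩ := exists_affineGroup_smul κ hκ3 1 0
    obtain ⟨h, hh⟩ := exists_affineGroup_smul κ hκ3 2 (1 - (κ : ZMod n) ^ 2)
    have g0 : g • (0 : ZMod n) = 0 := by rw [hg]; ring
    have g2 : g • (1 + (κ : ZMod n) ^ 2) = 1 + κ := by
      rw [hg]; linear_combination hκ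
    have h1 : h • (1 : ZMod n) = 1 := by rw [hh]; ring
    have h2 : h • (1 + (κ : ZMod n) ^ 2) = 1 + κ := by
      rw [hh]; linear_combination (κ : ZMod n) * hκ
    intro i j
    fin_cases i <;> fin_cases j
    exacts [⟨1, one_smul _ _, one_smul _ _⟩, ⟨1, one_smul _ _, one_smul _ _⟩, ⟨g, g0, g2⟩,
      ⟨1, one_smul _ _, one_smul _ _⟩, ⟨1, one_smul _ _, one_smul _ _⟩, ⟨h, h1, h2⟩,
      ⟨g, g2, g0⟩, ⟨h, h2, h1⟩, ⟨g, g2, g2⟩]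
  have hnone : ¬ ∃ g : affineGroup κ hκ3, ∀ i : Fin 3,
      g • (![0, 1, 1 + (κ : ZMod n) ^ 2]) i = (![0, 1, 1 + (κ : ZMod n)]) i := by
    rintro ⟨⟨σ, j, a, hσ⟩, hg⟩
    have e0 : σ 0 = 0 := hg 0
    have e1 : σ 1 = 1 := hg 1
    have e2 : σ (1 + (κ : ZMod n) ^ 2) = 1 + κ := hg 2
    rw [hσ] at e0 e1 e2
    have hsq : (κ : ZMod n) ^ 2 = κ := by
      linear_combination e2 - (1 + (κ : ZMod n) ^ 2) * e1 + (κ : ZMod n) ^ 2 * e0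
    have hsq' : κ * κ = κ := by
      ext
      rw [Units.val_mul, ← sq, hsq]
    exact hκ1 (mul_eq_left.mp hsq')
  exact ⟨⟨hcomplete, hnone⟩, fun hbin => hnone (hbin 3 (by norm_num) _ _ hcomplete)⟩
end

section
/- Let q be an odd prime power. Then PGL₂(q) contains no subgroup isomorphic to C₂ × C₂ × C₂; equivalently, every elementary abelian 2-subgroup of PGL₂(q) has order at most 4 (the 2-rank of PGL₂(q) is at most 2). -/
/-!
The lift of an involution of `PGL₂(F)` is a non-scalar matrix whose square is scalar, so by
Cayley–Hamilton it has trace zero. Hence if `x`, `y` and `xy` are all involutions, lifts `A`, `B`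
satisfy `tr A = tr B = tr (AB) = 0`, and the polarised Cayley–Hamilton identity
`AB + BA = tr (AB)` shows that `A` and `B` anticommute. For independent involutions `x`, `y`, `z`
of an elementary abelian group of order 8, with lifts `A`, `B`, `C`, the matrix `C` anticommutes
with `A`, with `B` and with `AB`. Anticommuting with `A` and with `B`, it commutes with `AB`;
so `2ABC = 0`, which is absurd in odd characteristic.
-/

/-- The projective general linear group `PGL₂(F) = GL₂(F)/Z(GL₂(F))`. -/
abbrev PGL2 (F : Type*) [Field F] :=
  GL (Fin 2) F ⧸ Subgroup.center (GL (Fin 2) F)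

/-- By Cayley–Hamilton `g² = (tr g) g - det g`; as `g²` is central, `tr g` times every commutator
`gh - hg` vanishes, while some commutator is nonzero. -/
lemma trace_eq_zero_of_involution {F : Type*} [Field F] (g : GL (Fin 2) F)
    (h1 : (g : PGL2 F) ≠ 1) (h2 : (g : PGL2 F) * g = 1) :
    (g : Matrix (Fin 2) (Fin 2) F).trace = 0 := by
  rw [Ne, QuotientGroup.eq_one_iff, Subgroup.mem_center_iff] at h1
  rw [← QuotientGroup.mk_mul, QuotientGroup.eq_one_iff, Subgroup.mem_center_iff] at h2
  push Not at h1
  obtain ⟨h, hh⟩ := h1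
  by_contra ht
  apply hh
  have h2' := congrArg (fun u : GL (Fin 2) F => (u : Matrix (Fin 2) (Fin 2) F)) (h2 h)
  apply Units.ext
  simp only [Units.val_mul] at h2' ⊢
  generalize (g : Matrix (Fin 2) (Fin 2) F) = A at *
  generalize (h : Matrix (Fin 2) (Fin 2) F) = B at *
  have hsq : A * A = A.trace • A - A.det • 1 := by
    ext i j
    fin_cases i <;> fin_cases j <;>
      simp [Matrix.mul_apply, Fin.sum_univ_two, Matrix.trace_fin_two, Matrix.det_fin_two] <;> ring
  rw [hsq] at h2'
  simp only [mul_sub, sub_mul, Matrix.mul_smul, Matrix.smul_mul, mul_one, one_mul,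
    sub_left_inj] at h2'
  exact smul_right_injective _ ht h2'

/-- The polarised Cayley–Hamilton identity in the trace-zero case. -/
lemma anticommute_of_trace_eq_zero {F : Type*} [Field F] (A B : Matrix (Fin 2) (Fin 2) F)
    (hA : A.trace = 0) (hB : B.trace = 0) (hAB : (A * B).trace = 0) : A * B = -(B * A) := by
  simp only [Matrix.trace_fin_two, Matrix.mul_apply, Fin.sum_univ_two] at hA hB hAB
  have hA' : A 1 1 = -A 0 0 := by linear_combination hA
  have hB' : B 1 1 = -B 0 0 := by linear_combination hB
  rw [hA', hB'] at hAB
  ext i j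
  fin_cases i <;> fin_cases j <;>
    simp [Matrix.mul_apply, Fin.sum_univ_two, hA', hB'] <;>
      first | ring1 | linear_combination hAB

/-- For `q` an odd prime power, `PGL₂(q)` contains no subgroup isomorphic to
`C₂ × C₂ × C₂`: its 2-rank is at most 2. -/
theorem pgl2_no_elementary_abelian_of_order_eight (q : ℕ) (hq : Odd q)
    (F : Type*) [Field F] [Fintype F] (hF : Fintype.card F = q)
    (K : Subgroup (PGL2 F)) :
    ¬ Nonempty (K ≃* Multiplicative (ZMod 2 × ZMod 2 × ZMod 2)) := by
  rintro ⟨e⟩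
  have two_ne : (2 : F) ≠ 0 := by
    apply Ring.two_ne_zero
    rw [Ne, FiniteField.even_card_iff_char_two, hF]
    exact fun h => by have := Nat.odd_iff.mp hq; omega
  let f : Multiplicative (ZMod 2 × ZMod 2 × ZMod 2) →* PGL2 F :=
    K.subtype.comp e.symm.toMonoidHom
  have hf : Function.Injective f := K.subtype_injective.comp e.symm.injective
  have key : ∀ (g : GL (Fin 2) F) (v : Multiplicative (ZMod 2 × ZMod 2 × ZMod 2)),
      (g : PGL2 F) = f v → v ≠ 1 → (g : Matrix (Fin 2) (Fin 2) F).trace = 0 := by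
    intro g v hg hv
    have hvv : v * v = 1 := (by decide : ∀ u : Multiplicative (ZMod 2 × ZMod 2 × ZMod 2), u * u = 1) v
    apply trace_eq_zero_of_involution
    · rw [hg]
      exact fun h => hv (hf (h.trans (map_one f).symm))
    · rw [hg, ← map_mul, hvv, map_one]
  have anti : ∀ (g h : GL (Fin 2) F) (v w : Multiplicative (ZMod 2 × ZMod 2 × ZMod 2)),
      (g : PGL2 F) = f v → (h : PGL2 F) = f w → v ≠ 1 → w ≠ 1 → v * w ≠ 1 →
      (g : Matrix (Fin 2) (Fin 2) F) * h = -(h * g) := by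
    intro g h v w hg hh hv hw hvw
    have hgh : ((g * h : GL (Fin 2) F) : PGL2 F) = f (v * w) := by
      rw [QuotientGroup.mk_mul, hg, hh, map_mul]
    exact anticommute_of_trace_eq_zero _ _ (key g v hg hv) (key h w hh hw) (key (g * h) _ hgh hvw)
  let x : Multiplicative (ZMod 2 × ZMod 2 × ZMod 2) := .ofAdd (1, 0, 0)
  let y : Multiplicative (ZMod 2 × ZMod 2 × ZMod 2) := .ofAdd (0, 1, 0)
  let z : Multiplicative (ZMod 2 × ZMod 2 × ZMod 2) := .ofAdd (0, 0, 1)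
  obtain ⟨a, ha⟩ := QuotientGroup.mk_surjective (f x)
  obtain ⟨b, hb⟩ := QuotientGroup.mk_surjective (f y)
  obtain ⟨c, hc⟩ := QuotientGroup.mk_surjective (f z)
  have hab : ((a * b : GL (Fin 2) F) : PGL2 F) = f (x * y) := by
    rw [QuotientGroup.mk_mul, ha, hb, map_mul]
  have hac := anti a c x z ha hc (by decide) (by decide) (by decide)
  have hbc := anti b c y z hb hc (by decide) (by decide) (by decide)
  have habc := anti (a * b) c (x * y) z hab hc (by decide) (by decide) (by decide)
  have hcomm : ((a * b : GL (Fin 2) F) : Matrix (Fin 2) (Fin 2) F) * c =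
      c * (a * b : GL (Fin 2) F) := by
    rw [Units.val_mul, mul_assoc, hbc, mul_neg, ← mul_assoc, hac, neg_mul, neg_neg, mul_assoc]
  rw [← hcomm] at habc
  have hzero : ((a * b * c : GL (Fin 2) F) : Matrix (Fin 2) (Fin 2) F) = 0 := by
    have h2 : (2 : F) • ((a * b * c : GL (Fin 2) F) : Matrix (Fin 2) (Fin 2) F) = 0 := by
      rw [two_smul, Units.val_mul]
      exact eq_neg_iff_add_eq_zero.mp habc
    exact (smul_eq_zero.mp h2).resolve_left two_ne
  exact (a * b * c).ne_zero hzero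
end

section
/- Let q be an odd prime power and let K be a Klein 4-subgroup of PSL₂(q), viewed as a subgroup of PGL₂(q) via the natural embedding of PSL₂(q) in PGL₂(q). Then the centralizer of K in PGL₂(q) equals K itself: C_{PGL₂(q)}(K) = K. -/
/-- The copy of `PSL₂(F)` inside `PGL₂(F)`: the image of `SL₂(F)` in `PGL₂(F)` under the map
induced by the inclusion `SL₂(F) ≤ GL₂(F)`. -/
def PSLinPGL2 (F : Type*) [Field F] : Subgroup (PGL2 F) :=
  (Matrix.SpecialLinearGroup.toGL (n := Fin 2) (R := F)).range.map
    (QuotientGroup.mk' (Subgroup.center (GL (Fin 2) F)))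

section

variable {F : Type*} [Field F]

lemma center_iff_scalar (A : GL (Fin 2) F) :
    A ∈ Subgroup.center (GL (Fin 2) F) ↔
      A.1 0 1 = 0 ∧ A.1 1 0 = 0 ∧ A.1 0 0 = A.1 1 1 := by
  rw [Matrix.GeneralLinearGroup.mem_center_iff_val_mem_range_scalar]
  constructor
  · rintro ⟨r, hr⟩
    simp [← hr]
  · rintro ⟨h1, h2, h3⟩
    refine ⟨A.1 0 0, ?_⟩
    ext i j
    fin_cases i <;> fin_cases j <;> simp [h1, h2, h3]

lemma det_entries_ne_zero (A : GL (Fin 2) F) :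
    A.1 0 0 * A.1 1 1 - A.1 0 1 * A.1 1 0 ≠ 0 := by
  have h : A.1.det ≠ 0 := ((Matrix.isUnit_iff_isUnit_det _).mp A.isUnit).ne_zero
  rwa [Matrix.det_fin_two] at h

/-- By Cayley–Hamilton, a scalar square of a non-scalar matrix forces the trace to vanish. -/
lemma trace_eq_zero_of_sq_central (A : GL (Fin 2) F)
    (h1 : A ∉ Subgroup.center (GL (Fin 2) F)) (h2 : A * A ∈ Subgroup.center (GL (Fin 2) F)) :
    A.1 0 0 + A.1 1 1 = 0 := by
  rw [center_iff_scalar] at h1 h2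
  simp only [Units.val_mul, Matrix.mul_apply, Fin.sum_univ_two] at h2
  obtain ⟨h3, h4, h5⟩ := h2
  by_contra ht
  refine h1 ⟨?_, ?_, ?_⟩
  · exact (mul_eq_zero.mp (by linear_combination h3 :
      (A.1 0 0 + A.1 1 1) * A.1 0 1 = 0)).resolve_left ht
  · exact (mul_eq_zero.mp (by linear_combination h4 :
      (A.1 0 0 + A.1 1 1) * A.1 1 0 = 0)).resolve_left ht
  · exact sub_eq_zero.mp ((mul_eq_zero.mp (by linear_combination h5 :
      (A.1 0 0 + A.1 1 1) * (A.1 0 0 - A.1 1 1) = 0)).resolve_left ht)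

lemma mul_eq_neg_mul_of_traces (A B : Matrix (Fin 2) (Fin 2) F)
    (hA : A 0 0 + A 1 1 = 0) (hB : B 0 0 + B 1 1 = 0)
    (hAB : (A * B) 0 0 + (A * B) 1 1 = 0) : A * B = -(B * A) := by
  have ha : A 1 1 = -A 0 0 := by linear_combination hA
  have hb : B 1 1 = -B 0 0 := by linear_combination hB
  simp only [Matrix.mul_apply, Fin.sum_univ_two] at hAB
  ext i j
  fin_cases i <;> fin_cases j <;>
    simp [Matrix.mul_apply, Fin.sum_univ_two, ha, hb] at hAB ⊢ <;>
    first | linear_combination hAB | ring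

/-- Commuting in `PGL₂` lifts to commuting up to sign: the scalar relating `G * A` to `A * G`
squares to one, as both products have the same determinant. -/
lemma commute_or_anticommute (G A : GL (Fin 2) F)
    (h : (G : PGL2 F) * (A : PGL2 F) = (A : PGL2 F) * (G : PGL2 F)) :
    G.1 * A.1 = A.1 * G.1 ∨ G.1 * A.1 = -(A.1 * G.1) := by
  rw [← QuotientGroup.mk_mul, ← QuotientGroup.mk_mul, eq_comm, QuotientGroup.eq,
    Matrix.GeneralLinearGroup.mem_center_iff_val_mem_range_scalar] at h
  obtain ⟨c, hc⟩ := h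
  have h1 : G.1 * A.1 = (A.1 * G.1) * Matrix.scalar (Fin 2) c := by
    rw [hc, ← Units.val_mul, ← Units.val_mul, ← Units.val_mul, mul_inv_cancel_left]
  have hA : A.1.det ≠ 0 := ((Matrix.isUnit_iff_isUnit_det _).mp A.isUnit).ne_zero
  have hG : G.1.det ≠ 0 := ((Matrix.isUnit_iff_isUnit_det _).mp G.isUnit).ne_zero
  have h2 := congrArg Matrix.det h1
  have h3 : (Matrix.scalar (Fin 2) c).det = c * c := by simp [pow_two]
  rw [Matrix.det_mul, Matrix.det_mul, Matrix.det_mul, h3] at h2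
  have h4 : c * c = 1 := by
    apply mul_left_cancel₀ (mul_ne_zero hA hG)
    linear_combination -h2
  rcases mul_self_eq_one_iff.mp h4 with rfl | rfl
  · left; simpa using h1
  · right; rw [h1, map_neg, map_one, mul_neg, mul_one]

/-- The traceless part of `G`, with entries `(z / 2, x, y, -z / 2)`, is proportional to both `A`
and `B`, which are orthogonal for the trace form and non-isotropic; hence it vanishes. -/
lemma central_of_commute (h2 : (2 : F) ≠ 0) (A B G : GL (Fin 2) F)
    (hA : A.1 0 0 + A.1 1 1 = 0) (hB : B.1 0 0 + B.1 1 1 = 0)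
    (hAB : A.1 * B.1 = -(B.1 * A.1)) (hGA : G.1 * A.1 = A.1 * G.1)
    (hGB : G.1 * B.1 = B.1 * G.1) : G ∈ Subgroup.center (GL (Fin 2) F) := by
  rw [center_iff_scalar]
  have dA := det_entries_ne_zero A
  have dB := det_entries_ne_zero B
  have hAB0 := congrFun (congrFun hAB 0) 0
  have a0 := congrFun (congrFun hGA 0) 0
  have a1 := congrFun (congrFun hGA 0) 1
  have a2 := congrFun (congrFun hGA 1) 0
  have b0 := congrFun (congrFun hGB 0) 0
  have b1 := congrFun (congrFun hGB 0) 1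
  have b2 := congrFun (congrFun hGB 1) 0
  simp only [Matrix.mul_apply, Fin.sum_univ_two, Matrix.neg_apply] at hAB0 a0 a1 a2 b0 b1 b2
  rw [show A.1 1 1 = -A.1 0 0 by linear_combination hA] at *
  rw [show B.1 1 1 = -B.1 0 0 by linear_combination hB] at *
  generalize A.1 0 0 = a, A.1 0 1 = b, A.1 1 0 = c at *
  generalize B.1 0 0 = p, B.1 0 1 = q, B.1 1 0 = r at *
  generalize G.1 0 0 = u, G.1 0 1 = x, G.1 1 0 = y, G.1 1 1 = v at *
  obtain ⟨z, rfl⟩ : ∃ z, u = v + z := ⟨u - v, by ring⟩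
  replace a0 : x * c = b * y := by linear_combination a0
  replace a1 : z * b = 2 * a * x := by linear_combination a1
  replace a2 : z * c = 2 * a * y := by linear_combination -a2
  replace b0 : x * r = q * y := by linear_combination b0
  replace b1 : z * q = 2 * p * x := by linear_combination b1
  replace b2 : z * r = 2 * p * y := by linear_combination -b2
  replace dA : 2 * (a * a + b * c) ≠ 0 :=
    mul_ne_zero h2 fun h => dA (by linear_combination -h)
  replace dB : 2 * (p * p + q * r) ≠ 0 :=
    mul_ne_zero h2 fun h => dB (by linear_combination -h)
  have e1 : 2 * (p * p + q * r) * z = 2 * (z * p + x * r + y * q) * p := by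
    linear_combination r * b1 + q * b2
  have e2 : 2 * (p * p + q * r) * x = (z * p + x * r + y * q) * q := by
    linear_combination -p * b1 + q * b0
  have e3 : 2 * (p * p + q * r) * y = (z * p + x * r + y * q) * r := by
    linear_combination -p * b2 - r * b0
  have f1 : 2 * (a * a + b * c) * z = 2 * (z * a + x * c + y * b) * a := by
    linear_combination c * a1 + b * a2
  have f2 : 2 * (a * a + b * c) * x = (z * a + x * c + y * b) * b := by
    linear_combination -a * a1 + b * a0
  have f3 : 2 * (a * a + b * c) * y = (z * a + x * c + y * b) * c := by
    linear_combination -a * a2 - c * a0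
  have hT : z * a + x * c + y * b = 0 := by
    refine (mul_eq_zero.mp ?_).resolve_left dB
    linear_combination a * e1 + c * e2 + b * e3 + (z * p + x * r + y * q) * hAB0
  rw [hT] at f1 f2 f3
  refine ⟨?_, ?_, ?_⟩
  · exact (mul_eq_zero.mp (f2.trans (by ring))).resolve_left dA
  · exact (mul_eq_zero.mp (f3.trans (by ring))).resolve_left dA
  · rw [(mul_eq_zero.mp (f1.trans (by ring))).resolve_left dA, add_zero]

lemma trace_eq_zero_of_mem {K : Subgroup (PGL2 F)} (hK : IsKleinFour K) (A : GL (Fin 2) F)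
    (hA : (A : PGL2 F) ∈ K) (hA1 : (A : PGL2 F) ≠ 1) : A.1 0 0 + A.1 1 1 = 0 := by
  refine trace_eq_zero_of_sq_central A (fun h => hA1 ((QuotientGroup.eq_one_iff A).mpr h)) ?_
  rw [← QuotientGroup.eq_one_iff, QuotientGroup.mk_mul]
  exact congrArg Subtype.val (IsKleinFour.mul_self (⟨_, hA⟩ : K))

end

/-- For `q` an odd prime power, the centralizer in `PGL₂(q)` of any Klein 4-subgroup `K` of
`PSL₂(q)` (viewed inside `PGL₂(q)`) is `K` itself. -/
theorem centralizer_klein_four_eq_self (q : ℕ) (hq : Odd q)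
    (F : Type*) [Field F] [Fintype F] (hF : Fintype.card F = q)
    (K : Subgroup (PGL2 F)) (hKle : K ≤ PSLinPGL2 F) (hK : IsKleinFour K) :
    Subgroup.centralizer (K : Set (PGL2 F)) = K := by
  have h2 : (2 : F) ≠ 0 := by
    apply Ring.two_ne_zero
    rw [Ne, FiniteField.even_card_iff_char_two, hF]
    exact Nat.mod_two_ne_zero.mpr (Nat.odd_iff.mp hq)
  apply le_antisymm
  · intro g hg
    rw [Subgroup.mem_centralizer_iff] at hg
    obtain ⟨a, b, ha, hb, hab⟩ : ∃ a b : K, a ≠ 1 ∧ b ≠ 1 ∧ a ≠ b := by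
      have hc : Nat.card K = 4 := hK.card_four
      obtain ⟨a, ha⟩ : ∃ a : K, a ≠ 1 := by
        by_contra! h
        have : Subsingleton K := ⟨fun x y => (h x).trans (h y).symm⟩
        have := Nat.card_of_subsingleton (1 : K)
        omega
      obtain ⟨b, hb⟩ : ∃ b : K, b ∉ ({1, a} : Set K) := by
        by_contra! h
        have h3 : ({1, a} : Set K) = Set.univ := Set.eq_univ_of_forall h
        have h4 := Set.ncard_insert_le (1 : K) {a}
        rw [h3, Set.ncard_univ, Set.ncard_singleton] at h4
        omega
      simp only [Set.mem_insert_iff, Set.mem_singleton_iff, not_or] at hb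
      exact ⟨a, b, ha, hb.1, Ne.symm hb.2⟩
    have hab1 : a * b ≠ 1 := fun h => hab (by
      rw [mul_eq_one_iff_eq_inv.mp h, IsKleinFour.inv_eq_self])
    obtain ⟨a, haK⟩ := a
    obtain ⟨b, hbK⟩ := b
    have haK' := hg a haK
    have hbK' := hg b hbK
    obtain ⟨A, rfl⟩ := QuotientGroup.mk_surjective a
    obtain ⟨B, rfl⟩ := QuotientGroup.mk_surjective b
    obtain ⟨G, rfl⟩ := QuotientGroup.mk_surjective g
    have tA := trace_eq_zero_of_mem hK A haK (fun h => ha (Subtype.ext h))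
    have tB := trace_eq_zero_of_mem hK B hbK (fun h => hb (Subtype.ext h))
    have tAB := trace_eq_zero_of_mem hK (A * B) (K.mul_mem haK hbK)
      (fun h => hab1 (Subtype.ext h))
    have hAB := mul_eq_neg_mul_of_traces A.1 B.1 tA tB tAB
    have hBA : B.1 * A.1 = -(A.1 * B.1) := by rw [hAB, neg_neg]
    -- It suffices that some multiple of `G` by a lift of an element of `K` is central.
    have key : ∀ X : GL (Fin 2) F, (X : PGL2 F) ∈ K → G.1 * X.1 * A.1 = A.1 * (G.1 * X.1) →
        G.1 * X.1 * B.1 = B.1 * (G.1 * X.1) → (G : PGL2 F) ∈ K := by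
      intro X hX h3 h4
      have h5 := central_of_commute h2 A B (G * X) tA tB hAB h3 h4
      rw [← QuotientGroup.eq_one_iff, QuotientGroup.mk_mul] at h5
      rw [mul_eq_one_iff_eq_inv.mp h5]
      exact K.inv_mem hX
    rcases commute_or_anticommute G A haK'.symm with h3 | h3 <;>
      rcases commute_or_anticommute G B hbK'.symm with h4 | h4
    · refine key 1 K.one_mem ?_ ?_ <;> simpa
    · refine key A haK ?_ ?_
      · rw [h3, mul_assoc, h3]
      · rw [mul_assoc, hAB, mul_neg, ← mul_assoc, h4, neg_mul, neg_neg, mul_assoc]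
    · refine key B hbK ?_ ?_
      · rw [mul_assoc, hBA, mul_neg, ← mul_assoc, h3, neg_mul, neg_neg, mul_assoc]
      · rw [h4, mul_assoc, h4]
    · refine key (A * B) (K.mul_mem haK hbK) ?_ ?_
      · rw [Units.val_mul]
        calc G.1 * (A.1 * B.1) * A.1 = (G.1 * A.1) * (B.1 * A.1) := by noncomm_ring
          _ = A.1 * (G.1 * (A.1 * B.1)) := by rw [h3, hBA]; noncomm_ring
      · rw [Units.val_mul]
        calc G.1 * (A.1 * B.1) * B.1 = G.1 * -(B.1 * A.1) * B.1 := by rw [hAB]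
          _ = -(G.1 * B.1) * (A.1 * B.1) := by noncomm_ring
          _ = B.1 * (G.1 * (A.1 * B.1)) := by rw [h4]; noncomm_ring
  · intro x hx
    rw [Subgroup.mem_centralizer_iff]
    intro y hy
    have := (IsKleinFour.isMulCommutative (G := K)).is_comm.comm ⟨y, hy⟩ ⟨x, hx⟩
    exact congrArg Subtype.val this
end

section
/- Let q be an odd prime power. Then any two Klein 4-subgroups of PSL₂(q) are conjugate by an element of PGL₂(q); that is, there is exactly one PGL₂(q)-conjugacy class of Klein 4-subgroups of PSL₂(q). -/
namespace KleinPGL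

open Matrix

variable {F : Type*} [Field F]

/-- The first generator `[[0, 1], [-1, 0]]` of the model quaternion pair. -/
def stdA : Matrix (Fin 2) (Fin 2) F := !![0, 1; -1, 0]

/-- The second generator `[[x, y], [y, -x]]` of the model quaternion pair; its square is `-1`
when `x² + y² = -1`. -/
def stdB (x y : F) : Matrix (Fin 2) (Fin 2) F := !![x, y; y, -x]

lemma sq_eq_neg_one_of_sq_eq_scalar (S : Matrix (Fin 2) (Fin 2) F) (hdet : S.det = 1)
    (hS : ∀ c, S ≠ scalar (Fin 2) c) {c : F} (hc : S * S = scalar (Fin 2) c) : S * S = -1 := by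
  have h00 := congrFun₂ hc 0 0
  have h01 := congrFun₂ hc 0 1
  have h10 := congrFun₂ hc 1 0
  have h11 := congrFun₂ hc 1 1
  simp [Matrix.mul_apply, Fin.sum_univ_two] at h00 h01 h10 h11
  rw [det_fin_two] at hdet
  have htr : S 0 0 + S 1 1 = 0 := by
    by_contra h
    have e01 : S 0 1 = 0 := by
      have : S 0 1 * (S 0 0 + S 1 1) = 0 := by linear_combination h01
      simpa [h] using this
    have e10 : S 1 0 = 0 := by
      have : S 1 0 * (S 0 0 + S 1 1) = 0 := by linear_combination h10
      simpa [h] using this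
    have e11 : S 1 1 = S 0 0 := by
      have : (S 1 1 - S 0 0) * (S 0 0 + S 1 1) = 0 := by linear_combination h11 - h00
      simpa [h, sub_eq_zero] using this
    apply hS (S 0 0)
    ext i j
    fin_cases i <;> fin_cases j <;> simp [e01, e10, e11]
  ext i j
  fin_cases i <;> fin_cases j <;> simp [Matrix.mul_apply, Fin.sum_univ_two]
  · linear_combination S 0 0 * htr - hdet
  · linear_combination S 0 1 * htr
  · linear_combination S 1 0 * htr
  · linear_combination S 1 1 * htr - hdet

/-- Every quaternion pair `A² = B² = -1`, `AB = -BA` of `2 × 2` matrices is simultaneously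
conjugate to the model pair. -/
lemma exists_conj_standard (h2 : (2 : F) ≠ 0) {x y : F} (hxy : x ^ 2 + y ^ 2 = -1)
    (A B : Matrix (Fin 2) (Fin 2) F) (hA : A * A = -1) (hB : B * B = -1)
    (hAB : A * B = -(B * A)) :
    ∃ P : GL (Fin 2) F, A * P.val = P.val * stdA ∧ B * P.val = P.val * stdB x y := by
  have hmul : (B + y • A - x • 1) * (B + y • A + x • 1) = 0 := by
    have e : (B + y • A - x • 1) * (B + y • A + x • 1)
        = B * B + y • (A * B + B * A) + (y ^ 2) • (A * A) - (x ^ 2) • 1 := by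
      simp only [add_mul, mul_add, sub_mul, smul_mul_assoc, mul_smul_comm, smul_add,
        one_mul, mul_one, pow_two]
      module
    rw [e, hA, hB, hAB, neg_add_cancel]
    have : (-1 : Matrix (Fin 2) (Fin 2) F) + y • 0 + y ^ 2 • (-1 : Matrix (Fin 2) (Fin 2) F)
      - x ^ 2 • 1 = (-1 - (x ^ 2 + y ^ 2)) • 1 := by module
    rw [this, hxy]; simp
  -- `v` spans an eigenline of `B + yA` for the eigenvalue `x`.
  obtain ⟨v, hv0, hv⟩ : ∃ v : Fin 2 → F, v ≠ 0 ∧ B *ᵥ v = x • v - y • A *ᵥ v := by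
    have key : ∃ v : Fin 2 → F, v ≠ 0 ∧ (B + y • A - x • 1) *ᵥ v = 0 := by
      rw [exists_mulVec_eq_zero_iff]
      by_contra hd
      have hu : IsUnit (B + y • A - x • 1) := by
        rw [isUnit_iff_isUnit_det]; exact isUnit_iff_ne_zero.mpr hd
      have h0 : B + y • A + x • 1 = 0 := by
        simpa using hu.mul_right_eq_zero.mp hmul
      -- Then `B` is a combination of `A` and `1`, so commutes with `A`.
      have hBe : B = -(y • A) - x • 1 := by
        rw [add_assoc] at h0
        rw [eq_neg_of_add_eq_zero_left h0]; abel
      have hcomm : A * B = B * A := by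
        rw [hBe]; simp [mul_sub, sub_mul]
      have h3 : (2 : F) • (A * B) = 0 := by
        rw [two_smul]; nth_rw 1 [hAB]; rw [hcomm]; simp
      have h4 : A * B = 0 := by simpa [h2] using h3
      have h5 : A * (A * B) * B = 1 := by
        rw [← mul_assoc, hA, mul_assoc, hB]; simp
      rw [h4] at h5
      simp at h5
    obtain ⟨v, h, h'⟩ := key
    refine ⟨v, h, ?_⟩
    simp only [sub_mulVec, add_mulVec, smul_mulVec, one_mulVec] at h'
    rw [eq_sub_iff_add_eq]
    exact sub_eq_zero.mp h'
  set w := A *ᵥ v with hw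
  have hAw : A *ᵥ w = -v := by rw [hw, mulVec_mulVec, hA]; simp [neg_mulVec]
  have hBw : B *ᵥ w = -(x • w) - y • v := by
    have : B * A = -(A * B) := by rw [hAB, neg_neg]
    rw [hw, mulVec_mulVec, this, neg_mulVec, ← mulVec_mulVec, hv, mulVec_sub, mulVec_smul,
      mulVec_smul, ← hw, hAw]
    module
  set P : Matrix (Fin 2) (Fin 2) F := !![v 0, -w 0; v 1, -w 1] with hP
  have hdet : P.det ≠ 0 := by
    intro hd
    have hd' : v 1 * w 0 = v 0 * w 1 := by
      rw [hP, det_fin_two_of] at hd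
      linear_combination hd
    -- A vanishing determinant makes `v` a common eigenvector of `A` and `B`.
    obtain ⟨t, ht⟩ : ∃ t : F, w = t • v := by
      by_cases h0 : v 0 = 0
      · have h1 : v 1 ≠ 0 := by
          intro h1; apply hv0; ext i; fin_cases i <;> simp [h0, h1]
        refine ⟨w 1 / v 1, ?_⟩
        ext i; fin_cases i
        · simp only [h0, zero_mul, mul_eq_zero, h1, false_or] at hd'
          simp [h0, hd']
        · simp [h1]
      · refine ⟨w 0 / v 0, ?_⟩
        ext i; fin_cases i
        · simp [h0]
        · simp; field_simp; linear_combination -hd'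
    have e1 : (t * t + 1) • v = 0 := by
      have h : A *ᵥ w = t • w := by rw [ht, mulVec_smul, ← hw, ht]
      rw [hAw, ht] at h
      have h' : (t * t + 1) • v = t • t • v - -v := by module
      rw [h', ← h, sub_self]
    have e2 : (2 * t * x - y * t * t + y) • v = 0 := by
      have h : t • B *ᵥ v = B *ᵥ w := by rw [ht, mulVec_smul]
      rw [hBw, hv, ht] at h
      have h' : (2 * t * x - y * t * t + y) • v
          = t • (x • v - y • t • v) - (-(x • t • v) - y • v) := by
        module
      rw [h', h, sub_self]
    have f1 : t * t + 1 = 0 := (smul_eq_zero.mp e1).resolve_right hv0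
    have f2 : 2 * t * (x - y * t) = 0 := by
      linear_combination (smul_eq_zero.mp e2).resolve_right hv0 - y * f1
    have ht0 : t ≠ 0 := by rintro rfl; simp at f1
    have f3 : x - y * t = 0 := by simpa [h2, ht0] using f2
    have : (1 : F) = 0 := by linear_combination -(x + y * t) * f3 + hxy - y ^ 2 * f1
    exact one_ne_zero this
  have a0 := congrFun hw 0
  have a1 := congrFun hw 1
  have b0 := congrFun hv 0
  have b1 := congrFun hv 1
  have c0 := congrFun hAw 0
  have c1 := congrFun hAw 1
  have d0 := congrFun hBw 0
  have d1 := congrFun hBw 1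
  simp only [mulVec, dotProduct, Fin.sum_univ_two, Pi.neg_apply, Pi.sub_apply, Pi.smul_apply,
    smul_eq_mul] at a0 a1 b0 b1 c0 c1 d0 d1
  refine ⟨GeneralLinearGroup.mkOfDetNeZero P hdet, ?_, ?_⟩
  · change A * P = P * stdA
    ext i j
    fin_cases i <;> fin_cases j <;>
      simp [hP, stdA, Matrix.mul_apply, Fin.sum_univ_two] <;> grind
  · change B * P = P * stdB x y
    ext i j
    fin_cases i <;> fin_cases j <;>
      simp [hP, stdB, Matrix.mul_apply, Fin.sum_univ_two] <;> grind

/-- An involution of `PSL₂(F)` lifts to a matrix with square `-1`. -/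
lemma lift_sq_eq_neg_one (S : SpecialLinearGroup (Fin 2) F)
    (h1 : (QuotientGroup.mk (SpecialLinearGroup.toGL S) : PGL2 F) ≠ 1)
    (h2 : (QuotientGroup.mk (SpecialLinearGroup.toGL S) : PGL2 F) *
      QuotientGroup.mk (SpecialLinearGroup.toGL S) = 1) :
    S.val * S.val = -1 := by
  rw [Ne, QuotientGroup.eq_one_iff, GeneralLinearGroup.mem_center_iff_val_mem_range_scalar] at h1
  rw [← QuotientGroup.mk_mul, QuotientGroup.eq_one_iff,
    GeneralLinearGroup.mem_center_iff_val_mem_range_scalar] at h2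
  obtain ⟨c, hc⟩ := h2
  exact sq_eq_neg_one_of_sq_eq_scalar S.val S.det_coe (fun d hd => h1 ⟨d, hd.symm⟩)
    (c := c) hc.symm

lemma stdA_det : (stdA : Matrix (Fin 2) (Fin 2) F).det ≠ 0 := by simp [stdA]

lemma stdB_det {x y : F} (hxy : x ^ 2 + y ^ 2 = -1) : (stdB x y).det ≠ 0 := by
  have : (stdB x y).det = 1 := by
    rw [stdB, det_fin_two_of]; linear_combination -hxy
  simp [this]

/-- The subgroup of `PGL₂(F)` generated by the classes of the model quaternion pair. -/
def stdK {x y : F} (hxy : x ^ 2 + y ^ 2 = -1) : Subgroup (PGL2 F) :=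
  Subgroup.closure {QuotientGroup.mk (GeneralLinearGroup.mkOfDetNeZero stdA stdA_det),
    QuotientGroup.mk (GeneralLinearGroup.mkOfDetNeZero (stdB x y) (stdB_det hxy))}

lemma eq_closure_of_isKleinFour {G : Type*} [Group G] (K : Subgroup G) [IsKleinFour K] :
    ∃ a ∈ K, ∃ b ∈ K, a ≠ 1 ∧ b ≠ 1 ∧ a * b ≠ 1 ∧ a * a = 1 ∧ b * b = 1 ∧ (a * b) * (a * b) = 1 ∧
      K = Subgroup.closure {a, b} := by
  classical
  have : Finite K := Nat.finite_of_card_ne_zero (by rw [IsKleinFour.card_four]; norm_num)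
  let _ : Fintype K := Fintype.ofFinite K
  have hc : Fintype.card K = 4 := IsKleinFour.card_four'
  obtain ⟨a, ha⟩ : ∃ a : K, a ≠ 1 := by
    have : Nontrivial K := Fintype.one_lt_card_iff_nontrivial.mp (by omega)
    exact exists_ne 1
  obtain ⟨b, hb⟩ : ∃ b : K, b ∉ ({1, a} : Finset K) := by
    by_contra! h
    have : Fintype.card K ≤ 2 :=
      (Finset.card_le_card (fun z _ => h z)).trans Finset.card_le_two
    omega
  simp only [Finset.mem_insert, Finset.mem_singleton, not_or] at hb
  have hsq : ∀ z : K, (z : G) * z = 1 := fun z => by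
    exact_mod_cast congrArg Subtype.val (IsKleinFour.mul_self z)
  refine ⟨a, a.2, b, b.2, by simpa using ha, by simpa using hb.1, ?_, hsq a, hsq b,
    by simpa using hsq (a * b), ?_⟩
  · intro h
    apply hb.2
    exact Subtype.ext (mul_left_cancel (a := (a : G)) (h.trans (hsq a).symm))
  · apply le_antisymm
    · intro z hz
      have hm := Finset.mem_univ (⟨z, hz⟩ : K)
      rw [← IsKleinFour.eq_finset_univ ha hb.1 (Ne.symm hb.2)] at hm
      have h1 : (a : G) ∈ Subgroup.closure {(a : G), (b : G)} :=
        Subgroup.subset_closure (by simp)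
      have h2 : (b : G) ∈ Subgroup.closure {(a : G), (b : G)} :=
        Subgroup.subset_closure (by simp)
      simp only [Finset.mem_insert, Finset.mem_singleton, Subtype.ext_iff, Subgroup.coe_mul,
        Subgroup.coe_one] at hm
      rcases hm with h | h | h | h <;> rw [h]
      exacts [mul_mem h1 h2, h1, h2, one_mem _]
    · rw [Subgroup.closure_le]
      rintro z (rfl | rfl)
      exacts [a.2, b.2]

lemma exists_conj_stdK (h2 : (2 : F) ≠ 0) {x y : F} (hxy : x ^ 2 + y ^ 2 = -1)
    (K : Subgroup (PGL2 F)) (hK : K ≤ PSLinPGL2 F) [IsKleinFour K] :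
    ∃ g : PGL2 F, K = (stdK hxy).map (MulAut.conj g).toMonoidHom := by
  obtain ⟨a, ha, b, hb, ha1, hb1, hab1, ha2, hb2, hab2, hcl⟩ := eq_closure_of_isKleinFour K
  obtain ⟨_, ⟨A, rfl⟩, rfl⟩ := hK ha
  obtain ⟨_, ⟨B, rfl⟩, rfl⟩ := hK hb
  have hA := lift_sq_eq_neg_one A ha1 ha2
  have hB := lift_sq_eq_neg_one B hb1 hb2
  have hAB : A.val * B.val = -(B.val * A.val) := by
    have h : (A * B).val * (A * B).val = -1 := by
      apply lift_sq_eq_neg_one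
      · simpa using hab1
      · simpa using hab2
    change A.val * B.val * (A.val * B.val) = -1 at h
    -- Multiply `ABAB = -1` by `A` on the left and by `B` on the right.
    have e : A.val * (A.val * B.val * (A.val * B.val)) * B.val
        = (A.val * A.val) * (B.val * A.val) * (B.val * B.val) := by simp only [mul_assoc]
    rw [h, hA, hB] at e
    simpa [neg_eq_iff_eq_neg] using e
  obtain ⟨P, hPA, hPB⟩ := exists_conj_standard h2 hxy A.val B.val hA hB hAB
  refine ⟨QuotientGroup.mk P, ?_⟩
  rw [hcl, stdK, MonoidHom.map_closure, Set.image_pair]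
  have eA : SpecialLinearGroup.toGL A
      = P * GeneralLinearGroup.mkOfDetNeZero stdA stdA_det * P⁻¹ := by
    rw [eq_mul_inv_iff_mul_eq]; exact Units.ext hPA
  have eB : SpecialLinearGroup.toGL B
      = P * GeneralLinearGroup.mkOfDetNeZero (stdB x y) (stdB_det hxy) * P⁻¹ := by
    rw [eq_mul_inv_iff_mul_eq]; exact Units.ext hPB
  rw [eA, eB]
  rfl

end KleinPGL

/-- For `q` an odd prime power, any two Klein 4-subgroups of `PSL₂(q)` (viewed inside
`PGL₂(q)`) are conjugate by an element of `PGL₂(q)`. -/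
theorem klein_four_subgroups_conjugate_in_pgl2 (q : ℕ) (hq : Odd q)
    (F : Type*) [Field F] [Fintype F] (hF : Fintype.card F = q)
    (K₁ K₂ : Subgroup (PGL2 F)) (h₁ : K₁ ≤ PSLinPGL2 F) (h₂ : K₂ ≤ PSLinPGL2 F)
    (hK₁ : IsKleinFour K₁) (hK₂ : IsKleinFour K₂) :
    ∃ g : PGL2 F, K₂ = K₁.map (MulAut.conj g).toMonoidHom := by
  have h2 : (2 : F) ≠ 0 := by
    apply Ring.two_ne_zero
    intro h
    have := FiniteField.even_card_of_char_two h
    rw [hF] at this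
    exact absurd this (by rw [Nat.odd_iff.mp hq]; norm_num)
  obtain ⟨x, y, hxy⟩ : ∃ x y : F, x ^ 2 + y ^ 2 = -1 := by
    obtain ⟨p, hp, -, hprime, -⟩ := FiniteField.card' F
    have : NeZero p := ⟨hprime.ne_zero⟩
    obtain ⟨a, b, h⟩ := CharP.sq_add_sq F p (-1)
    exact ⟨a, b, by simpa using h⟩
  obtain ⟨g₁, e₁⟩ := KleinPGL.exists_conj_stdK h2 hxy K₁ h₁
  obtain ⟨g₂, e₂⟩ := KleinPGL.exists_conj_stdK h2 hxy K₂ h₂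
  refine ⟨g₂ * g₁⁻¹, ?_⟩
  rw [e₁, e₂, Subgroup.map_map]
  congr 1
  ext z
  simp [mul_assoc]
end

section
/- Let q be an odd prime power. Then all involutions of PSL₂(q) are conjugate in PSL₂(q), and the number of involutions in PSL₂(q) equals q(q−1)/2 if q ≡ 3 (mod 4) and q(q+1)/2 if q ≡ 1 (mod 4). -/
/-!
The class of `A ∈ SL₂(F)` in `PSL₂(F)` is an involution iff `A ^ 2` is scalar and `A` is not. By
Cayley-Hamilton, `A ^ 2 = tr(A) A - 1`, so in odd characteristic this means that `A` has trace zero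
(`psl2_orderOf_mk_eq_two_iff`).

Conjugacy: if `tr A = 0` then `A ^ 2 = -1`, so any basis `(v, A v)` with `det (v, A v) = 1`
conjugates `A` inside `SL₂(F)` to the fixed matrix `(0, -1; 1, 0)`. Such a `v` exists because
`v ↦ det (v, A v)` is a nondegenerate binary quadratic form, and those represent every nonzero
element of a finite field (`psl2_exists_det_eq_one`).

Counting: each involution has two lifts to `SL₂(F)`, since the center is `{1, -1}`. The traceless
matrices in `SL₂(F)` are the solutions of `a ^ 2 + b c = -1`, of which there are `(q - 1) q` with
`b ≠ 0` and `n q` with `b = 0`, where `n` is the number of square roots of `-1`: `2` if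
`q ≡ 1 (mod 4)` and `0` if `q ≡ 3 (mod 4)`.
-/

theorem psl2_orderOf_mk_eq_two_iff {F : Type*} [Field F] (h2 : (2 : F) ≠ 0)
    (A : Matrix.SpecialLinearGroup (Fin 2) F) :
    orderOf (QuotientGroup.mk A : Matrix.ProjectiveSpecialLinearGroup (Fin 2) F) = 2 ↔
      A 0 0 + A 1 1 = 0 := by
  have hd : A 0 0 * A 1 1 - A 0 1 * A 1 0 = 1 := by rw [← Matrix.det_fin_two]; exact A.2
  rw [orderOf_eq_prime_iff, ← QuotientGroup.mk_pow, Ne, QuotientGroup.eq_one_iff,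
    QuotientGroup.eq_one_iff, Matrix.SpecialLinearGroup.mem_center_iff,
    Matrix.SpecialLinearGroup.mem_center_iff]
  simp only [Fintype.card_fin, pow_two, Matrix.SpecialLinearGroup.coe_mul, ← Matrix.ext_iff,
    Fin.forall_fin_two, Matrix.mul_apply, Fin.sum_univ_two, Matrix.scalar_apply,
    Matrix.diagonal_apply]
  simp only [Fin.isValue, if_true, zero_ne_one, one_ne_zero, if_false]
  constructor
  · rintro ⟨⟨r, hr, ⟨h00, h01⟩, h10, h11⟩, hn⟩
    by_contra ht
    -- If the trace were nonzero, `A ^ 2 = tr(A) A - 1` being scalar would force `A` to be scalar.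
    have e01 : A 0 1 = 0 := mul_left_cancel₀ ht (by linear_combination -h01)
    have e10 : A 1 0 = 0 := mul_left_cancel₀ ht (by linear_combination -h10)
    have e11 : A 0 0 = A 1 1 := by
      rw [← sub_eq_zero]
      exact mul_left_cancel₀ ht (by linear_combination h11 - h00)
    refine hn ⟨A 0 0, ?_, ⟨rfl, e01.symm⟩, e10.symm, e11⟩
    rw [e01, ← e11] at hd
    linear_combination hd
  · intro ht
    refine ⟨⟨-1, by ring, ⟨?_, ?_⟩, ?_, ?_⟩, ?_⟩
    · linear_combination hd - A 0 0 * ht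
    · linear_combination - A 0 1 * ht
    · linear_combination - A 1 0 * ht
    · linear_combination hd - A 1 1 * ht
    · rintro ⟨r, hr, ⟨h00, h01⟩, h10, h11⟩
      rw [← h00, ← h11, ← two_mul] at ht
      have : r = 0 := (mul_eq_zero.mp ht).resolve_left h2
      rw [this] at hr
      simp at hr

/-- For a traceless `A = (a, b; c, -a)` of determinant one, the quadratic form
`v ↦ det (v, A v)` in `v = (x, y)` represents `1`. -/
theorem psl2_exists_det_eq_one {F : Type*} [Field F] [Fintype F] (h2 : (2 : F) ≠ 0)
    (hq : Fintype.card F % 2 = 1) (a b c : F) (h : a * a + b * c = -1) :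
    ∃ x y : F, x * (c * x - a * y) - y * (a * x + b * y) = 1 := by
  by_cases hc : c = 0
  · subst hc
    have ha : a ≠ 0 := by
      rintro rfl
      simp at h
    refine ⟨(-1 - b) / (2 * a), 1, ?_⟩
    field_simp
    ring
  · -- Multiplied by `c`, the form becomes the sum of two squares `(c x - a y) ^ 2 + y ^ 2`.
    obtain ⟨u, v, huv⟩ := FiniteField.exists_root_sum_quadratic
      (f := Polynomial.X ^ 2) (g := Polynomial.X ^ 2 - Polynomial.C c)
      (by simp) (by rw [Polynomial.degree_X_pow_sub_C] <;> simp) hq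
    simp only [Polynomial.eval_pow, Polynomial.eval_X, Polynomial.eval_sub,
      Polynomial.eval_C] at huv
    refine ⟨(u + a * v) / c, v, mul_left_cancel₀ hc ?_⟩
    field_simp
    linear_combination huv - v ^ 2 * h

theorem psl2_isConj_of_trace_eq_zero {F : Type*} [Field F] [Fintype F] (h2 : (2 : F) ≠ 0)
    (hq : Fintype.card F % 2 = 1)
    (A : Matrix.SpecialLinearGroup (Fin 2) F) (hA : A 0 0 + A 1 1 = 0) :
    IsConj (α := Matrix.SpecialLinearGroup (Fin 2) F)
      ⟨!![0, -1; 1, 0], by simp [Matrix.det_fin_two]⟩ A := by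
  have hd : A 0 0 * A 1 1 - A 0 1 * A 1 0 = 1 := by rw [← Matrix.det_fin_two]; exact A.2
  have h11 : A 1 1 = - A 0 0 := by linear_combination hA
  rw [h11] at hd
  obtain ⟨x, y, hxy⟩ := psl2_exists_det_eq_one h2 hq (A 0 0) (A 0 1) (A 1 0)
    (by linear_combination -hd)
  -- The conjugating matrix has columns `v = (x, y)` and `A v`.
  have hP : (!![x, A 0 0 * x + A 0 1 * y; y, A 1 0 * x - A 0 0 * y] :
      Matrix (Fin 2) (Fin 2) F).det = 1 := by
    rw [Matrix.det_fin_two_of]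
    linear_combination hxy
  refine isConj_iff.2 ⟨⟨_, hP⟩, mul_inv_eq_iff_eq_mul.2 (Subtype.ext ?_)⟩
  change !![x, A 0 0 * x + A 0 1 * y; y, A 1 0 * x - A 0 0 * y] * !![0, -1; 1, 0] =
    (A : Matrix (Fin 2) (Fin 2) F) *
      !![x, A 0 0 * x + A 0 1 * y; y, A 1 0 * x - A 0 0 * y]
  apply Matrix.ext
  simp only [Fin.forall_fin_two, Matrix.mul_apply, Fin.sum_univ_two]
  simp [h11]
  refine ⟨?_, ?_, ?_⟩
  · linear_combination x * hd
  · ring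
  · linear_combination y * hd

/-- A traceless matrix `(a, b; c, -a)` of determinant one has `c` determined by `a` and `b` if
`b ≠ 0`; if `b = 0`, then `a ^ 2 = -1` and `c` is free. -/
def psl2TracelessEquiv (F : Type*) [Field F] [DecidableEq F] :
    {A : Matrix.SpecialLinearGroup (Fin 2) F // A 0 0 + A 1 1 = 0} ≃
      (Fˣ × F) ⊕ ({a : F // a ^ 2 = -1} × F) where
  toFun A := if h : A.1 0 1 = 0 then
      Sum.inr (⟨A.1 0 0, by
        have hd : A.1 0 0 * A.1 1 1 - A.1 0 1 * A.1 1 0 = 1 := by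
          rw [← Matrix.det_fin_two]; exact A.1.2
        rw [h] at hd
        linear_combination A.1 0 0 * A.2 - hd⟩, A.1 1 0)
    else Sum.inl (Units.mk0 _ h, A.1 0 0)
  invFun := Sum.elim
    (fun p => ⟨⟨!![p.2, p.1; (-1 - p.2 ^ 2) / p.1, -p.2], by
      rw [Matrix.det_fin_two_of]
      have := p.1.ne_zero
      field_simp
      ring⟩, by simp⟩)
    (fun p => ⟨⟨!![p.1.1, 0; p.2, -p.1.1], by
      rw [Matrix.det_fin_two_of]
      linear_combination -p.1.2⟩, by simp⟩)
  left_inv A := by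
    obtain ⟨A, hA⟩ := A
    have hd : A 0 0 * A 1 1 - A 0 1 * A 1 0 = 1 := by
      rw [← Matrix.det_fin_two]; exact A.2
    have h11 : A 1 1 = - A 0 0 := by linear_combination hA
    apply Subtype.ext
    apply Subtype.ext
    apply Matrix.ext
    by_cases h : A 0 1 = 0
    · simp [Fin.forall_fin_two, h, h11]
    · simp [Fin.forall_fin_two, h, h11]
      rw [h11] at hd
      rw [div_eq_iff h]
      linear_combination hd
  right_inv p := by
    rcases p with ⟨b, a⟩ | ⟨⟨a, ha⟩, c⟩
    · simp
    · simp

theorem psl2_card_center {F : Type*} [Field F] (h2 : (2 : F) ≠ 0) :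
    Nat.card (Subgroup.center (Matrix.SpecialLinearGroup (Fin 2) F)) = 2 := by
  rw [Nat.card_congr (Matrix.SpecialLinearGroup.center_equiv_rootsOfUnity' (0 : Fin 2)).toEquiv,
    Fintype.card_fin]
  refine (IsPrimitiveRoot.neg_one (ringChar F) fun h => h2 ?_).card_rootsOfUnity
  have := ringChar.Nat.cast_ringChar (R := F)
  rwa [h] at this

theorem psl2_two_mul_card_involutions {F : Type*} [Field F] [Fintype F] (h2 : (2 : F) ≠ 0) :
    2 * Nat.card {x : Matrix.ProjectiveSpecialLinearGroup (Fin 2) F // orderOf x = 2} =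
      (Fintype.card F - 1) * Fintype.card F +
        Nat.card {a : F // a ^ 2 = -1} * Fintype.card F := by
  classical
  have e := QuotientGroup.preimageMkEquivSubgroupProdSet
    (Subgroup.center (Matrix.SpecialLinearGroup (Fin 2) F))
    {x : Matrix.ProjectiveSpecialLinearGroup (Fin 2) F | orderOf x = 2}
  have e' : (QuotientGroup.mk ⁻¹'
      {x : Matrix.ProjectiveSpecialLinearGroup (Fin 2) F | orderOf x = 2} :
        Set (Matrix.SpecialLinearGroup (Fin 2) F)) ≃
      {A : Matrix.SpecialLinearGroup (Fin 2) F // A 0 0 + A 1 1 = 0} :=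
    Equiv.subtypeEquivRight (psl2_orderOf_mk_eq_two_iff h2)
  have h := Nat.card_congr (e.symm.trans (e'.trans (psl2TracelessEquiv F)))
  rw [Nat.card_prod, psl2_card_center h2, Nat.card_sum, Nat.card_prod, Nat.card_prod,
    Nat.card_units, Nat.card_eq_fintype_card (α := F)] at h
  exact h

theorem psl2_card_sqrt_neg_one_of_isSquare {F : Type*} [Field F] (h2 : (2 : F) ≠ 0)
    (h : IsSquare (-1 : F)) : Nat.card {a : F // a ^ 2 = -1} = 2 := by
  obtain ⟨i, hi⟩ := h
  have hs : {a : F | a ^ 2 = -1} = {i, -i} := by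
    ext a
    rw [Set.mem_ofPred_eq, hi, ← pow_two, sq_eq_sq_iff_eq_or_eq_neg]
    rfl
  have hne : i ≠ -i := fun h => by
    have : i = 0 := (mul_eq_zero.1 (show 2 * i = 0 by linear_combination h)).resolve_left h2
    simp [this] at hi
  exact (congrArg Set.ncard hs).trans (Set.ncard_pair hne)

/-- Let `q` be an odd prime power. Then all involutions of `PSL₂(q)` are conjugate, and the
number of involutions in `PSL₂(q)` is `q(q-1)/2` if `q ≡ 3 (mod 4)` and `q(q+1)/2` if
`q ≡ 1 (mod 4)`. -/
theorem psl2_involutions_conjugate_and_count (q : ℕ) (hq : Odd q)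
    (F : Type*) [Field F] [Fintype F] (hF : Fintype.card F = q) :
    (∀ x y : Matrix.ProjectiveSpecialLinearGroup (Fin 2) F,
      orderOf x = 2 → orderOf y = 2 → IsConj x y) ∧
    (q % 4 = 3 →
      Nat.card {x : Matrix.ProjectiveSpecialLinearGroup (Fin 2) F // orderOf x = 2}
        = q * (q - 1) / 2) ∧
    (q % 4 = 1 →
      Nat.card {x : Matrix.ProjectiveSpecialLinearGroup (Fin 2) F // orderOf x = 2}
        = q * (q + 1) / 2) := by
  have hq2 : Fintype.card F % 2 = 1 := by rw [hF]; exact Nat.odd_iff.1 hq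
  have h2 : (2 : F) ≠ 0 := Ring.two_ne_zero fun h => by
    have := FiniteField.even_card_iff_char_two.1 h
    omega
  have hcount := psl2_two_mul_card_involutions h2
  have hsq := FiniteField.isSquare_neg_one_iff (F := F)
  rw [hF] at hcount hsq
  refine ⟨fun x y => ?_, fun h3 => ?_, fun h1 => ?_⟩
  · induction x using QuotientGroup.induction_on with | H A
    induction y using QuotientGroup.induction_on with | H B
    intro hA hB
    have cA := psl2_isConj_of_trace_eq_zero h2 hq2 A ((psl2_orderOf_mk_eq_two_iff h2 A).1 hA)
    have cB := psl2_isConj_of_trace_eq_zero h2 hq2 B ((psl2_orderOf_mk_eq_two_iff h2 B).1 hB)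
    exact (QuotientGroup.mk' _).map_isConj (cA.symm.trans cB)
  · have : IsEmpty {a : F // a ^ 2 = -1} :=
      ⟨fun a => hsq.1 ⟨a.1, by rw [← pow_two, a.2]⟩ h3⟩
    rw [Nat.card_of_isEmpty (α := {a : F // a ^ 2 = -1}), zero_mul, add_zero,
      mul_comm (q - 1)] at hcount
    omega
  · rw [psl2_card_sqrt_neg_one_of_isSquare h2 (hsq.2 (by omega)), ← add_mul,
      show q - 1 + 2 = q + 1 by omega, mul_comm (q + 1)] at hcount
    omega
end
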